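/- Schneider's theorem: let φ ∈ Val(V) be odd (φ(−K) = −φ(K) for all K) and simple (φ(K) = 0 for every K ∈ K(V) whose affine hull has dimension strictly less than n = dim V). Then φ is homogeneous of degree n − 1, i.e., φ(λK) = λ^{n−1} φ(K) for all K ∈ K(V) and λ ≥ 0. -/

import Mathlib

/-!
The valuation is extended to a set function `Φ` which is additive under cutting by hyperplanes,
translation invariant, continuous, and zero on sets lying in a hyperplane (`SV`). Homogeneity is
proved by induction on the dimension `n` (`homogeneous`). For `t > 0` the defect
`Δ A = Φ (t A) - t ^ (n - 1) Φ A` is again such a function. It vanishes on prisms `D + [0, v]`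
(`PN.of_odd`): on the hyperplane of the base, `D ↦ Φ (D + [0, v])` is odd and simple, hence
homogeneous of degree `n - 2`, and `Φ (D + [0, R v])` is linear in `R` (`SV.seg_linear`). In the
plane, `Φ` itself vanishes on parallelograms, being odd; then it scales linearly on triangles
(`SV.tri_linear`), and planar bodies are generated by triangles through cutting (`planar_zero`), so
`Δ = 0`. For `n ≥ 3` it remains to show that a simple valuation vanishing on prisms is zero
(`prism_null`); this is false for `n = 2`.

Let `Φ` vanish on prisms. Adding a segment to a body does not change `Φ` (`SV.seg_neutral`), and
adding a triangle `T` changes `Φ K` by `Φ (π K + T)`, with `π` the projection along the plane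
of `T` (`SV.slope`). As a function of `π K` this correction is a simple valuation vanishing on
prisms in a space of dimension `n - 2`, so it is zero by induction, unless `n = 4`. In that case
`planar_zero` reduces the question to sums of two triangles in complementary planes, on which `Φ`
vanishes by a shearing argument (`SV.tri_tri`). Thus triangles, and then all planar bodies, are
neutral summands: adding them does not change `Φ` (`SV.planar_neutral`).

Finally, a continuous function for which all planar bodies are neutral summands is constant
(`const_of_planar`). The support functions of neutral bodies form a closed convex cone `NN` in the
continuous functions on the sphere, stable under integration, and neutral summands may be
cancelled. Averaging support functions of planar bodies over the complex unit ball puts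
`⟪q, x⟫ ^ k + R` in this cone for some constant `R` (`pow_mem`); summing the exponential series
gives `exp ⟪q, x⟫ + exp (4 ‖q‖)` (`ex_mem`). Integrating these against `h_K` times a Gaussian gives
the support function of a blurred copy of `K`, up to a constant, and such copies converge to `K`
(`body_mem`). So every body is neutral, and `Φ K = Φ {0} = 0`.
-/

open scoped NNReal Pointwise
open Metric MeasureTheory

/-- The singleton convex body `{x}`. -/
def ConvexBody.singletonBody {V : Type*} [NormedAddCommGroup V] [NormedSpace ℝ V] (x : V) :
    ConvexBody V :=
  ⟨{x}, convex_singleton x, isCompact_singleton, Set.singleton_nonempty x⟩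

/-- `φ` satisfies the valuation property: `φ(A ∪ B) = φ(A) + φ(B) - φ(A ∩ B)` whenever
`A`, `B` and `A ∪ B` are convex bodies. -/
def IsValuation {V : Type*} [NormedAddCommGroup V] [NormedSpace ℝ V]
    (φ : ConvexBody V → ℂ) : Prop :=
  ∀ A B C D : ConvexBody V, (C : Set V) = (A : Set V) ∪ (B : Set V) →
    (D : Set V) = (A : Set V) ∩ (B : Set V) → φ C = φ A + φ B - φ D

/-- `φ` is translation invariant. -/
def IsTranslationInvariant {V : Type*} [NormedAddCommGroup V] [NormedSpace ℝ V]
    (φ : ConvexBody V → ℂ) : Prop :=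
  ∀ (K : ConvexBody V) (x : V), φ (K + ConvexBody.singletonBody x) = φ K

/-- `φ ∈ Val(V)`: a translation invariant valuation, continuous in the Hausdorff metric. -/
def MemVal {V : Type*} [NormedAddCommGroup V] [NormedSpace ℝ V]
    (φ : ConvexBody V → ℂ) : Prop :=
  IsValuation φ ∧ IsTranslationInvariant φ ∧ Continuous φ

/-- `φ` is homogeneous of degree `i`: `φ (λ • K) = λ ^ i * φ K` for all `λ ≥ 0`. -/
def IsHomogeneousVal {V : Type*} [NormedAddCommGroup V] [NormedSpace ℝ V]
    (φ : ConvexBody V → ℂ) (i : ℕ) : Prop :=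
  ∀ (c : ℝ≥0) (K : ConvexBody V), φ (c • K) = ((c : ℝ) : ℂ) ^ i * φ K

/-- The reflection `-K` of a convex body. -/
def ConvexBody.negBody {V : Type*} [NormedAddCommGroup V] [NormedSpace ℝ V]
    (K : ConvexBody V) : ConvexBody V :=
  ⟨-(K : Set V), K.convex.neg, K.isCompact.neg, K.nonempty.neg⟩

set_option linter.unusedSectionVars false

/-! ### Simple valuations as set functions -/

namespace Schneider
open Set

section Basic
variable {V : Type*} [NormedAddCommGroup V] [NormedSpace ℝ V]

/-- Compact convex sets, the empty set being allowed. -/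
structure CC (A : Set V) : Prop where
  compact : IsCompact A
  convex : Convex ℝ A

theorem CC.add {A B : Set V} (hA : CC A) (hB : CC B) : CC (A + B) :=
  ⟨hA.compact.add hB.compact, hA.convex.add hB.convex⟩

theorem CC.body (K : ConvexBody V) : CC (K : Set V) := ⟨K.isCompact, K.convex⟩

theorem CC.singleton (x : V) : CC ({x} : Set V) := ⟨isCompact_singleton, convex_singleton x⟩

theorem CC.empty : CC (∅ : Set V) := ⟨isCompact_empty, convex_empty⟩

theorem CC.image {W : Type*} [NormedAddCommGroup W] [NormedSpace ℝ W] [FiniteDimensional ℝ V]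
    {A : Set V} (hA : CC A) (f : V →ₗ[ℝ] W) : CC (f '' A) :=
  ⟨hA.compact.image f.continuous_of_finiteDimensional, hA.convex.linear_image f⟩

theorem CC.neg {A : Set V} (hA : CC A) : CC (-A) := ⟨hA.compact.neg, hA.convex.neg⟩

theorem CC.smul {A : Set V} (hA : CC A) (r : ℝ) : CC (r • A) :=
  ⟨hA.compact.smul r, hA.convex.smul r⟩

/-- A nonempty compact convex set as a convex body. -/
def CC.toBody {A : Set V} (hA : CC A) (hne : A.Nonempty) : ConvexBody V :=
  ⟨A, hA.convex, hA.compact, hne⟩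

@[simp] theorem CC.coe_toBody {A : Set V} (hA : CC A) (hne : A.Nonempty) :
    (hA.toBody hne : Set V) = A := rfl

variable [FiniteDimensional ℝ V]

theorem isClosed_le (ℓ : V →ₗ[ℝ] ℝ) (c : ℝ) : IsClosed {x | ℓ x ≤ c} :=
  _root_.isClosed_le ℓ.continuous_of_finiteDimensional continuous_const

theorem isClosed_ge (ℓ : V →ₗ[ℝ] ℝ) (c : ℝ) : IsClosed {x | c ≤ ℓ x} :=
  _root_.isClosed_le continuous_const ℓ.continuous_of_finiteDimensional

theorem isClosed_eq (ℓ : V →ₗ[ℝ] ℝ) (c : ℝ) : IsClosed {x | ℓ x = c} :=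
  _root_.isClosed_eq ℓ.continuous_of_finiteDimensional continuous_const

theorem CC.le {A : Set V} (hA : CC A) (ℓ : V →ₗ[ℝ] ℝ) (c : ℝ) : CC (A ∩ {x | ℓ x ≤ c}) :=
  ⟨hA.compact.inter_right (isClosed_le ℓ c),
    hA.convex.inter (convex_halfSpace_le ℓ.isLinear c)⟩

theorem CC.ge {A : Set V} (hA : CC A) (ℓ : V →ₗ[ℝ] ℝ) (c : ℝ) : CC (A ∩ {x | c ≤ ℓ x}) :=
  ⟨hA.compact.inter_right (isClosed_ge ℓ c),
    hA.convex.inter (convex_halfSpace_ge ℓ.isLinear c)⟩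

theorem CC.eq {A : Set V} (hA : CC A) (ℓ : V →ₗ[ℝ] ℝ) (c : ℝ) : CC (A ∩ {x | ℓ x = c}) :=
  ⟨hA.compact.inter_right (isClosed_eq ℓ c),
    hA.convex.inter (convex_hyperplane ℓ.isLinear c)⟩

theorem CC.bound {A : Set V} (hA : CC A) (ℓ : V →ₗ[ℝ] ℝ) :
    ∃ M : ℝ, 0 < M ∧ ∀ x ∈ A, |ℓ x| ≤ M := by
  obtain ⟨M, hM⟩ := (hA.compact.exists_bound_of_continuousOn
    (f := ℓ) ℓ.continuous_of_finiteDimensional.continuousOn)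
  exact ⟨max M 1, by positivity, fun x hx => (hM x hx).trans (le_max_left _ _)⟩

/-- A simple, translation invariant, continuous valuation, as a function on all sets of which
only the values on compact convex sets matter.  Simplicity is expressed by vanishing on sets
contained in an affine hyperplane `{ℓ = c}`. -/
structure SV (Φ : Set V → ℂ) : Prop where
  val : ∀ A B, CC A → CC B → Convex ℝ (A ∪ B) → Φ (A ∪ B) + Φ (A ∩ B) = Φ A + Φ B
  trans : ∀ A x, CC A → Φ ({x} + A) = Φ A
  null : ∀ A (ℓ : V →ₗ[ℝ] ℝ) c, CC A → ℓ ≠ 0 → (∀ x ∈ A, ℓ x = c) → Φ A = 0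
  empty : Φ ∅ = 0
  cont : Continuous fun K : ConvexBody V => Φ (K : Set V)

theorem union_halves (A : Set V) (ℓ : V →ₗ[ℝ] ℝ) (c : ℝ) :
    (A ∩ {x | ℓ x ≤ c}) ∪ (A ∩ {x | c ≤ ℓ x}) = A := by
  ext x
  simp only [mem_union, mem_inter_iff, mem_ofPred_eq]
  have := le_total (ℓ x) c
  tauto

theorem inter_halves (A : Set V) (ℓ : V →ₗ[ℝ] ℝ) (c : ℝ) :
    (A ∩ {x | ℓ x ≤ c}) ∩ (A ∩ {x | c ≤ ℓ x}) = A ∩ {x | ℓ x = c} := by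
  ext x
  simp only [mem_inter_iff, mem_ofPred_eq, le_antisymm_iff]
  tauto

theorem SV.cut {Φ : Set V → ℂ} (h : SV Φ) {A : Set V} (hA : CC A) {ℓ : V →ₗ[ℝ] ℝ} (hℓ : ℓ ≠ 0)
    (c : ℝ) : Φ A = Φ (A ∩ {x | ℓ x ≤ c}) + Φ (A ∩ {x | c ≤ ℓ x}) := by
  have := h.val _ _ (hA.le ℓ c) (hA.ge ℓ c) (by rw [union_halves]; exact hA.convex)
  rw [union_halves, inter_halves, h.null _ ℓ c (hA.eq ℓ c) hℓ (fun x hx => hx.2), add_zero] at this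
  exact this

/-- Minkowski addition of a convex set `K` distributes over intersections of two closed convex
sets whose union is convex. -/
theorem add_inter_of_convex_union {K A B : Set V} (hK : Convex ℝ K) (hA : CC A) (hB : CC B)
    (hAB : Convex ℝ (A ∪ B)) : (K + A) ∩ (K + B) = K + A ∩ B := by
  refine Subset.antisymm ?_ (subset_inter (add_subset_add_left inter_subset_left)
    (add_subset_add_left inter_subset_right))
  rintro x ⟨⟨k, hk, a, ha, rfl⟩, ⟨k', hk', b, hb, hx⟩⟩
  simp only at hx
  -- the segment from `a` to `b` lies in `A ∪ B`, hence meets `A ∩ B`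
  have hpre : IsPreconnected (segment ℝ a b) := (convex_segment a b).isPreconnected
  rw [isPreconnected_closed_iff] at hpre
  obtain ⟨y, hy, hyA, hyB⟩ := hpre A B hA.compact.isClosed hB.compact.isClosed
    (hAB.segment_subset (Or.inl ha) (Or.inr hb))
    ⟨a, left_mem_segment _ _ _, ha⟩ ⟨b, right_mem_segment _ _ _, hb⟩
  obtain ⟨p, q, hp, hq, hpq, rfl⟩ := hy
  refine ⟨p • k + q • k', hK hk hk' hp hq hpq, _, ⟨hyA, hyB⟩, ?_⟩
  have : p • (k + a) + q • (k' + b) = k + a := by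
    rw [hx, ← add_smul, hpq, one_smul]
  simp only
  rw [← this]
  module

theorem SV.mcut {Φ : Set V → ℂ} (h : SV Φ) {K A : Set V} (hK : CC K) (hA : CC A)
    (ℓ : V →ₗ[ℝ] ℝ) (c : ℝ) :
    Φ (K + A) + Φ (K + A ∩ {x | ℓ x = c}) =
      Φ (K + A ∩ {x | ℓ x ≤ c}) + Φ (K + A ∩ {x | c ≤ ℓ x}) := by
  have hu := union_halves A ℓ c
  have := h.val _ _ (hK.add (hA.le ℓ c)) (hK.add (hA.ge ℓ c))
    (by rw [← add_union, hu]; exact (hK.add hA).convex)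
  rwa [← add_union, hu, add_inter_of_convex_union hK.convex (hA.le ℓ c) (hA.ge ℓ c)
    (by rw [hu]; exact hA.convex), inter_halves] at this

theorem dist_body_le {K L : ConvexBody V} {r : ℝ} (hr : 0 ≤ r)
    (h1 : ∀ x ∈ (K : Set V), ∃ y ∈ (L : Set V), dist x y ≤ r)
    (h2 : ∀ x ∈ (L : Set V), ∃ y ∈ (K : Set V), dist x y ≤ r) : dist K L ≤ r := by
  rw [← ConvexBody.hausdorffDist_coe]
  exact hausdorffDist_le_of_mem_dist hr h1 h2

theorem body_exists_dist_le (K L : ConvexBody V) {x : V} (hx : x ∈ (K : Set V)) :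
    ∃ y ∈ (L : Set V), dist x y ≤ dist K L := by
  obtain ⟨y, hy, h⟩ := L.isCompact.exists_infDist_eq_dist L.nonempty x
  refine ⟨y, hy, ?_⟩
  rw [← h, ← ConvexBody.hausdorffDist_coe]
  exact infDist_le_hausdorffDist_of_mem hx ConvexBody.hausdorffEDist_ne_top

theorem continuous_add_smul (K C : ConvexBody V) : Continuous fun r : ℝ => K + r • C := by
  obtain ⟨M, hM⟩ := C.isBounded.exists_norm_le
  have hM0 : 0 ≤ M := by
    obtain ⟨x, hx⟩ := C.nonempty
    exact (norm_nonneg x).trans (hM x hx)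
  have key : ∀ r s : ℝ, ∀ x ∈ ((K + r • C : ConvexBody V) : Set V),
      ∃ y ∈ ((K + s • C : ConvexBody V) : Set V), dist x y ≤ M * dist r s := by
    intro r s x hx
    rw [ConvexBody.coe_add, ConvexBody.coe_smul] at hx
    obtain ⟨k, hk, _, ⟨c, hc, rfl⟩, rfl⟩ := hx
    refine ⟨k + s • c, ?_, ?_⟩
    · rw [ConvexBody.coe_add, ConvexBody.coe_smul]
      exact add_mem_add hk (smul_mem_smul_set hc)
    · simp only [dist_add_left]
      rw [dist_eq_norm, ← sub_smul, norm_smul, mul_comm, dist_eq_norm]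
      exact mul_le_mul_of_nonneg_right (hM c hc) (norm_nonneg _)
  refine (LipschitzWith.of_dist_le_mul (K := ⟨M, hM0⟩) fun r s => ?_).continuous
  refine dist_body_le (by positivity) (key r s) fun x hx => ?_
  rw [dist_comm r s]
  exact key s r x hx

/-- Continuity of linear image plus a fixed summand, in the Hausdorff metric. -/
theorem continuous_image_add {W : Type*} [NormedAddCommGroup W] [NormedSpace ℝ W]
    [FiniteDimensional ℝ W]
    (f : V →ₗ[ℝ] W) {Q : Set W} (hQ : CC Q) (hne : Q.Nonempty) :
    Continuous fun K : ConvexBody V =>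
      (((CC.body K).image f).add hQ).toBody ((K.nonempty.image f).add hne) := by
  set F := LinearMap.toContinuousLinearMap f
  have key : ∀ K L : ConvexBody V, ∀ x ∈ f '' (K : Set V) + Q,
      ∃ y ∈ f '' (L : Set V) + Q, dist x y ≤ ‖F‖ * dist K L := by
    rintro K L _ ⟨_, ⟨k, hk, rfl⟩, q, hq, rfl⟩
    obtain ⟨y, hy, h⟩ := body_exists_dist_le K L hk
    refine ⟨f y + q, add_mem_add (mem_image_of_mem f hy) hq, ?_⟩
    simp only [dist_add_right]
    exact (F.dist_le_opNorm k y).trans (by gcongr)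
  refine (LipschitzWith.of_dist_le_mul (K := ‖F‖₊) fun K L => ?_).continuous
  refine dist_body_le (by positivity) (key K L) fun x hx => ?_
  rw [dist_comm K L]
  exact key L K x hx

/-- Cauchy's functional equation on the half line. -/
theorem cauchy_eq {a : ℝ → ℂ} (hadd : ∀ s t, 0 ≤ s → 0 ≤ t → a (s + t) = a s + a t)
    (hc : Continuous a) {t : ℝ} (ht : 0 ≤ t) : a t = t * a 1 := by
  have h0 : a 0 = 0 := by simpa using hadd 0 0 le_rfl le_rfl
  -- the odd extension `t ↦ a t⁺ - a t⁻` is additive on the whole line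
  have key : ∀ p q : ℝ, 0 ≤ p → 0 ≤ q →
      a (max (p - q) 0) - a (max (-(p - q)) 0) = a p - a q := by
    intro p q hp hq
    rcases le_total q p with h | h
    · have := hadd (p - q) q (by linarith) hq
      rw [max_eq_left (by linarith), max_eq_right (by linarith), h0]
      rw [sub_add_cancel] at this
      rw [this]; ring
    · have := hadd (q - p) p (by linarith) hp
      rw [max_eq_right (by linarith), max_eq_left (by linarith), h0, neg_sub]
      rw [sub_add_cancel] at this
      rw [this]; ring
  let b : ℝ →+ ℂ :=
    { toFun := fun t => a (max t 0) - a (max (-t) 0)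
      map_zero' := by simp
      map_add' := fun x y => by
        have e : ∀ x : ℝ, x = max x 0 - max (-x) 0 := fun x => by
          rcases le_total x 0 with h | h
          · rw [max_eq_right h, max_eq_left (by linarith)]; ring
          · rw [max_eq_left h, max_eq_right (by linarith)]; ring
        have := key (max x 0 + max y 0) (max (-x) 0 + max (-y) 0) (by positivity) (by positivity)
        rw [show max x 0 + max y 0 - (max (-x) 0 + max (-y) 0) = x + y by
          conv_rhs => rw [e x, e y]
          ring] at this
        rw [this, hadd _ _ (by positivity) (by positivity), hadd _ _ (by positivity) (by positivity)]
        ring }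
  have hb : Continuous b := by
    change Continuous fun t => a (max t 0) - a (max (-t) 0)
    fun_prop
  have hbt : ∀ t, 0 ≤ t → b t = a t := fun t ht => by
    change a (max t 0) - a (max (-t) 0) = a t
    rw [max_eq_left ht, max_eq_right (by linarith), h0, sub_zero]
  have := (b.toRealLinearMap hb).map_smul t 1
  simp only [smul_eq_mul, mul_one, AddMonoidHom.coe_toRealLinearMap, Complex.real_smul] at this
  rwa [hbt t ht, hbt 1 zero_le_one] at this

end Basic
end Schneider

/-! ### Adding segments and triangles -/

namespace Schneider
open Set

section Prisms
variable {V : Type*} [NormedAddCommGroup V] [NormedSpace ℝ V] [FiniteDimensional ℝ V]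

/-- The segment from `0` to `R • v`. -/
def seg (v : V) (R : ℝ) : Set V := {x | ∃ s, 0 ≤ s ∧ s ≤ R ∧ x = s • v}

/-- The triangle with vertices `0`, `R • v`, `R • (v + w)`. -/
def tri (v w : V) (R : ℝ) : Set V := {x | ∃ s t, 0 ≤ t ∧ t ≤ s ∧ s ≤ R ∧ x = s • v + t • w}

theorem CC.seg (v : V) (R : ℝ) : CC (seg v R) := by
  have : Schneider.seg v R = LinearMap.toSpanSingleton ℝ V v '' Icc 0 R := by
    ext x
    constructor
    · rintro ⟨s, h0, h1, rfl⟩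
      exact ⟨s, ⟨h0, h1⟩, by simp⟩
    · rintro ⟨s, ⟨h0, h1⟩, rfl⟩
      exact ⟨s, h0, h1, by simp⟩
  rw [this]
  exact CC.image ⟨isCompact_Icc, convex_Icc 0 R⟩ _

theorem CC.tri (v w : V) (R : ℝ) : CC (tri v w R) := by
  have h : CC (Icc ((0 : ℝ), (0 : ℝ)) (R, R) ∩
      {p | (LinearMap.snd ℝ ℝ ℝ - LinearMap.fst ℝ ℝ ℝ) p ≤ 0}) :=
    CC.le ⟨isCompact_Icc, convex_Icc _ _⟩ _ _
  have : Schneider.tri v w R = ((LinearMap.toSpanSingleton ℝ V v).coprod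
      (LinearMap.toSpanSingleton ℝ V w)) '' (Icc ((0 : ℝ), (0 : ℝ)) (R, R) ∩
      {p | (LinearMap.snd ℝ ℝ ℝ - LinearMap.fst ℝ ℝ ℝ) p ≤ 0}) := by
    ext x
    constructor
    · rintro ⟨s, t, h0, h1, h2, rfl⟩
      refine ⟨(s, t), ⟨⟨⟨by simp; linarith, by simpa⟩, ⟨by simpa, by simp; linarith⟩⟩, ?_⟩, by simp⟩
      simpa using h1
    · rintro ⟨⟨s, t⟩, ⟨⟨⟨h0, h1⟩, ⟨h2, h3⟩⟩, h4⟩, rfl⟩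
      simp only [mem_ofPred_eq, LinearMap.sub_apply, LinearMap.snd_apply, LinearMap.fst_apply,
        sub_nonpos] at h0 h1 h2 h3 h4
      exact ⟨s, t, h1, h4, h2, by simp⟩
  rw [this]
  exact h.image _

theorem mem_add_seg {K : Set V} {v x : V} {R : ℝ} :
    x ∈ K + seg v R ↔ ∃ k ∈ K, ∃ s, 0 ≤ s ∧ s ≤ R ∧ x = k + s • v := by
  constructor
  · rintro ⟨k, hk, _, ⟨s, h0, h1, rfl⟩, rfl⟩
    exact ⟨k, hk, s, h0, h1, rfl⟩
  · rintro ⟨k, hk, s, h0, h1, rfl⟩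
    exact ⟨k, hk, _, ⟨s, h0, h1, rfl⟩, rfl⟩

theorem mem_add_tri {K : Set V} {v w x : V} {R : ℝ} :
    x ∈ K + tri v w R ↔
      ∃ k ∈ K, ∃ s t, 0 ≤ t ∧ t ≤ s ∧ s ≤ R ∧ x = k + (s • v + t • w) := by
  constructor
  · rintro ⟨k, hk, _, ⟨s, t, h0, h1, h2, rfl⟩, rfl⟩
    exact ⟨k, hk, s, t, h0, h1, h2, rfl⟩
  · rintro ⟨k, hk, s, t, h0, h1, h2, rfl⟩
    exact ⟨k, hk, _, ⟨s, t, h0, h1, h2, rfl⟩, rfl⟩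

theorem mem_singleton_add {A : Set V} {x y : V} : x ∈ {y} + A ↔ ∃ z ∈ A, x = y + z := by
  constructor
  · rintro ⟨_, rfl, z, hz, rfl⟩
    exact ⟨z, hz, rfl⟩
  · rintro ⟨z, hz, rfl⟩
    exact ⟨y, rfl, z, hz, rfl⟩

theorem zero_mem_seg (v : V) {R : ℝ} (hR : 0 ≤ R) : (0 : V) ∈ seg v R :=
  ⟨0, le_rfl, hR, by simp⟩

theorem zero_mem_tri (v w : V) {R : ℝ} (hR : 0 ≤ R) : (0 : V) ∈ tri v w R :=
  ⟨0, 0, le_rfl, le_rfl, hR, by simp⟩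

theorem seg_eq_smul (v : V) {R : ℝ} (hR : 0 ≤ R) : seg v R = R • seg v 1 := by
  ext x
  constructor
  · rintro ⟨s, h0, h1, rfl⟩
    rcases hR.eq_or_lt with rfl | hR
    · have : s = 0 := by linarith
      subst this
      exact ⟨0, zero_mem_seg v zero_le_one, by simp⟩
    · refine ⟨(s / R) • v, ⟨s / R, by positivity, by rw [div_le_iff₀ hR]; linarith, rfl⟩, ?_⟩
      simp only [smul_smul]
      congr 1
      field_simp
  · rintro ⟨_, ⟨s, h0, h1, rfl⟩, rfl⟩
    exact ⟨R * s, by positivity, by nlinarith, by simp [smul_smul]⟩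

theorem tri_eq_smul (v w : V) {R : ℝ} (hR : 0 ≤ R) : tri v w R = R • tri v w 1 := by
  ext x
  constructor
  · rintro ⟨s, t, h0, h1, h2, rfl⟩
    rcases hR.eq_or_lt with rfl | hR
    · have : s = 0 := by linarith
      have : t = 0 := by linarith
      subst s t
      exact ⟨0, zero_mem_tri v w zero_le_one, by simp⟩
    · refine ⟨(s / R) • v + (t / R) • w, ⟨s / R, t / R, by positivity, by gcongr,
        by rw [div_le_iff₀ hR]; linarith, rfl⟩, ?_⟩
      simp only [smul_smul, smul_add]
      congr 2 <;> field_simp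
  · rintro ⟨_, ⟨s, t, h0, h1, h2, rfl⟩, rfl⟩
    exact ⟨R * s, R * t, by positivity, by nlinarith, by nlinarith, by simp [smul_smul]⟩

theorem seg_one_smul (v : V) {R : ℝ} (hR : 0 ≤ R) : seg (R • v) 1 = seg v R := by
  rw [seg_eq_smul v hR]
  ext x
  constructor
  · rintro ⟨s, h0, h1, rfl⟩
    exact ⟨s • v, ⟨s, h0, h1, rfl⟩, smul_comm _ _ _⟩
  · rintro ⟨_, ⟨s, h0, h1, rfl⟩, rfl⟩
    exact ⟨s, h0, h1, smul_comm _ _ _⟩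

theorem seg_zero (R : ℝ) (hR : 0 ≤ R) : seg (0 : V) R = {0} := by
  ext x
  constructor
  · rintro ⟨s, h0, h1, rfl⟩; simp
  · rintro rfl; exact zero_mem_seg _ hR

/-- `Φ` vanishes on all prisms `D + [0, v]` whose base `D` lies in a hyperplane. -/
def PN (Φ : Set V → ℂ) : Prop := ∀ D (ℓ : V →ₗ[ℝ] ℝ) c v, CC D → ℓ ≠ 0 →
  (∀ x ∈ D, ℓ x = c) → Φ (D + seg v 1) = 0

theorem SV.trans' {Φ : Set V → ℂ} (h : SV Φ) {K A : Set V} (hK : CC K) (hA : CC A) (x : V) :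
    Φ (K + ({x} + A)) = Φ (K + A) := by
  rw [add_left_comm]
  exact h.trans _ _ (hK.add hA)

theorem SV.trans'' {Φ : Set V → ℂ} (h : SV Φ) {K : Set V} (hK : CC K) (x : V) :
    Φ (K + {x}) = Φ K := by
  rw [add_comm]
  exact h.trans _ _ hK

theorem SV.continuous_smul {Φ : Set V → ℂ} (h : SV Φ) {K C : Set V} (hK : CC K) (hC : CC C)
    (hKn : K.Nonempty) (hCn : C.Nonempty) : Continuous fun r : ℝ => Φ (K + r • C) :=
  h.cont.comp (continuous_add_smul (hK.toBody hKn) (hC.toBody hCn))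

/-- `R ↦ Φ (K + [0, R v]) - Φ K` is additive, hence linear. -/
theorem SV.seg_linear {Φ : Set V → ℂ} (h : SV Φ) {K : Set V} (hK : CC K) (v : V) {R : ℝ}
    (hR : 0 ≤ R) : Φ (K + seg v R) - Φ K = R * (Φ (K + seg v 1) - Φ K) := by
  rcases K.eq_empty_or_nonempty with rfl | hKn
  · simp
  by_cases hv : v = 0
  · subst hv
    rw [seg_zero _ hR, seg_zero _ zero_le_one, h.trans'' hK]; ring
  obtain ⟨ℓ, hℓ⟩ := Module.Projective.exists_dual_ne_zero ℝ hv
  obtain ⟨ℓ, hℓ⟩ : ∃ ℓ : V →ₗ[ℝ] ℝ, ℓ v = 1 := ⟨(ℓ v)⁻¹ • ℓ, by simp [hℓ]⟩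
  have hc : Continuous fun r : ℝ => Φ (K + r • seg v 1) - Φ K :=
    (h.continuous_smul hK (CC.seg v 1) hKn ⟨0, zero_mem_seg v zero_le_one⟩).sub
    (continuous_const (y := Φ K))
  have hlin := cauchy_eq ?_ hc hR
  · simpa only [← seg_eq_smul v hR, one_smul] using hlin
  intro s t hs ht
  rw [← seg_eq_smul v hs, ← seg_eq_smul v ht, ← seg_eq_smul v (add_nonneg hs ht)]
  have := h.mcut hK (CC.seg v (s + t)) ℓ s
  have e1 : seg v (s + t) ∩ {x | ℓ x ≤ s} = seg v s := by
    ext x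
    constructor
    · rintro ⟨⟨r, h0, h1, rfl⟩, h2⟩
      simp [hℓ] at h2
      exact ⟨r, h0, h2, rfl⟩
    · rintro ⟨r, h0, h1, rfl⟩
      exact ⟨⟨r, h0, by linarith, rfl⟩, by simpa [hℓ]⟩
  have e2 : seg v (s + t) ∩ {x | s ≤ ℓ x} = {s • v} + seg v t := by
    ext x
    rw [mem_singleton_add]
    constructor
    · rintro ⟨⟨r, h0, h1, rfl⟩, h2⟩
      simp [hℓ] at h2
      exact ⟨_, ⟨r - s, by linarith, by linarith, rfl⟩, by module⟩
    · rintro ⟨_, ⟨r, h0, h1, rfl⟩, rfl⟩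
      exact ⟨⟨s + r, by linarith, by linarith, by module⟩, by simpa [hℓ]⟩
  have e3 : seg v (s + t) ∩ {x | ℓ x = s} = {s • v} := by
    ext x
    constructor
    · rintro ⟨⟨r, h0, h1, rfl⟩, h2⟩
      simp [hℓ] at h2
      simp [h2]
    · rintro rfl
      exact ⟨⟨s, by linarith, by linarith, rfl⟩, by simp [hℓ]⟩
  rw [e1, e2, e3, h.trans'' hK, h.trans' hK (CC.seg v t)] at this
  linear_combination this

/-- Segments are neutral summands for a simple valuation vanishing on prisms. -/
theorem SV.seg_neutral {Φ : Set V → ℂ} (h : SV Φ) (hp : PN Φ) {K : Set V} (hK : CC K) (v : V) :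
    Φ (K + seg v 1) = Φ K := by
  by_cases hv : v = 0
  · subst hv
    rw [seg_zero _ zero_le_one, h.trans'' hK]
  obtain ⟨ℓ, hℓ⟩ := Module.Projective.exists_dual_ne_zero ℝ hv
  obtain ⟨ℓ, hℓ⟩ : ∃ ℓ : V →ₗ[ℝ] ℝ, ℓ v = 1 := ⟨(ℓ v)⁻¹ • ℓ, by simp [hℓ]⟩
  have hℓ0 : ℓ ≠ 0 := by rintro rfl; simp at hℓ
  obtain ⟨M, hM0, hM⟩ := hK.bound ℓ
  replace hM : ∀ x ∈ K, -M ≤ ℓ x ∧ ℓ x ≤ M := fun x hx => abs_le.1 (hM x hx)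
  set A' := K + seg v (2 * M + 1) with hA'
  set A := K + seg v (2 * M) with hA
  have cA' : CC A' := hK.add (CC.seg _ _)
  have cA : CC A := hK.add (CC.seg _ _)
  have c1 := h.cut cA' hℓ0 M
  have c2 := h.cut (cA'.ge ℓ M) hℓ0 (M + 1)
  have c3 := h.cut cA hℓ0 M
  have e1 : A' ∩ {x | ℓ x ≤ M} = A ∩ {x | ℓ x ≤ M} := by
    ext x
    constructor
    · rintro ⟨hx, h2⟩
      obtain ⟨k, hk, s, h0, h1, rfl⟩ := mem_add_seg.1 hx
      have := hM k hk
      refine ⟨mem_add_seg.2 ⟨k, hk, s, h0, ?_, rfl⟩, h2⟩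
      simp [hℓ] at h2
      linarith
    · rintro ⟨hx, h2⟩
      obtain ⟨k, hk, s, h0, h1, rfl⟩ := mem_add_seg.1 hx
      exact ⟨mem_add_seg.2 ⟨k, hk, s, h0, by linarith, rfl⟩, h2⟩
  have e2 : A' ∩ {x | M ≤ ℓ x} ∩ {x | M + 1 ≤ ℓ x} = {v} + A ∩ {x | M ≤ ℓ x} := by
    ext x
    rw [mem_singleton_add]
    constructor
    · rintro ⟨⟨hx, -⟩, h2⟩
      obtain ⟨k, hk, s, h0, h1, rfl⟩ := mem_add_seg.1 hx
      have := hM k hk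
      simp [hℓ] at h2
      exact ⟨k + (s - 1) • v, ⟨mem_add_seg.2 ⟨k, hk, s - 1, by linarith, by linarith, rfl⟩,
        by simp [hℓ]; linarith⟩, by module⟩
    · rintro ⟨y, ⟨hx, h2⟩, rfl⟩
      obtain ⟨k, hk, s, h0, h1, rfl⟩ := mem_add_seg.1 hx
      simp [hℓ] at h2
      exact ⟨⟨mem_add_seg.2 ⟨k, hk, s + 1, by linarith, by linarith, by module⟩,
        by simp [hℓ]; linarith⟩, by simp [hℓ]; linarith⟩
  have e3 : A' ∩ {x | M ≤ ℓ x} ∩ {x | ℓ x ≤ M + 1} = A' ∩ {x | ℓ x = M} + seg v 1 := by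
    ext x
    rw [mem_add_seg]
    constructor
    · rintro ⟨⟨hx, h1⟩, h2⟩
      obtain ⟨k, hk, s, h0, h1, rfl⟩ := mem_add_seg.1 hx
      have := hM k hk
      simp [hℓ] at h1 h2
      exact ⟨k + (M - ℓ k) • v, ⟨mem_add_seg.2 ⟨k, hk, M - ℓ k, by linarith, by linarith, rfl⟩,
        by simp [hℓ]⟩, ℓ k + s - M, by linarith, by linarith, by module⟩
    · rintro ⟨y, ⟨hx, h2⟩, r, hr0, hr1, rfl⟩
      obtain ⟨k, hk, s, h0, h1, rfl⟩ := mem_add_seg.1 hx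
      have := hM k hk
      simp [hℓ] at h2
      exact ⟨⟨mem_add_seg.2 ⟨k, hk, s + r, by linarith, by linarith, by module⟩,
        by simp [hℓ]; linarith⟩, by simp [hℓ]; linarith⟩
  rw [c2, e1, e2, e3, h.trans _ _ (cA.ge ℓ M),
    hp _ ℓ M v (cA'.eq ℓ M) hℓ0 (fun x hx => hx.2)] at c1
  have l1 := h.seg_linear hK v (R := 2 * M + 1) (by linarith)
  have l2 := h.seg_linear hK v (R := 2 * M) (by linarith)
  push_cast at l1 l2
  rw [← hA'] at l1
  rw [← hA] at l2
  linear_combination l2 - l1 + c1 - c3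

theorem SV.seg_neutral' {Φ : Set V → ℂ} (h : SV Φ) (hp : PN Φ) {K : Set V} (hK : CC K) (v : V)
    {R : ℝ} (hR : 0 ≤ R) : Φ (K + seg v R) = Φ K := by
  rw [← seg_one_smul v hR]
  exact h.seg_neutral hp hK _

/-- `a, b` are coordinate functionals with respect to the independent vectors `v, w`. -/
structure Dual2 (a b : V →ₗ[ℝ] ℝ) (v w : V) : Prop where
  av : a v = 1
  aw : a w = 0
  bv : b v = 0
  bw : b w = 1

theorem Dual2.a_ne {a b : V →ₗ[ℝ] ℝ} {v w : V} (d : Dual2 a b v w) : a ≠ 0 := by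
  rintro rfl; simpa using d.av

theorem Dual2.b_ne {a b : V →ₗ[ℝ] ℝ} {v w : V} (d : Dual2 a b v w) : b ≠ 0 := by
  rintro rfl; simpa using d.bw

theorem Dual2.ba_ne {a b : V →ₗ[ℝ] ℝ} {v w : V} (d : Dual2 a b v w) : b - a ≠ 0 := by
  intro h
  have := LinearMap.congr_fun h w
  simp [d.aw, d.bw] at this

/-- Cutting a large triangle into two smaller ones and a parallelogram, which is neutral, shows that
the change of `Φ` is additive in the size of the triangle. -/
theorem SV.tri_linear {Φ : Set V → ℂ} (h : SV Φ) (hp : PN Φ) {K : Set V} (hK : CC K)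
    {a b : V →ₗ[ℝ] ℝ} {v w : V} (d : Dual2 a b v w) {R : ℝ} (hR : 0 ≤ R) :
    Φ (K + tri v w R) - Φ K = R * (Φ (K + tri v w 1) - Φ K) := by
  rcases K.eq_empty_or_nonempty with rfl | hKn
  · simp
  have hc : Continuous fun r : ℝ => Φ (K + r • tri v w 1) - Φ K :=
    (h.continuous_smul hK (CC.tri v w 1) hKn ⟨0, zero_mem_tri v w zero_le_one⟩).sub
    (continuous_const (y := Φ K))
  have hlin := cauchy_eq ?_ hc hR
  · simpa only [← tri_eq_smul v w hR, one_smul] using hlin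
  intro s t hs ht
  rw [← tri_eq_smul v w hs, ← tri_eq_smul v w ht, ← tri_eq_smul v w (add_nonneg hs ht)]
  have ct : CC (tri v w (s + t)) := CC.tri v w (s + t)
  have c1 := h.mcut hK ct a s
  have c2 := h.mcut hK (ct.ge a s) b s
  have e1 : tri v w (s + t) ∩ {x | a x ≤ s} = tri v w s := by
    ext x
    constructor
    · rintro ⟨⟨p, q, h0, h1, h2, rfl⟩, h3⟩
      simp [d.av, d.aw] at h3
      exact ⟨p, q, h0, h1, h3, rfl⟩
    · rintro ⟨p, q, h0, h1, h2, rfl⟩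
      exact ⟨⟨p, q, h0, h1, by linarith, rfl⟩, by simpa [d.av, d.aw]⟩
  have e2 : tri v w (s + t) ∩ {x | a x = s} = {s • v} + seg w s := by
    ext x
    rw [mem_singleton_add]
    constructor
    · rintro ⟨⟨p, q, h0, h1, h2, rfl⟩, h3⟩
      simp [d.av, d.aw] at h3
      exact ⟨_, ⟨q, h0, by linarith, rfl⟩, by rw [h3]⟩
    · rintro ⟨_, ⟨q, h0, h1, rfl⟩, rfl⟩
      exact ⟨⟨s, q, h0, h1, by linarith, rfl⟩, by simp [d.av, d.aw]⟩
  have e3 : tri v w (s + t) ∩ {x | s ≤ a x} ∩ {x | b x = s} = {s • v + s • w} + seg v t := by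
    ext x
    rw [mem_singleton_add]
    constructor
    · rintro ⟨⟨⟨p, q, h0, h1, h2, rfl⟩, h3⟩, h4⟩
      simp [d.av, d.aw, d.bv, d.bw] at h3 h4
      exact ⟨_, ⟨p - s, by linarith, by linarith, rfl⟩, by rw [h4]; module⟩
    · rintro ⟨_, ⟨p, h0, h1, rfl⟩, rfl⟩
      exact ⟨⟨⟨s + p, s, by linarith, by linarith, by linarith, by module⟩,
        by simpa [d.av, d.aw]⟩, by simp [d.bv, d.bw]⟩
  have e4 : tri v w (s + t) ∩ {x | s ≤ a x} ∩ {x | b x ≤ s} = {s • v} + (seg v t + seg w s) := by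
    ext x
    rw [mem_singleton_add]
    constructor
    · rintro ⟨⟨⟨p, q, h0, h1, h2, rfl⟩, h3⟩, h4⟩
      simp [d.av, d.aw, d.bv, d.bw] at h3 h4
      exact ⟨_, ⟨_, ⟨p - s, by linarith, by linarith, rfl⟩, _, ⟨q, h0, h4, rfl⟩, rfl⟩, by module⟩
    · rintro ⟨_, ⟨_, ⟨p, h0, h1, rfl⟩, _, ⟨q, h2, h3, rfl⟩, rfl⟩, rfl⟩
      exact ⟨⟨⟨s + p, q, by linarith, by linarith, by linarith, by module⟩,
        by simpa [d.av, d.aw]⟩, by simpa [d.bv, d.bw]⟩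
  have e5 : tri v w (s + t) ∩ {x | s ≤ a x} ∩ {x | s ≤ b x} = {s • v + s • w} + tri v w t := by
    ext x
    rw [mem_singleton_add]
    constructor
    · rintro ⟨⟨⟨p, q, h0, h1, h2, rfl⟩, h3⟩, h4⟩
      simp [d.av, d.aw, d.bv, d.bw] at h3 h4
      exact ⟨_, ⟨p - s, q - s, by linarith, by linarith, by linarith, rfl⟩, by module⟩
    · rintro ⟨_, ⟨p, q, h0, h1, h2, rfl⟩, rfl⟩
      exact ⟨⟨⟨s + p, s + q, by linarith, by linarith, by linarith, by module⟩,
        by simp [d.av, d.aw]; linarith⟩, by simpa [d.bv, d.bw]⟩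
  rw [e1, e2, h.trans' hK (CC.seg _ _), h.seg_neutral' hp hK _ hs] at c1
  rw [e3, e4, e5, h.trans' hK (CC.seg _ _), h.seg_neutral' hp hK _ ht,
    h.trans' hK ((CC.seg _ _).add (CC.seg _ _)), ← add_assoc,
    h.seg_neutral' hp (hK.add (CC.seg _ _)) _ hs, h.seg_neutral' hp hK _ ht,
    h.trans' hK (CC.tri _ _ _)] at c2
  linear_combination c1 + c2

/-- A parallelogram is the union of a triangle and its reflection, and it is a neutral summand. -/
theorem SV.tri_odd {Φ : Set V → ℂ} (h : SV Φ) (hp : PN Φ) {K : Set V} (hK : CC K)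
    {a b : V →ₗ[ℝ] ℝ} {v w : V} (d : Dual2 a b v w) :
    Φ (K + tri v w 1) + Φ (K + tri (-v) (-w) 1) = 2 * Φ K := by
  have cp : CC (seg v 1 + seg w 1) := (CC.seg v 1).add (CC.seg w 1)
  have c1 := h.mcut hK cp (b - a) 0
  have e1 : (seg v 1 + seg w 1) ∩ {x | (b - a) x ≤ 0} = tri v w 1 := by
    ext x
    constructor
    · rintro ⟨⟨_, ⟨p, h0, h1, rfl⟩, _, ⟨q, h2, h3, rfl⟩, rfl⟩, h4⟩
      simp [d.av, d.aw, d.bv, d.bw] at h4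
      exact ⟨p, q, h2, h4, h1, rfl⟩
    · rintro ⟨p, q, h0, h1, h2, rfl⟩
      exact ⟨⟨_, ⟨p, by linarith, by linarith, rfl⟩, _, ⟨q, by linarith, by linarith, rfl⟩, rfl⟩,
        by simpa [d.av, d.aw, d.bv, d.bw]⟩
  have e2 : (seg v 1 + seg w 1) ∩ {x | 0 ≤ (b - a) x} = {v + w} + tri (-v) (-w) 1 := by
    ext x
    rw [mem_singleton_add]
    constructor
    · rintro ⟨⟨_, ⟨p, h0, h1, rfl⟩, _, ⟨q, h2, h3, rfl⟩, rfl⟩, h4⟩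
      simp [d.av, d.aw, d.bv, d.bw] at h4
      exact ⟨_, ⟨1 - p, 1 - q, by linarith, by linarith, by linarith, rfl⟩, by module⟩
    · rintro ⟨_, ⟨p, q, h0, h1, h2, rfl⟩, rfl⟩
      exact ⟨⟨_, ⟨1 - p, by linarith, by linarith, rfl⟩, _, ⟨1 - q, by linarith, by linarith, rfl⟩,
        by module⟩, by simp [d.av, d.aw, d.bv, d.bw]; linarith⟩
  have e3 : (seg v 1 + seg w 1) ∩ {x | (b - a) x = 0} = seg (v + w) 1 := by
    ext x
    constructor
    · rintro ⟨⟨_, ⟨p, h0, h1, rfl⟩, _, ⟨q, h2, h3, rfl⟩, rfl⟩, h4⟩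
      simp [d.av, d.aw, d.bv, d.bw] at h4
      exact ⟨p, h0, h1, by rw [show q = p by linarith]; module⟩
    · rintro ⟨p, h0, h1, rfl⟩
      exact ⟨⟨_, ⟨p, h0, h1, rfl⟩, _, ⟨p, h0, h1, rfl⟩, by module⟩,
        by simp [d.av, d.aw, d.bv, d.bw]⟩
  rw [e1, e2, e3, h.seg_neutral hp hK, h.trans' hK (CC.tri _ _ _), ← add_assoc,
    h.seg_neutral hp (hK.add (CC.seg _ _)), h.seg_neutral hp hK] at c1
  linear_combination -c1

/-- The projection along `v, w` onto the common kernel of the dual functionals `a, b`. -/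
def proj2 (a b : V →ₗ[ℝ] ℝ) (v w : V) : V →ₗ[ℝ] V :=
  LinearMap.id - a.smulRight v - b.smulRight w

@[simp] theorem proj2_apply (a b : V →ₗ[ℝ] ℝ) (v w x : V) :
    proj2 a b v w x = x - a x • v - b x • w := rfl

/-- The slope formula: adding a triangle to `K` changes `Φ` by the value on the triangle plus the
projection of `K` along the plane of the triangle. -/
theorem SV.slope {Φ : Set V → ℂ} (h : SV Φ) (hp : PN Φ) {K : Set V} (hK : CC K)
    {a b : V →ₗ[ℝ] ℝ} {v w : V} (d : Dual2 a b v w) :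
    Φ (K + tri v w 1) = Φ K + Φ (proj2 a b v w '' K + tri v w 1) := by
  obtain ⟨M₁, hM₁, hMa⟩ := hK.bound a
  obtain ⟨M₂, hM₂, hMb⟩ := hK.bound b
  obtain ⟨M, hM0, hM⟩ : ∃ M : ℝ, 0 < M ∧ ∀ x ∈ K, (-M ≤ a x ∧ a x ≤ M) ∧ (-M ≤ b x ∧ b x ≤ M) :=
    ⟨max M₁ M₂, by positivity, fun x hx =>
      ⟨abs_le.1 ((hMa x hx).trans (le_max_left _ _)), abs_le.1 ((hMb x hx).trans (le_max_right _ _))⟩⟩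
  obtain ⟨av, aw, bv, bw⟩ := id d
  have ha : ∀ (k : V) (s t : ℝ), a (k + (s • v + t • w)) = a k + s := fun k s t => by simp [av, aw]
  have hb : ∀ (k : V) (s t : ℝ), b (k + (s • v + t • w)) = b k + t := fun k s t => by simp [bv, bw]
  set A' := K + tri v w (4 * M + 1) with hA'
  set A := K + tri v w (4 * M) with hA
  have cA' : CC A' := hK.add (CC.tri _ _ _)
  have cA : CC A := hK.add (CC.tri _ _ _)
  -- Cut `A` and `A'` by `a = 3 M` and `b = M`; cut `A'` further by the unit translates of these
  -- hyperplanes.  The outer pieces correspond to each other up to translation, the remaining ones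
  -- are prisms, up to the one which is the translate of `π K + tri v w 1`.
  have c1 := h.cut cA d.a_ne (3 * M)
  have c2 := h.cut (cA.ge a (3 * M)) d.b_ne M
  have c3 := h.cut cA' d.a_ne (3 * M)
  have c4 := h.cut (cA'.ge a (3 * M)) d.a_ne (3 * M + 1)
  have c5 := h.cut ((cA'.ge a (3 * M)).ge a (3 * M + 1)) d.b_ne M
  have c6 := h.cut (((cA'.ge a (3 * M)).ge a (3 * M + 1)).ge b M) d.b_ne (M + 1)
  have c7 := h.cut ((cA'.ge a (3 * M)).le a (3 * M + 1)) d.b_ne M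
  have c8 := h.cut (((cA'.ge a (3 * M)).le a (3 * M + 1)).ge b M) d.ba_ne (M - 3 * M)
  have e1 : A' ∩ {x | a x ≤ 3 * M} = A ∩ {x | a x ≤ 3 * M} := by
    ext x
    constructor
    · rintro ⟨hx, h2⟩
      obtain ⟨k, hk, s, t, h0, h1, h3, rfl⟩ := mem_add_tri.1 hx
      have := hM k hk
      refine ⟨mem_add_tri.2 ⟨k, hk, s, t, h0, h1, ?_, rfl⟩, h2⟩
      simp only [mem_ofPred_eq, ha] at h2
      linarith
    · rintro ⟨hx, h2⟩
      obtain ⟨k, hk, s, t, h0, h1, h3, rfl⟩ := mem_add_tri.1 hx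
      exact ⟨mem_add_tri.2 ⟨k, hk, s, t, h0, h1, by linarith, rfl⟩, h2⟩
  have e2 : A' ∩ {x | 3 * M ≤ a x} ∩ {x | 3 * M + 1 ≤ a x} ∩ {x | b x ≤ M} =
      {v} + A ∩ {x | 3 * M ≤ a x} ∩ {x | b x ≤ M} := by
    ext x
    rw [mem_singleton_add]
    constructor
    · rintro ⟨⟨⟨hx, -⟩, h2⟩, h4⟩
      obtain ⟨k, hk, s, t, h0, h1, h3, rfl⟩ := mem_add_tri.1 hx
      have := hM k hk
      simp only [mem_ofPred_eq, ha, hb] at h2 h4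
      refine ⟨k + ((s - 1) • v + t • w), ⟨⟨mem_add_tri.2
        ⟨k, hk, s - 1, t, by linarith, by linarith, by linarith, rfl⟩, ?_⟩, ?_⟩, by module⟩ <;>
      · simp only [mem_ofPred_eq, ha, hb]; linarith
    · rintro ⟨y, ⟨⟨hx, h2⟩, h4⟩, rfl⟩
      obtain ⟨k, hk, s, t, h0, h1, h3, rfl⟩ := mem_add_tri.1 hx
      simp only [mem_ofPred_eq, ha, hb] at h2 h4
      rw [show v + (k + (s • v + t • w)) = k + ((s + 1) • v + t • w) by module]
      refine ⟨⟨⟨mem_add_tri.2 ⟨k, hk, s + 1, t, by linarith, by linarith, by linarith, rfl⟩, ?_⟩,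
        ?_⟩, ?_⟩ <;>
      · simp only [mem_ofPred_eq, ha, hb]; linarith
  have e3 : A' ∩ {x | 3 * M ≤ a x} ∩ {x | 3 * M + 1 ≤ a x} ∩ {x | M ≤ b x} ∩ {x | M + 1 ≤ b x} =
      {v + w} + A ∩ {x | 3 * M ≤ a x} ∩ {x | M ≤ b x} := by
    ext x
    rw [mem_singleton_add]
    constructor
    · rintro ⟨⟨⟨⟨hx, -⟩, h2⟩, -⟩, h4⟩
      obtain ⟨k, hk, s, t, h0, h1, h3, rfl⟩ := mem_add_tri.1 hx
      have := hM k hk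
      simp only [mem_ofPred_eq, ha, hb] at h2 h4
      refine ⟨k + ((s - 1) • v + (t - 1) • w), ⟨⟨mem_add_tri.2
        ⟨k, hk, s - 1, t - 1, by linarith, by linarith, by linarith, rfl⟩, ?_⟩, ?_⟩, by module⟩ <;>
      · simp only [mem_ofPred_eq, ha, hb]; linarith
    · rintro ⟨y, ⟨⟨hx, h2⟩, h4⟩, rfl⟩
      obtain ⟨k, hk, s, t, h0, h1, h3, rfl⟩ := mem_add_tri.1 hx
      simp only [mem_ofPred_eq, ha, hb] at h2 h4
      rw [show v + w + (k + (s • v + t • w)) = k + ((s + 1) • v + (t + 1) • w) by module]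
      refine ⟨⟨⟨⟨mem_add_tri.2 ⟨k, hk, s + 1, t + 1, by linarith, by linarith, by linarith, rfl⟩,
        ?_⟩, ?_⟩, ?_⟩, ?_⟩ <;>
      · simp only [mem_ofPred_eq, ha, hb]; linarith
  have e4 : A' ∩ {x | 3 * M ≤ a x} ∩ {x | 3 * M + 1 ≤ a x} ∩ {x | M ≤ b x} ∩ {x | b x ≤ M + 1} =
      A' ∩ {x | 3 * M + 1 ≤ a x} ∩ {x | b x = M} + seg w 1 := by
    ext x
    rw [mem_add_seg]
    constructor
    · rintro ⟨⟨⟨⟨hx, -⟩, h2⟩, h4⟩, h5⟩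
      obtain ⟨k, hk, s, t, h0, h1, h3, rfl⟩ := mem_add_tri.1 hx
      have := hM k hk
      simp only [mem_ofPred_eq, ha, hb] at h2 h4 h5
      refine ⟨k + (s • v + (M - b k) • w), ⟨⟨mem_add_tri.2
        ⟨k, hk, s, M - b k, by linarith, by linarith, by linarith, rfl⟩, ?_⟩, ?_⟩,
        b k + t - M, by linarith, by linarith, by module⟩ <;>
      · simp only [mem_ofPred_eq, ha, hb]; linarith
    · rintro ⟨y, ⟨⟨hx, h2⟩, h4⟩, r, hr0, hr1, rfl⟩
      obtain ⟨k, hk, s, t, h0, h1, h3, rfl⟩ := mem_add_tri.1 hx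
      have := hM k hk
      simp only [mem_ofPred_eq, ha, hb] at h2 h4
      rw [show k + (s • v + t • w) + r • w = k + (s • v + (t + r) • w) by module]
      refine ⟨⟨⟨⟨mem_add_tri.2 ⟨k, hk, s, t + r, by linarith, by linarith, by linarith, rfl⟩,
        ?_⟩, ?_⟩, ?_⟩, ?_⟩ <;>
      · simp only [mem_ofPred_eq, ha, hb]; linarith
  have e5 : A' ∩ {x | 3 * M ≤ a x} ∩ {x | a x ≤ 3 * M + 1} ∩ {x | b x ≤ M} =
      A' ∩ {x | b x ≤ M} ∩ {x | a x = 3 * M} + seg v 1 := by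
    ext x
    rw [mem_add_seg]
    constructor
    · rintro ⟨⟨⟨hx, h2⟩, h4⟩, h5⟩
      obtain ⟨k, hk, s, t, h0, h1, h3, rfl⟩ := mem_add_tri.1 hx
      have := hM k hk
      simp only [mem_ofPred_eq, ha, hb] at h2 h4 h5
      refine ⟨k + ((3 * M - a k) • v + t • w), ⟨⟨mem_add_tri.2
        ⟨k, hk, 3 * M - a k, t, by linarith, by linarith, by linarith, rfl⟩, ?_⟩, ?_⟩,
        a k + s - 3 * M, by linarith, by linarith, by module⟩ <;>
      · simp only [mem_ofPred_eq, ha, hb]; linarith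
    · rintro ⟨y, ⟨⟨hx, h2⟩, h4⟩, r, hr0, hr1, rfl⟩
      obtain ⟨k, hk, s, t, h0, h1, h3, rfl⟩ := mem_add_tri.1 hx
      have := hM k hk
      simp only [mem_ofPred_eq, ha, hb] at h2 h4
      rw [show k + (s • v + t • w) + r • v = k + ((s + r) • v + t • w) by module]
      refine ⟨⟨⟨mem_add_tri.2 ⟨k, hk, s + r, t, by linarith, by linarith, by linarith, rfl⟩,
        ?_⟩, ?_⟩, ?_⟩ <;>
      · simp only [mem_ofPred_eq, ha, hb]; linarith
  have e6 : A' ∩ {x | 3 * M ≤ a x} ∩ {x | a x ≤ 3 * M + 1} ∩ {x | M ≤ b x} ∩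
      {x | M - 3 * M ≤ (b - a) x} =
      A' ∩ {x | M ≤ b x} ∩ {x | a x = 3 * M} + seg (v + w) 1 := by
    ext x
    rw [mem_add_seg]
    constructor
    · rintro ⟨⟨⟨⟨hx, h2⟩, h4⟩, h5⟩, h6⟩
      obtain ⟨k, hk, s, t, h0, h1, h3, rfl⟩ := mem_add_tri.1 hx
      have := hM k hk
      simp only [mem_ofPred_eq, ha, hb, LinearMap.sub_apply] at h2 h4 h5 h6
      refine ⟨k + ((3 * M - a k) • v + (t - (a k + s - 3 * M)) • w), ⟨⟨mem_add_tri.2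
        ⟨k, hk, 3 * M - a k, t - (a k + s - 3 * M), by linarith, by linarith, by linarith, rfl⟩,
          ?_⟩, ?_⟩, a k + s - 3 * M, by linarith, by linarith, by module⟩ <;>
      · simp only [mem_ofPred_eq, ha, hb]; linarith
    · rintro ⟨y, ⟨⟨hx, h2⟩, h4⟩, r, hr0, hr1, rfl⟩
      obtain ⟨k, hk, s, t, h0, h1, h3, rfl⟩ := mem_add_tri.1 hx
      have := hM k hk
      simp only [mem_ofPred_eq, ha, hb] at h2 h4
      rw [show k + (s • v + t • w) + r • (v + w) = k + ((s + r) • v + (t + r) • w) by module]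
      refine ⟨⟨⟨⟨mem_add_tri.2 ⟨k, hk, s + r, t + r, by linarith, by linarith, by linarith, rfl⟩,
        ?_⟩, ?_⟩, ?_⟩, ?_⟩ <;>
      · simp only [mem_ofPred_eq, ha, hb, LinearMap.sub_apply]; linarith
  have e7 : A' ∩ {x | 3 * M ≤ a x} ∩ {x | a x ≤ 3 * M + 1} ∩ {x | M ≤ b x} ∩
      {x | (b - a) x ≤ M - 3 * M} =
      {(3 * M) • v + M • w} + (proj2 a b v w '' K + tri v w 1) := by
    ext x
    rw [mem_singleton_add]
    constructor
    · rintro ⟨⟨⟨⟨hx, h2⟩, h4⟩, h5⟩, h6⟩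
      obtain ⟨k, hk, s, t, h0, h1, h3, rfl⟩ := mem_add_tri.1 hx
      have := hM k hk
      simp only [mem_ofPred_eq, ha, hb, LinearMap.sub_apply] at h2 h4 h5 h6
      refine ⟨_, ⟨_, ⟨k, hk, rfl⟩, _, ⟨a k + s - 3 * M, b k + t - M, by linarith, by linarith,
        by linarith, rfl⟩, rfl⟩, ?_⟩
      simp only [proj2_apply]
      module
    · rintro ⟨y, ⟨_, ⟨k, hk, rfl⟩, _, ⟨s, t, h0, h1, h3, rfl⟩, rfl⟩, rfl⟩
      have := hM k hk
      simp only [proj2_apply]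
      rw [show (3 * M) • v + M • w + (k - a k • v - b k • w + (s • v + t • w)) =
        k + ((3 * M + s - a k) • v + (M + t - b k) • w) by module]
      refine ⟨⟨⟨⟨mem_add_tri.2 ⟨k, hk, 3 * M + s - a k, M + t - b k, by linarith, by linarith,
        by linarith, rfl⟩, ?_⟩, ?_⟩, ?_⟩, ?_⟩ <;>
      · simp only [mem_ofPred_eq, ha, hb, LinearMap.sub_apply]; linarith
  rw [c2] at c1
  rw [e1, c4, c5, c6, c7, c8, e2, e3, e4, e5, e6, e7, h.trans _ _ ((cA.ge _ _).le _ _),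
    h.trans _ _ ((cA.ge _ _).ge _ _), h.trans _ _ ((hK.image _).add (CC.tri _ _ _)),
    hp _ b M w ((cA'.ge _ _).eq _ _) d.b_ne (fun x hx => hx.2),
    hp _ a (3 * M) v ((cA'.le _ _).eq _ _) d.a_ne (fun x hx => hx.2),
    hp _ a (3 * M) (v + w) ((cA'.ge _ _).eq _ _) d.a_ne (fun x hx => hx.2)] at c3
  have l1 := h.tri_linear hp hK d (R := 4 * M + 1) (by linarith)
  have l2 := h.tri_linear hp hK d (R := 4 * M) (by linarith)
  push_cast at l1 l2
  rw [← hA'] at l1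
  rw [← hA] at l2
  linear_combination l2 - l1 + c3 - c1

end Prisms
end Schneider

/-! ### Planar bodies are generated by triangles -/

namespace Schneider
open Set

section Planar
variable {V : Type*} [NormedAddCommGroup V] [NormedSpace ℝ V] [FiniteDimensional ℝ V]

/-- A nonempty compact convex subset of a line is a segment. -/
theorem CC.eq_seg {A : Set V} (hA : CC A) (hne : A.Nonempty) {x₀ u : V}
    (h : ∀ x ∈ A, ∃ t : ℝ, x = x₀ + t • u) :
    ∃ x ∈ A, ∃ r : ℝ, A = {x} + Schneider.seg (r • u) 1 := by
  by_cases hu : u = 0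
  · subst hu
    obtain ⟨x, hx⟩ := hne
    refine ⟨x, hx, 0, ?_⟩
    rw [smul_zero, seg_zero _ zero_le_one]
    obtain ⟨t, ht⟩ := h x hx
    ext y
    constructor
    · intro hy
      obtain ⟨s, hs⟩ := h y hy
      simp [hs, ht]
    · intro hy
      simp at hy
      rwa [hy]
  obtain ⟨ℓ, hℓ⟩ := Module.Projective.exists_dual_ne_zero ℝ hu
  obtain ⟨ℓ, hℓ⟩ : ∃ ℓ : V →ₗ[ℝ] ℝ, ℓ u = 1 := ⟨(ℓ u)⁻¹ • ℓ, by simp [hℓ]⟩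
  have hT : CC (ℓ '' A) := hA.image ℓ
  obtain ⟨p, q, hpq⟩ : ∃ p q, ℓ '' A = Icc p q :=
    ⟨_, _, eq_Icc_of_connected_compact ⟨hne.image _, hT.convex.isPreconnected⟩ hT.compact⟩
  have hpq' : p ≤ q := by
    have : (Icc p q).Nonempty := hpq ▸ hne.image _
    exact nonempty_Icc.1 this
  obtain ⟨x, hx, hxp⟩ : p ∈ ℓ '' A := hpq ▸ left_mem_Icc.2 hpq'
  have hline : ∀ y ∈ A, y = x + (ℓ y - p) • u := by
    intro y hy
    obtain ⟨t, ht⟩ := h x hx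
    obtain ⟨s, hs⟩ := h y hy
    have e1 : ℓ x = ℓ x₀ + t := by rw [ht]; simp [hℓ]
    have e2 : ℓ y = ℓ x₀ + s := by rw [hs]; simp [hℓ]
    rw [e2, ← hxp, e1, hs, ht]
    module
  refine ⟨x, hx, q - p, ?_⟩
  rw [seg_one_smul _ (sub_nonneg.2 hpq')]
  ext y
  rw [mem_singleton_add]
  constructor
  · intro hy
    have hm : ℓ y ∈ Icc p q := hpq ▸ mem_image_of_mem ℓ hy
    exact ⟨_, ⟨ℓ y - p, by linarith [hm.1], by linarith [hm.2], rfl⟩, hline y hy⟩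
  · rintro ⟨_, ⟨s, h0, h1, rfl⟩, rfl⟩
    obtain ⟨y, hy, hys⟩ : p + s ∈ ℓ '' A := hpq ▸ ⟨by linarith, by linarith⟩
    have := hline y hy
    rw [hys, add_sub_cancel_left] at this
    rwa [← this]

/-- Outer approximation of a compact convex set containing the origin by polytopes. -/
theorem exists_polytope {C : Set V} (hC : CC C) (h0 : (0 : V) ∈ C) {ε : ℝ} (hε : 0 < ε) :
    ∃ I : Finset (V →ₗ[ℝ] ℝ), C ⊆ {x | ∀ ν ∈ I, ν x ≤ 1} ∧
      ∀ x, (∀ ν ∈ I, ν x ≤ 1) → infDist x C < ε := by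
  classical
  have hproper : ProperSpace V := FiniteDimensional.proper ℝ V
  set S : Set V := {x | infDist x C = ε}
  have hS : IsCompact S := by
    refine (hC.compact.cthickening (r := 2 * ε)).of_isClosed_subset
      (_root_.isClosed_eq (continuous_infDist_pt C) continuous_const) fun x hx => ?_
    refine thickening_subset_cthickening _ _ ((mem_thickening_iff_infDist_lt ⟨0, h0⟩).2 ?_)
    have : infDist x C = ε := hx
    linarith
  have hsep : ∀ x ∈ S, ∃ ν : V →ₗ[ℝ] ℝ, (∀ y ∈ C, ν y ≤ 1) ∧ 1 < ν x := by
    intro x hx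
    have hxC : x ∉ C := fun hxC => by
      have : infDist x C = 0 := infDist_zero_of_mem hxC
      have h2 : infDist x C = ε := hx
      linarith
    obtain ⟨f, u, hf, hu⟩ := geometric_hahn_banach_closed_point hC.convex hC.compact.isClosed hxC
    have hu0 : 0 < u := by simpa using hf 0 h0
    refine ⟨u⁻¹ • (f : V →ₗ[ℝ] ℝ), fun y hy => ?_, ?_⟩
    · have := hf y hy
      simp only [LinearMap.smul_apply, ContinuousLinearMap.coe_coe, smul_eq_mul]
      rw [inv_mul_le_iff₀ hu0]; linarith
    · simp only [LinearMap.smul_apply, ContinuousLinearMap.coe_coe, smul_eq_mul]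
      rw [lt_inv_mul_iff₀ hu0]; linarith
  choose! ν hν1 hν2 using hsep
  obtain ⟨t, htS, ht⟩ := hS.elim_nhds_subcover (fun x => {y | 1 < ν x y}) fun x hx =>
    (isOpen_lt continuous_const (ν x).continuous_of_finiteDimensional).mem_nhds (hν2 x hx)
  refine ⟨t.image ν, fun y hy μ hμ => ?_, fun x hx => ?_⟩
  · obtain ⟨x, hx, rfl⟩ := Finset.mem_image.1 hμ
    exact hν1 x (htS x hx) y hy
  · by_contra hcon
    push Not at hcon
    -- on the segment from `0` to `x` some point has distance exactly `ε` from `C`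
    have hcont : ContinuousOn (fun r : ℝ => infDist (r • x) C) (Icc 0 1) :=
      ((continuous_infDist_pt C).comp (continuous_id.smul continuous_const)).continuousOn
    have := intermediate_value_Icc zero_le_one hcont
    simp only [zero_smul, one_smul, infDist_zero_of_mem h0] at this
    obtain ⟨r, ⟨hr0, hr1⟩, hr⟩ := this ⟨hε.le, hcon⟩
    have hmem := ht (show r • x ∈ S from hr)
    simp only [mem_iUnion] at hmem
    obtain ⟨y, hy, hlt⟩ := hmem
    have h1 := hx (ν y) (Finset.mem_image_of_mem _ hy)
    simp only [mem_ofPred_eq, map_smul, smul_eq_mul] at hlt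
    nlinarith

/-- Closed convex cones with apex at the origin. -/
structure IsCone (D : Set V) : Prop where
  closed : IsClosed D
  convex : Convex ℝ D
  zero : (0 : V) ∈ D
  smul : ∀ r : ℝ, 0 ≤ r → ∀ x ∈ D, r • x ∈ D

theorem IsCone.eq_zero_of_bounded {D : Set V} (hD : IsCone D) {ν : V →ₗ[ℝ] ℝ}
    (hb : IsCompact (D ∩ {x | ν x ≤ 1})) {x : V} (hx : x ∈ D) (hνx : ν x ≤ 0) : x = 0 := by
  by_contra hx0
  obtain ⟨M, hM⟩ := hb.isBounded.exists_norm_le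
  have hM0 : 0 ≤ M := by
    have := hM 0 ⟨hD.zero, by simp⟩
    rwa [norm_zero] at this
  have hn : 0 < ‖x‖ := norm_pos_iff.2 hx0
  have h1 := hM (((M + 1) / ‖x‖) • x) ⟨hD.smul _ (by positivity) x hx, by
    simp only [mem_ofPred_eq, map_smul, smul_eq_mul]
    have : 0 ≤ (M + 1) / ‖x‖ := by positivity
    nlinarith⟩
  rw [norm_smul, Real.norm_of_nonneg (by positivity), div_mul_cancel₀ _ hn.ne'] at h1
  linarith

/-- In the plane a bounded cone `D ∩ {ν ≤ 1}` is a (possibly degenerate) triangle. -/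
theorem IsCone.eq_tri (h2 : Module.finrank ℝ V = 2) {D : Set V} (hD : IsCone D)
    {ν : V →ₗ[ℝ] ℝ} (hb : IsCompact (D ∩ {x | ν x ≤ 1})) :
    ∃ v w : V, D ∩ {x | ν x ≤ 1} = tri v w 1 := by
  have hpos : ∀ x ∈ D, x ≠ 0 → 0 < ν x := fun x hx hx0 => by
    by_contra h
    exact hx0 (hD.eq_zero_of_bounded hb hx (not_lt.1 h))
  by_cases hD0 : ∀ x ∈ D, x = 0
  · refine ⟨0, 0, ?_⟩
    ext x
    constructor
    · rintro ⟨hx, -⟩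
      rw [hD0 x hx]; exact zero_mem_tri _ _ zero_le_one
    · rintro ⟨s, t, -, -, -, rfl⟩
      simp [hD.zero]
  push Not at hD0
  obtain ⟨x, hx, hx0⟩ := hD0
  have hνx := hpos x hx hx0
  have hν0 : ν ≠ 0 := by rintro rfl; simp at hνx
  have hsec : CC (D ∩ {x | ν x = 1}) := by
    refine ⟨hb.of_isClosed_subset (hD.closed.inter (isClosed_eq ν 1)) fun y hy => ⟨hy.1, ?_⟩,
      hD.convex.inter (convex_hyperplane ν.isLinear 1)⟩
    exact le_of_eq hy.2
  have hsn : (D ∩ {x | ν x = 1}).Nonempty :=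
    ⟨(ν x)⁻¹ • x, hD.smul _ (by positivity) x hx, by simp [hνx.ne']⟩
  obtain ⟨p₀, hp₀⟩ := hsn
  have hker : Module.finrank ℝ (LinearMap.ker ν) = 1 := by
    have := Module.Dual.finrank_ker_add_one_of_ne_zero (f := ν) hν0
    omega
  obtain ⟨⟨u, hu⟩, -, hspan⟩ := finrank_eq_one_iff'.1 hker
  obtain ⟨p, hp, r, hS⟩ := hsec.eq_seg ⟨p₀, hp₀⟩ (x₀ := p₀) (u := u) fun y hy => by
    obtain ⟨c, hc⟩ := hspan ⟨y - p₀, by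
      have h1 : ν y = 1 := hy.2
      have h2 : ν p₀ = 1 := hp₀.2
      simp [h1, h2]⟩
    refine ⟨c, ?_⟩
    have := congrArg Subtype.val hc
    simp only [SetLike.val_smul] at this
    rw [this]; abel
  refine ⟨p, r • u, ?_⟩
  have hνu : ν u = 0 := hu
  have hνp : ν p = 1 := hp.2
  ext y
  constructor
  · rintro ⟨hy, hy1⟩
    simp only [mem_ofPred_eq] at hy1
    by_cases hy0 : y = 0
    · rw [hy0]; exact zero_mem_tri _ _ zero_le_one
    have hνy := hpos y hy hy0
    have : (ν y)⁻¹ • y ∈ {p} + seg (r • u) 1 := by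
      rw [← hS]
      exact ⟨hD.smul _ (by positivity) y hy, by simp [hνy.ne']⟩
    obtain ⟨_, ⟨t, h0, h1, rfl⟩, hyt⟩ := mem_singleton_add.1 this
    refine ⟨ν y, ν y * t, by positivity, by nlinarith, hy1, ?_⟩
    have h3 : y = ν y • ((ν y)⁻¹ • y) := by rw [smul_smul, mul_inv_cancel₀ hνy.ne', one_smul]
    rw [h3, hyt]
    simp [hνu, hνp, smul_smul, mul_assoc]
  · rintro ⟨s, t, h0, h1, h2, rfl⟩
    rcases (h0.trans h1).eq_or_lt with hs | hs
    · have : t = 0 := by linarith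
      subst this
      subst hs
      simp [hD.zero]
    have : p + (t / s) • (r • u) ∈ D ∩ {x | ν x = 1} := by
      rw [hS]
      exact mem_singleton_add.2 ⟨_, ⟨t / s, by positivity, by rw [div_le_one hs]; exact h1, rfl⟩, rfl⟩
    have h3 := hD.smul s hs.le _ this.1
    rw [smul_add, smul_smul s, mul_div_cancel₀ _ hs.ne'] at h3
    exact ⟨h3, by simpa [hνu, hνp]⟩

/-- A continuous, translation invariant function on compact convex sets of the plane which is
additive under cutting by lines vanishes as soon as it vanishes on triangles. -/
theorem planar_zero (h2 : Module.finrank ℝ V = 2) {θ : Set V → ℂ}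
    (hcut : ∀ A (ℓ : V →ₗ[ℝ] ℝ) c, CC A → ℓ ≠ 0 →
      θ A = θ (A ∩ {x | ℓ x ≤ c}) + θ (A ∩ {x | c ≤ ℓ x}))
    (htrans : ∀ A x, CC A → θ ({x} + A) = θ A)
    (hcont : Continuous fun K : ConvexBody V => θ (K : Set V))
    (htri : ∀ v w, θ (tri v w 1) = 0) (K : ConvexBody V) : θ (K : Set V) = 0 := by
  classical
  have hcone : ∀ m : ℕ, ∀ (I : Finset (V →ₗ[ℝ] ℝ)) (D : Set V), I.card = m → IsCone D →
      IsCompact (D ∩ {x | ∀ ν ∈ I, ν x ≤ 1}) → θ (D ∩ {x | ∀ ν ∈ I, ν x ≤ 1}) = 0 := by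
    intro m
    induction m with
    | zero =>
      intro I D hI hD hc
      have e : D ∩ {x | ∀ ν ∈ I, ν x ≤ 1} = D ∩ {x | (0 : V →ₗ[ℝ] ℝ) x ≤ 1} := by
        rw [Finset.card_eq_zero.1 hI]; simp
      rw [e] at hc ⊢
      obtain ⟨v, w, h⟩ := hD.eq_tri h2 hc
      rw [h, htri]
    | succ m ih =>
      intro I D hI hD hc
      rcases Nat.eq_zero_or_pos m with rfl | hm
      · obtain ⟨ν, rfl⟩ := Finset.card_eq_one.1 hI
        simp only [Finset.mem_singleton, forall_eq] at hc ⊢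
        obtain ⟨v, w, h⟩ := hD.eq_tri h2 hc
        rw [h, htri]
      obtain ⟨μ, hμ, ν, hν, hne⟩ := Finset.one_lt_card.1 (show 1 < I.card by omega)
      have hconv : Convex ℝ {x | ∀ ν ∈ I, (ν : V →ₗ[ℝ] ℝ) x ≤ 1} := by
        have : {x | ∀ ν ∈ I, (ν : V →ₗ[ℝ] ℝ) x ≤ 1} = ⋂ ν ∈ I, {x | (ν : V →ₗ[ℝ] ℝ) x ≤ 1} := by
          ext x; simp
        rw [this]
        exact convex_iInter₂ fun ν _ => convex_halfSpace_le ν.isLinear 1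
      have hX : CC (D ∩ {x | ∀ ν ∈ I, ν x ≤ 1}) := ⟨hc, hD.convex.inter hconv⟩
      have aux : ∀ μ ∈ I, ∀ ν ∈ I, μ ≠ ν → θ (D ∩ {x | ∀ ν ∈ I, ν x ≤ 1} ∩
          {x | (μ - ν) x ≤ 0}) = 0 := by
        intro μ hμ ν hν hne
        have e : D ∩ {x | ∀ ν ∈ I, ν x ≤ 1} ∩ {x | (μ - ν) x ≤ 0} =
            (D ∩ {x | (μ - ν) x ≤ 0}) ∩ {x | ∀ κ ∈ I.erase μ, κ x ≤ 1} := by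
          ext x
          simp only [mem_inter_iff, mem_ofPred_eq, Finset.mem_erase, LinearMap.sub_apply]
          constructor
          · rintro ⟨⟨h1, h2⟩, h3⟩
            exact ⟨⟨h1, h3⟩, fun κ hκ => h2 κ hκ.2⟩
          · rintro ⟨⟨h1, h3⟩, h2⟩
            refine ⟨⟨h1, fun κ hκ => ?_⟩, h3⟩
            by_cases hκμ : κ = μ
            · have := h2 ν ⟨hne.symm, hν⟩
              rw [hκμ]; linarith
            · exact h2 κ ⟨hκμ, hκ⟩
        have hc' := (hX.le (μ - ν) 0).compact
        rw [e] at hc' ⊢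
        refine ih (I.erase μ) _ (by rw [Finset.card_erase_of_mem hμ]; omega) ?_ hc'
        refine ⟨hD.closed.inter (isClosed_le _ _),
          hD.convex.inter (convex_halfSpace_le (LinearMap.isLinear _) 0), ⟨hD.zero, by simp⟩, ?_⟩
        rintro r hr x ⟨hx, hx'⟩
        refine ⟨hD.smul r hr x hx, ?_⟩
        simp only [mem_ofPred_eq, map_smul, smul_eq_mul] at hx' ⊢
        exact mul_nonpos_of_nonneg_of_nonpos hr hx'
      rw [hcut _ (μ - ν) 0 hX (sub_ne_zero.2 hne), aux μ hμ ν hν hne, zero_add]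
      have := aux ν hν μ hμ hne.symm
      convert this using 3
      ext x
      simp
  -- it suffices to treat bodies containing the origin
  suffices H : ∀ K : ConvexBody V, (0 : V) ∈ (K : Set V) → θ (K : Set V) = 0 by
    obtain ⟨x, hx⟩ := K.nonempty
    have := H (((CC.singleton (-x)).add (CC.body K)).toBody
      ((singleton_nonempty _).add K.nonempty)) (mem_singleton_add.2 ⟨x, hx, by simp⟩)
    rwa [CC.coe_toBody, htrans _ _ (CC.body K)] at this
  intro K h0
  have happ : ∀ ε > 0, ∃ P : ConvexBody V, dist P K ≤ ε ∧ θ (P : Set V) = 0 := by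
    intro ε hε
    have hproper : ProperSpace V := FiniteDimensional.proper ℝ V
    obtain ⟨I, hI1, hI2⟩ := exists_polytope (CC.body K) h0 hε
    have hset : {x | ∀ ν ∈ I, (ν : V →ₗ[ℝ] ℝ) x ≤ 1} = ⋂ ν ∈ I, {x | (ν : V →ₗ[ℝ] ℝ) x ≤ 1} := by
      ext x; simp
    have hcl : IsClosed {x | ∀ ν ∈ I, (ν : V →ₗ[ℝ] ℝ) x ≤ 1} := by
      rw [hset]; exact isClosed_biInter fun ν _ => isClosed_le ν 1
    have hcv : Convex ℝ {x | ∀ ν ∈ I, (ν : V →ₗ[ℝ] ℝ) x ≤ 1} := by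
      rw [hset]; exact convex_iInter₂ fun ν _ => convex_halfSpace_le ν.isLinear 1
    have hcomp : IsCompact {x | ∀ ν ∈ I, (ν : V →ₗ[ℝ] ℝ) x ≤ 1} := by
      refine (K.isCompact.cthickening (r := ε)).of_isClosed_subset hcl fun x hx => ?_
      exact thickening_subset_cthickening _ _ ((mem_thickening_iff_infDist_lt ⟨0, h0⟩).2 (hI2 x hx))
    refine ⟨⟨_, hcv, hcomp, ⟨0, hI1 h0⟩⟩, dist_body_le hε.le (fun x hx => ?_)
      (fun x hx => ⟨x, hI1 hx, by simp [hε.le]⟩), ?_⟩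
    · obtain ⟨y, hy, hxy⟩ := (infDist_lt_iff K.nonempty).1 (hI2 x hx)
      exact ⟨y, hy, hxy.le⟩
    · have := hcone _ I univ rfl ⟨isClosed_univ, convex_univ, mem_univ _, fun _ _ _ _ => mem_univ _⟩
      simp only [univ_inter] at this
      exact this hcomp
  have hcl : IsClosed {P : ConvexBody V | θ (P : Set V) = 0} :=
    _root_.isClosed_eq hcont continuous_const
  have : K ∈ closure {P : ConvexBody V | θ (P : Set V) = 0} := by
    rw [Metric.mem_closure_iff]
    intro ε hε
    obtain ⟨P, hP, hP0⟩ := happ (ε / 2) (by positivity)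
    exact ⟨P, hP0, by rw [dist_comm]; linarith⟩
  rwa [hcl.closure_eq] at this

end Planar
end Schneider

/-! ### Support functions -/

namespace Schneider
open Set

section Support
variable {E : Type*} [NormedAddCommGroup E] [InnerProductSpace ℝ E] [FiniteDimensional ℝ E]

/-- The support function `x ↦ max {⟪v, x⟫ : v ∈ K}` of a convex body. -/
noncomputable def hs (K : ConvexBody E) (x : E) : ℝ := sSup ((fun v => inner ℝ v x) '' (K : Set E))

theorem isCompact_inner_image (K : ConvexBody E) (x : E) :
    IsCompact ((fun v => inner ℝ v x) '' (K : Set E)) :=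
  K.isCompact.image (by fun_prop)

theorem inner_le_hs (K : ConvexBody E) (x : E) {v : E} (hv : v ∈ (K : Set E)) :
    inner ℝ v x ≤ hs K x :=
  le_csSup (isCompact_inner_image K x).bddAbove ⟨v, hv, rfl⟩

theorem exists_hs_eq (K : ConvexBody E) (x : E) : ∃ v ∈ (K : Set E), inner ℝ v x = hs K x := by
  obtain ⟨v, hv, h⟩ := (isCompact_inner_image K x).sSup_mem (K.nonempty.image _)
  exact ⟨v, hv, h⟩

theorem hs_le {K : ConvexBody E} {x : E} {c : ℝ} (h : ∀ v ∈ (K : Set E), inner ℝ v x ≤ c) :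
    hs K x ≤ c := by
  obtain ⟨v, hv, h'⟩ := exists_hs_eq K x
  rw [← h']; exact h v hv

theorem hs_eq {K : ConvexBody E} {x : E} {c : ℝ} (h : ∀ v ∈ (K : Set E), inner ℝ v x ≤ c)
    (h' : ∃ v ∈ (K : Set E), inner ℝ v x = c) : hs K x = c := by
  obtain ⟨v, hv, rfl⟩ := h'
  exact le_antisymm (hs_le h) (inner_le_hs K x hv)

theorem hs_add (K L : ConvexBody E) (x : E) : hs (K + L) x = hs K x + hs L x := by
  refine hs_eq ?_ ?_
  · rw [ConvexBody.coe_add]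
    rintro _ ⟨k, hk, l, hl, rfl⟩
    simp only [inner_add_left]
    exact add_le_add (inner_le_hs K x hk) (inner_le_hs L x hl)
  · obtain ⟨k, hk, h1⟩ := exists_hs_eq K x
    obtain ⟨l, hl, h2⟩ := exists_hs_eq L x
    exact ⟨k + l, by rw [ConvexBody.coe_add]; exact add_mem_add hk hl, by
      rw [inner_add_left, h1, h2]⟩

theorem hs_smul (t : ℝ≥0) (K : ConvexBody E) (x : E) : hs (t • K) x = t * hs K x := by
  refine hs_eq ?_ ?_
  · rw [ConvexBody.coe_smul']
    rintro _ ⟨k, hk, rfl⟩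
    simp only [real_inner_smul_left]
    exact mul_le_mul_of_nonneg_left (inner_le_hs K x hk) t.2
  · obtain ⟨k, hk, h1⟩ := exists_hs_eq K x
    exact ⟨t • k, by rw [ConvexBody.coe_smul']; exact smul_mem_smul_set hk, by
      rw [NNReal.smul_def, real_inner_smul_left, h1]⟩

theorem hs_sub (K : ConvexBody E) (x y : E) : hs K (x + y) ≤ hs K x + hs K y :=
  hs_le fun v hv => by
    rw [inner_add_right]
    exact add_le_add (inner_le_hs K x hv) (inner_le_hs K y hv)

theorem hs_hom (K : ConvexBody E) {t : ℝ} (ht : 0 ≤ t) (x : E) : hs K (t • x) = t * hs K x := by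
  refine hs_eq (fun v hv => ?_) ?_
  · rw [real_inner_smul_right]
    exact mul_le_mul_of_nonneg_left (inner_le_hs K x hv) ht
  · obtain ⟨k, hk, h1⟩ := exists_hs_eq K x
    exact ⟨k, hk, by rw [real_inner_smul_right, h1]⟩

theorem exists_norm_bound (K : ConvexBody E) : ∃ M : ℝ, 0 < M ∧ ∀ v ∈ (K : Set E), ‖v‖ ≤ M := by
  obtain ⟨M, hM⟩ := K.isBounded.exists_norm_le
  exact ⟨max M 1, by positivity, fun v hv => (hM v hv).trans (le_max_left _ _)⟩

theorem hs_sub_le (K : ConvexBody E) {M : ℝ} (hM : ∀ v ∈ (K : Set E), ‖v‖ ≤ M) (x y : E) :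
    hs K x - hs K y ≤ M * ‖x - y‖ := by
  obtain ⟨v, hv, h⟩ := exists_hs_eq K x
  have h1 := inner_le_hs K y hv
  have h2 : inner ℝ v (x - y) ≤ ‖v‖ * ‖x - y‖ := real_inner_le_norm _ _
  rw [inner_sub_right] at h2
  have h3 : ‖v‖ * ‖x - y‖ ≤ M * ‖x - y‖ := mul_le_mul_of_nonneg_right (hM v hv) (norm_nonneg _)
  linarith

theorem abs_hs_sub_le (K : ConvexBody E) {M : ℝ} (hM : ∀ v ∈ (K : Set E), ‖v‖ ≤ M) (x y : E) :
    |hs K x - hs K y| ≤ M * ‖x - y‖ :=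
  abs_le.2 ⟨by have := hs_sub_le K hM y x; rw [norm_sub_rev] at this; linarith,
    hs_sub_le K hM x y⟩

theorem hs_zero (K : ConvexBody E) : hs K 0 = 0 := by
  have := hs_hom K le_rfl (0 : E)
  simpa using this

theorem abs_hs_le (K : ConvexBody E) {M : ℝ} (hM : ∀ v ∈ (K : Set E), ‖v‖ ≤ M) (x : E) :
    |hs K x| ≤ M * ‖x‖ := by
  simpa [hs_zero] using abs_hs_sub_le K hM x 0

theorem continuous_hs (K : ConvexBody E) : Continuous (hs K) := by
  obtain ⟨M, hM0, hM⟩ := exists_norm_bound K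
  exact (LipschitzWith.of_dist_le_mul (K := ⟨M, hM0.le⟩) fun x y => by
    rw [Real.dist_eq, dist_eq_norm]; exact abs_hs_sub_le K hM x y).continuous

/-- The support function restricted to the unit sphere. -/
noncomputable def hS (K : ConvexBody E) : C(sphere (0 : E) 1, ℝ) :=
  ⟨fun x => hs K x, (continuous_hs K).comp continuous_subtype_val⟩

@[simp] theorem hS_apply (K : ConvexBody E) (x : sphere (0 : E) 1) : hS K x = hs K x := rfl

theorem hS_add (K L : ConvexBody E) : hS (K + L) = hS K + hS L := by
  ext x; simp [hs_add]

theorem hS_smul (t : ℝ≥0) (K : ConvexBody E) : hS (t • K) = (t : ℝ) • hS K := by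
  ext x; simp [hs_smul]

/-- The Hausdorff distance is bounded by the distance of the support functions. -/
theorem dist_le_hS (K L : ConvexBody E) : dist K L ≤ ‖hS K - hS L‖ := by
  have key : ∀ K L : ConvexBody E, ∀ v ∈ (K : Set E), ∃ p ∈ (L : Set E),
      dist v p ≤ ‖hS K - hS L‖ := by
    intro K L v hv
    obtain ⟨p, hp, hmin⟩ := exists_norm_eq_iInf_of_complete_convex L.nonempty
      L.isClosed.isComplete L.convex v
    have hproj := (norm_eq_iInf_iff_real_inner_le_zero L.convex hp).1 hmin
    refine ⟨p, hp, ?_⟩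
    by_cases hvp : v = p
    · rw [hvp, dist_self]; positivity
    have hn : 0 < ‖v - p‖ := norm_pos_iff.2 (sub_ne_zero.2 hvp)
    set u : E := ‖v - p‖⁻¹ • (v - p) with hu
    have hun : ‖u‖ = 1 := by
      rw [hu, norm_smul, norm_inv, norm_norm, inv_mul_cancel₀ hn.ne']
    have h1 : hs L u ≤ inner ℝ p u := hs_le fun w hw => by
      have := hproj w hw
      have h2 : inner ℝ (w - p) u ≤ 0 := by
        rw [hu, real_inner_smul_right, real_inner_comm]
        exact mul_nonpos_of_nonneg_of_nonpos (by positivity) this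
      rw [inner_sub_left] at h2
      linarith
    have h2 := inner_le_hs K u hv
    have h3 : inner ℝ (v - p) u = ‖v - p‖ := by
      rw [hu, real_inner_smul_right, real_inner_self_eq_norm_sq]
      field_simp
    rw [inner_sub_left] at h3
    have h4 := (hS K - hS L).norm_coe_le_norm ⟨u, by simpa using hun⟩
    simp only [ContinuousMap.sub_apply, hS_apply, Real.norm_eq_abs] at h4
    have h5 := le_abs_self (hs K u - hs L u)
    rw [dist_eq_norm]
    linarith
  refine dist_body_le (norm_nonneg _) (key K L) fun x hx => ?_
  rw [norm_sub_rev]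
  exact key L K x hx

theorem hS_injective : Function.Injective (hS (E := E)) := fun K L h => by
  have := dist_le_hS K L
  rw [h, sub_self, norm_zero] at this
  exact dist_le_zero.1 this

/-- Every sublinear function is the support function of a convex body. -/
theorem exists_hs_of_sublinear {G : E → ℝ} (hhom : ∀ t : ℝ, 0 < t → ∀ x, G (t • x) = t * G x)
    (hsub : ∀ x y, G (x + y) ≤ G x + G y) {B : ℝ} (hB : ∀ x, G x ≤ B * ‖x‖) :
    ∃ M : ConvexBody E, ∀ x, hs M x = G x := by
  have hG0 : G 0 = 0 := by
    have := hhom 2 two_pos 0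
    rw [smul_zero] at this
    linarith
  have hrep : ∀ g : E →ₗ[ℝ] ℝ, ∃ v : E, ∀ x, inner ℝ v x = g x := fun g =>
    ⟨(InnerProductSpace.toDual ℝ E).symm (LinearMap.toContinuousLinearMap g), fun x => by
      rw [InnerProductSpace.toDual_symm_apply]; rfl⟩
  set M : Set E := {v | ∀ x, inner ℝ v x ≤ G x}
  have hMset : M = ⋂ x, {v | inner ℝ v x ≤ G x} := by ext v; simp [M]
  have hne : M.Nonempty := by
    obtain ⟨g, -, hg⟩ := exists_extension_of_le_sublinear (⊥ : E →ₗ.[ℝ] ℝ) G hhom hsub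
      (fun ⟨x, hx⟩ => by
        have hx0 : x = 0 := (Submodule.mem_bot ℝ).1 hx
        subst hx0
        exact le_of_eq (by
          rw [hG0]
          exact (LinearPMap.map_zero (⊥ : E →ₗ.[ℝ] ℝ))))
    obtain ⟨v, hv⟩ := hrep g
    exact ⟨v, fun x => (hv x).le.trans (hg x)⟩
  have hcl : IsClosed M := by
    rw [hMset]
    exact isClosed_iInter fun x => _root_.isClosed_le (by fun_prop) continuous_const
  have hcv : Convex ℝ M := by
    rw [hMset]
    refine convex_iInter fun x => ?_
    intro v hv w hw p q hp hq hpq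
    simp only [mem_ofPred_eq] at hv hw ⊢
    rw [inner_add_left, real_inner_smul_left, real_inner_smul_left]
    have : G x = p * G x + q * G x := by rw [← add_mul, hpq, one_mul]
    rw [this]
    gcongr
  have hbd : Bornology.IsBounded M := by
    rw [isBounded_iff_forall_norm_le]
    refine ⟨max B 0, fun v hv => ?_⟩
    by_cases hv0 : v = 0
    · rw [hv0, norm_zero]; exact le_max_right _ _
    refine le_trans ?_ (le_max_left _ _)
    have h1 := hv v
    have h2 := hB v
    rw [real_inner_self_eq_norm_sq] at h1
    have hn : 0 < ‖v‖ := norm_pos_iff.2 hv0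
    nlinarith
  have hproper : ProperSpace E := FiniteDimensional.proper ℝ E
  refine ⟨⟨M, hcv, isCompact_of_isClosed_isBounded hcl hbd, hne⟩, fun x => hs_eq (fun v hv => hv x) ?_⟩
  by_cases hx : x = 0
  · obtain ⟨v, hv⟩ := hne
    exact ⟨v, hv, by rw [hx, inner_zero_right, hG0]⟩
  obtain ⟨g, hgx, hg⟩ := exists_extension_of_le_sublinear
    (LinearPMap.mkSpanSingleton (K := ℝ) x (G x) hx) G hhom hsub (by
      rintro ⟨y, hy⟩
      obtain ⟨t, rfl⟩ := Submodule.mem_span_singleton.1 hy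
      refine (LinearPMap.mkSpanSingleton'_apply (R := ℝ) x (G x) _ t hy).le.trans ?_
      simp only [RingHom.id_apply, smul_eq_mul]
      rcases lt_trichotomy t 0 with ht | rfl | ht
      · have h1 := hhom (-t) (by linarith) x
        have h2 := hsub (t • x) ((-t) • x)
        rw [← add_smul, add_neg_cancel, zero_smul, hG0, h1] at h2
        linarith
      · simp [hG0]
      · rw [hhom t ht])
  obtain ⟨v, hv⟩ := hrep g
  refine ⟨v, fun y => (hv y).le.trans (hg y), ?_⟩
  rw [hv]
  have := hgx ⟨x, Submodule.mem_span_singleton_self x⟩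
  exact this.trans (LinearPMap.mkSpanSingleton_apply ℝ ℝ hx (G x))

end Support
end Schneider

/-! ### The closed cone of neutral functions -/

namespace Schneider
open Set Filter Topology

section Neutral
variable {E : Type*} [NormedAddCommGroup E] [InnerProductSpace ℝ E] [FiniteDimensional ℝ E]

/-- The cone of support functions, restricted to the sphere, of bodies `M` all of whose dilates
are neutral summands for `φ`. -/
def NN (φ : ConvexBody E → ℂ) : Set C(sphere (0 : E) 1, ℝ) :=
  {g | ∃ M, hS M = g ∧ ∀ (t : ℝ≥0) (K : ConvexBody E), φ (K + t • M) = φ K}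

variable {φ : ConvexBody E → ℂ}

theorem NN.add {f g : C(sphere (0 : E) 1, ℝ)} (hf : f ∈ NN φ) (hg : g ∈ NN φ) : f + g ∈ NN φ := by
  obtain ⟨M, rfl, hM⟩ := hf
  obtain ⟨N, rfl, hN⟩ := hg
  refine ⟨M + N, hS_add M N, fun t K => ?_⟩
  rw [smul_add, ← add_assoc, hN, hM]

theorem NN.smul {f : C(sphere (0 : E) 1, ℝ)} (hf : f ∈ NN φ) {c : ℝ} (hc : 0 ≤ c) :
    c • f ∈ NN φ := by
  obtain ⟨M, rfl, hM⟩ := hf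
  lift c to ℝ≥0 using hc
  refine ⟨c • M, hS_smul _ M, fun t K => ?_⟩
  rw [smul_smul, hM]

theorem NN.zero : (0 : C(sphere (0 : E) 1, ℝ)) ∈ NN φ := by
  refine ⟨0, ?_, fun t K => by rw [smul_zero, add_zero]⟩
  ext x
  simp only [hS_apply, ContinuousMap.zero_apply]
  exact hs_eq (fun v hv => by
    have : v = 0 := by simpa using hv
    rw [this, inner_zero_left]) ⟨0, by simp, inner_zero_left _⟩

/-- Neutral summands cancel: if the sum of a body and a neutral body is neutral, so is the body. -/
theorem NN.cancel {G : ConvexBody E} {f g : C(sphere (0 : E) 1, ℝ)} (hf : f ∈ NN φ)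
    (hg : g ∈ NN φ) (h : g = hS G + f) : hS G ∈ NN φ := by
  obtain ⟨M, rfl, hM⟩ := hf
  obtain ⟨N, rfl, hN⟩ := hg
  rw [← hS_add] at h
  refine ⟨G, rfl, fun t K => ?_⟩
  rw [← hM t, add_assoc, ← smul_add, ← hS_injective h, hN]

theorem hs_eq_hS (M : ConvexBody E) {x : E} (hx : x ≠ 0) :
    hs M x = ‖x‖ * hs M (‖x‖⁻¹ • x) := by
  rw [hs_hom M (by positivity), mul_inv_cancel_left₀ (norm_ne_zero_iff.2 hx)]

theorem mem_sphere_normalize {x : E} (hx : x ≠ 0) : ‖x‖⁻¹ • x ∈ sphere (0 : E) 1 := by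
  rw [mem_sphere_zero_iff_norm, norm_smul, norm_inv, norm_norm,
    inv_mul_cancel₀ (norm_ne_zero_iff.2 hx)]

/-- A uniform limit of support functions is a support function. -/
theorem exists_hS_of_tendsto {M : ℕ → ConvexBody E} {g : C(sphere (0 : E) 1, ℝ)}
    (h : Tendsto (fun k => hS (M k)) atTop (𝓝 g)) : ∃ N, hS N = g := by
  have hex : ∀ x : E, ∃ y : ℝ, Tendsto (fun k => hs (M k) x) atTop (𝓝 y) ∧ y ≤ ‖g‖ * ‖x‖ := by
    intro x
    by_cases hx : x = 0
    · subst hx; exact ⟨0, by simp [hs_zero], by simp⟩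
    refine ⟨‖x‖ * g ⟨_, mem_sphere_normalize hx⟩, ?_, ?_⟩
    · simp_rw [hs_eq_hS _ hx]
      exact (((ContinuousMap.evalCLM ℝ _).continuous.tendsto g).comp h).const_mul _
    · rw [mul_comm]
      exact mul_le_mul_of_nonneg_right ((le_abs_self _).trans (g.norm_coe_le_norm _))
        (norm_nonneg _)
  choose G hG hGB using hex
  obtain ⟨N, hN⟩ := exists_hs_of_sublinear (G := G) (B := ‖g‖)
    (fun t ht x => tendsto_nhds_unique (hG (t • x)) (by
      simp_rw [hs_hom _ ht.le]; exact (hG x).const_mul t))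
    (fun x y => le_of_tendsto_of_tendsto' (hG (x + y)) ((hG x).add (hG y)) fun k => hs_sub _ _ _)
    hGB
  refine ⟨N, ?_⟩
  ext x
  rw [hS_apply, hN]
  exact tendsto_nhds_unique (hG x) (((ContinuousMap.evalCLM ℝ x).continuous.tendsto g).comp h)

theorem NN.isClosed (hφ : Continuous φ) : IsClosed (NN φ) := by
  refine IsSeqClosed.isClosed fun g g₀ hg hlim => ?_
  choose M hM hMφ using hg
  obtain rfl : (fun k => hS (M k)) = g := funext hM
  obtain ⟨N, rfl⟩ := exists_hS_of_tendsto hlim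
  refine ⟨N, rfl, fun t K => ?_⟩
  have h1 : Tendsto (fun k => K + t • M k) atTop (𝓝 (K + t • N)) := by
    rw [tendsto_iff_dist_tendsto_zero]
    have h2 : Tendsto (fun k => (t : ℝ) * ‖hS (M k) - hS N‖) atTop (𝓝 0) := by
      simpa using (tendsto_iff_norm_sub_tendsto_zero.1 hlim).const_mul (t : ℝ)
    refine squeeze_zero (fun k => dist_nonneg) (fun k => (dist_le_hS _ _).trans (le_of_eq ?_)) h2
    rw [hS_add, hS_add, hS_smul, hS_smul, add_sub_add_left_eq_sub, ← smul_sub, norm_smul,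
      Real.norm_eq_abs, NNReal.abs_eq]
  have h3 := (hφ.tendsto _).comp h1
  have h4 : (φ ∘ fun k => K + t • M k) = fun _ => φ K := funext fun k => hMφ k t K
  rw [h4] at h3
  exact tendsto_nhds_unique h3 tendsto_const_nhds |>.symm ▸ rfl

theorem NN.convex : Convex ℝ (NN φ) := fun _ hf _ hg _ _ ha hb _ =>
  NN.add (NN.smul hf ha) (NN.smul hg hb)

/-- The cone of neutral support functions is stable under integration. -/
theorem NN.integral (hφ : Continuous φ) {X : Type*} [MeasurableSpace X] {μ : Measure X}
    {F : X → C(sphere (0 : E) 1, ℝ)} (hF : ∀ᵐ x ∂μ, F x ∈ NN φ) (hFi : Integrable F μ) :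
    ∫ x, F x ∂μ ∈ NN φ := by
  by_contra hn
  obtain ⟨f, u, h1, h2⟩ := geometric_hahn_banach_point_closed NN.convex (NN.isClosed hφ) hn
  have hu : u < 0 := by simpa using h2 0 NN.zero
  have hpos : ∀ g ∈ NN φ, 0 ≤ f g := by
    intro g hg
    by_contra hneg
    push Not at hneg
    have := h2 _ (NN.smul hg (div_nonneg_of_nonpos hu.le hneg.le))
    rw [map_smul, smul_eq_mul, div_mul_cancel₀ _ hneg.ne] at this
    exact lt_irrefl _ this
  have h3 : f (∫ x, F x ∂μ) = ∫ x, f (F x) ∂μ := (f.integral_comp_comm hFi).symm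
  have h4 : 0 ≤ ∫ x, f (F x) ∂μ := integral_nonneg_of_ae (hF.mono fun x hx => hpos _ hx)
  linarith

theorem integral_apply {X : Type*} [MeasurableSpace X] {μ : Measure X}
    {F : X → C(sphere (0 : E) 1, ℝ)} (hFi : Integrable F μ) (x : sphere (0 : E) 1) :
    (∫ q, F q ∂μ) x = ∫ q, F q x ∂μ :=
  ((ContinuousMap.evalCLM ℝ x).integral_comp_comm hFi).symm

end Neutral
end Schneider

/-! ### Smooth perturbations of the norm are support functions -/

namespace Schneider
open Set Filter Topology

section Tame

/-- The constant making `‖x‖ Re((u x/‖x‖)^k) + R_k ‖x‖` sublinear. -/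
def RR (k : ℕ) : ℝ := 1 + k + 2 * k ^ 2

theorem RR_le (k : ℕ) : RR k ≤ 4 ^ k := by
  have : ∀ k : ℕ, (1 + k + 2 * k ^ 2 : ℕ) ≤ 4 ^ k := by
    intro k
    induction k with
    | zero => norm_num
    | succ k ih =>
      rcases k with _ | k
      · norm_num
      · rw [pow_succ 4 (k + 1)]; nlinarith
  unfold RR
  exact_mod_cast this k

theorem RR_pos (k : ℕ) : 0 < RR k := by unfold RR; positivity

/-- Second order Taylor estimate for `z ↦ z ^ k` on the unit disc. -/
theorem norm_pow_sub_le {α γ : ℂ} (hα : ‖α‖ ≤ 1) (hγ : ‖γ‖ ≤ 1) (k : ℕ) :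
    ‖α ^ k - γ ^ k - k * γ ^ (k - 1) * (α - γ)‖ ≤ k ^ 2 * ‖α - γ‖ ^ 2 := by
  induction k with
  | zero => simp
  | succ k ih =>
    have e : α ^ (k + 1) - γ ^ (k + 1) - ((k + 1 : ℕ) : ℂ) * γ ^ (k + 1 - 1) * (α - γ) =
        α * (α ^ k - γ ^ k - k * γ ^ (k - 1) * (α - γ)) + k * γ ^ (k - 1) * (α - γ) ^ 2 := by
      rcases k with _ | k
      · simp
      · simp only [Nat.add_sub_cancel]; push_cast; ring
    rw [e]
    have h1 : ‖α * (α ^ k - γ ^ k - k * γ ^ (k - 1) * (α - γ))‖ ≤ k ^ 2 * ‖α - γ‖ ^ 2 := by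
      rw [norm_mul]
      calc _ ≤ 1 * ‖α ^ k - γ ^ k - k * γ ^ (k - 1) * (α - γ)‖ := by gcongr
        _ ≤ _ := by rw [one_mul]; exact ih
    have h2 : ‖(k : ℂ) * γ ^ (k - 1) * (α - γ) ^ 2‖ ≤ k * ‖α - γ‖ ^ 2 := by
      rw [norm_mul, norm_mul, norm_pow, norm_pow, Complex.norm_natCast]
      have : ‖γ‖ ^ (k - 1) ≤ 1 := pow_le_one₀ (norm_nonneg _) hγ
      calc _ ≤ (k : ℝ) * 1 * ‖α - γ‖ ^ 2 := by gcongr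
        _ = _ := by ring
    refine (norm_add_le _ _).trans ((add_le_add h1 h2).trans ?_)
    push_cast
    have : 0 ≤ ‖α - γ‖ ^ 2 := by positivity
    nlinarith [Nat.cast_nonneg (α := ℝ) k]

variable {X : Type*} [NormedAddCommGroup X] [InnerProductSpace ℝ X]

theorem norm_sub_normalize_sq {x s : X} (hx : x ≠ 0) (hs : s ≠ 0) :
    ‖x‖ * ‖‖x‖⁻¹ • x - ‖s‖⁻¹ • s‖ ^ 2 = 2 * ‖x‖ - 2 * (‖s‖⁻¹ * inner ℝ x s) := by
  have hx' : ‖x‖ ≠ 0 := norm_ne_zero_iff.2 hx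
  have hs' : ‖s‖ ≠ 0 := norm_ne_zero_iff.2 hs
  rw [norm_sub_sq_real, norm_smul, norm_smul, norm_inv, norm_inv, norm_norm, norm_norm,
    inv_mul_cancel₀ hx', inv_mul_cancel₀ hs', real_inner_smul_left, real_inner_smul_right]
  field_simp
  ring

/-- The function `‖x‖ (Re((u x/‖x‖)^k) + R_k)`. -/
noncomputable def tame (u : X →ₗ[ℝ] ℂ) (k : ℕ) (x : X) : ℝ :=
  ‖x‖ * (((u x / ‖x‖) ^ k).re + RR k)

theorem tame_zero (u : X →ₗ[ℝ] ℂ) (k : ℕ) : tame u k 0 = 0 := by simp [tame]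

theorem tame_hom (u : X →ₗ[ℝ] ℂ) (k : ℕ) {t : ℝ} (ht : 0 < t) (x : X) :
    tame u k (t • x) = t * tame u k x := by
  unfold tame
  have e : u (t • x) / (‖t • x‖ : ℝ) = u x / ‖x‖ := by
    rw [map_smul, norm_smul, Real.norm_eq_abs, abs_of_pos ht, Complex.real_smul]
    push_cast
    exact mul_div_mul_left _ _ (by exact_mod_cast ht.ne')
  rw [e, norm_smul, Real.norm_eq_abs, abs_of_pos ht, mul_assoc]

theorem norm_div_le {u : X →ₗ[ℝ] ℂ} (hu : ∀ x, ‖u x‖ ≤ ‖x‖) (x : X) :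
    ‖u x / (‖x‖ : ℝ)‖ ≤ 1 := by
  rw [norm_div, Complex.norm_real, norm_norm]
  exact div_le_one_of_le₀ (hu x) (norm_nonneg _)

theorem abs_re_le {u : X →ₗ[ℝ] ℂ} (hu : ∀ x, ‖u x‖ ≤ ‖x‖) (k : ℕ) (x : X) :
    |((u x / (‖x‖ : ℝ)) ^ k).re| ≤ 1 := by
  refine (Complex.abs_re_le_norm _).trans ?_
  rw [norm_pow]
  exact pow_le_one₀ (norm_nonneg _) (norm_div_le hu x)

theorem tame_nonneg {u : X →ₗ[ℝ] ℂ} (hu : ∀ x, ‖u x‖ ≤ ‖x‖) (k : ℕ) (x : X) :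
    0 ≤ tame u k x := by
  refine mul_nonneg (norm_nonneg _) ?_
  have h1 := abs_le.1 (abs_re_le hu k x)
  have h2 : 1 ≤ RR k := by unfold RR; nlinarith [Nat.cast_nonneg (α := ℝ) k, sq_nonneg (k : ℝ)]
  linarith

/-- Subadditivity: the convexity of the norm, multiplied by the large constant `RR k`, outweighs the
second-order variation of the homogeneous term. -/
theorem tame_add_le {u : X →ₗ[ℝ] ℂ} (hu : ∀ x, ‖u x‖ ≤ ‖x‖) (k : ℕ) (x y : X) :
    tame u k (x + y) ≤ tame u k x + tame u k y := by
  by_cases hx : x = 0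
  · simp [hx, tame_zero]
  by_cases hy : y = 0
  · simp [hy, tame_zero]
  by_cases hs : x + y = 0
  · rw [hs, tame_zero]
    exact add_nonneg (tame_nonneg hu k x) (tame_nonneg hu k y)
  set s := x + y with hsdef
  have hx' : (‖x‖ : ℂ) ≠ 0 := by exact_mod_cast norm_ne_zero_iff.2 hx
  have hy' : (‖y‖ : ℂ) ≠ 0 := by exact_mod_cast norm_ne_zero_iff.2 hy
  have hs' : (‖s‖ : ℂ) ≠ 0 := by exact_mod_cast norm_ne_zero_iff.2 hs
  set D : ℝ := ‖x‖ + ‖y‖ - ‖s‖ with hD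
  have hD0 : 0 ≤ D := by have := norm_add_le x y; linarith
  unfold tame
  set a := u x / (‖x‖ : ℝ) with ha
  set b := u y / (‖y‖ : ℝ) with hb
  set c := u s / (‖s‖ : ℝ) with hc
  have hdiff : ∀ z : X, ‖u z / (‖z‖ : ℝ) - c‖ ≤ ‖‖z‖⁻¹ • z - ‖s‖⁻¹ • s‖ := by
    intro z
    have : u z / (‖z‖ : ℝ) - c = u (‖z‖⁻¹ • z - ‖s‖⁻¹ • s) := by
      rw [map_sub, map_smul, map_smul, Complex.real_smul, Complex.real_smul, hc]
      push_cast
      ring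
    rw [this]; exact hu _
  have hsum : ‖x‖ * ‖a - c‖ ^ 2 + ‖y‖ * ‖b - c‖ ^ 2 ≤ 2 * D := by
    calc _ ≤ ‖x‖ * ‖‖x‖⁻¹ • x - ‖s‖⁻¹ • s‖ ^ 2 + ‖y‖ * ‖‖y‖⁻¹ • y - ‖s‖⁻¹ • s‖ ^ 2 := by
          gcongr
          · exact hdiff x
          · exact hdiff y
      _ = 2 * D := by
          rw [norm_sub_normalize_sq hx hs, norm_sub_normalize_sq hy hs]
          have : inner ℝ x s + inner ℝ y s = ‖s‖ ^ 2 := by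
            rw [← inner_add_left, ← hsdef, real_inner_self_eq_norm_sq]
          have h2 : ‖s‖⁻¹ * inner ℝ x s + ‖s‖⁻¹ * inner ℝ y s = ‖s‖ := by
            rw [← mul_add, this]
            have := norm_ne_zero_iff.2 hs
            field_simp
          linarith
  have hlin : (‖x‖ : ℂ) * a + ‖y‖ * b = ‖s‖ * c := by
    rw [ha, hb, hc, mul_div_cancel₀ _ hx', mul_div_cancel₀ _ hy', mul_div_cancel₀ _ hs', hsdef,
      map_add]
  have hca : ‖c‖ ≤ 1 := norm_div_le hu s
  have hEa := norm_pow_sub_le (norm_div_le hu x) hca k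
  have hEb := norm_pow_sub_le (norm_div_le hu y) hca k
  rw [← ha] at hEa
  rw [← hb] at hEb
  set Ea := a ^ k - c ^ k - k * c ^ (k - 1) * (a - c) with hEad
  set Eb := b ^ k - c ^ k - k * c ^ (k - 1) * (b - c) with hEbd
  have hkc : (k : ℂ) * c ^ (k - 1) * c = k * c ^ k := by
    rcases k with _ | k
    · simp
    · simp [pow_succ, mul_assoc]
  have main : (‖x‖ : ℂ) * a ^ k + ‖y‖ * b ^ k - ‖s‖ * c ^ k =
      D * c ^ k - k * (D * c ^ k) + (‖x‖ * Ea + ‖y‖ * Eb) := by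
    have : (D : ℂ) = ‖x‖ + ‖y‖ - ‖s‖ := by rw [hD]; push_cast; ring
    rw [hEad, hEbd, this]
    linear_combination (k * c ^ (k - 1)) * hlin - (‖x‖ + ‖y‖ - ‖s‖ : ℂ) * hkc
  have hck : ‖c ^ k‖ ≤ 1 := by rw [norm_pow]; exact pow_le_one₀ (norm_nonneg _) hca
  have hbound : ‖(D * c ^ k - k * (D * c ^ k) + (‖x‖ * Ea + ‖y‖ * Eb) : ℂ)‖ ≤ RR k * D := by
    have n1 : ‖(D * c ^ k : ℂ)‖ ≤ D := by
      rw [norm_mul, Complex.norm_real, Real.norm_eq_abs, abs_of_nonneg hD0]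
      nlinarith
    have n2 : ‖(k * (D * c ^ k) : ℂ)‖ ≤ k * D := by
      rw [norm_mul, Complex.norm_natCast]; gcongr
    have n3 : ‖(‖x‖ * Ea : ℂ)‖ ≤ k ^ 2 * (‖x‖ * ‖a - c‖ ^ 2) := by
      rw [norm_mul, Complex.norm_real, norm_norm]
      calc _ ≤ ‖x‖ * (k ^ 2 * ‖a - c‖ ^ 2) := by gcongr
        _ = _ := by ring
    have n4 : ‖(‖y‖ * Eb : ℂ)‖ ≤ k ^ 2 * (‖y‖ * ‖b - c‖ ^ 2) := by
      rw [norm_mul, Complex.norm_real, norm_norm]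
      calc _ ≤ ‖y‖ * (k ^ 2 * ‖b - c‖ ^ 2) := by gcongr
        _ = _ := by ring
    have n5 : (k : ℝ) ^ 2 * (‖x‖ * ‖a - c‖ ^ 2) + k ^ 2 * (‖y‖ * ‖b - c‖ ^ 2) ≤ k ^ 2 * (2 * D) := by
      rw [← mul_add]; gcongr
    have t1 := norm_add_le (D * c ^ k - k * (D * c ^ k) : ℂ) (‖x‖ * Ea + ‖y‖ * Eb)
    have t2 := norm_sub_le (D * c ^ k : ℂ) (k * (D * c ^ k))
    have t3 := norm_add_le (‖x‖ * Ea : ℂ) (‖y‖ * Eb)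
    unfold RR
    linarith
  rw [← main] at hbound
  have hre := (abs_le.1 ((Complex.abs_re_le_norm _).trans hbound)).1
  simp only [Complex.sub_re, Complex.add_re, Complex.re_ofReal_mul] at hre
  have : RR k * D = RR k * ‖x‖ + RR k * ‖y‖ - RR k * ‖s‖ := by rw [hD]; ring
  linarith

theorem tame_le {u : X →ₗ[ℝ] ℂ} (hu : ∀ x, ‖u x‖ ≤ ‖x‖) (k : ℕ) (x : X) :
    tame u k x ≤ (1 + RR k) * ‖x‖ := by
  unfold tame
  rw [mul_comm]
  have := (abs_le.1 (abs_re_le hu k x)).2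
  gcongr

theorem exists_hs_tame [FiniteDimensional ℝ X] {u : X →ₗ[ℝ] ℂ} (hu : ∀ x, ‖u x‖ ≤ ‖x‖) (k : ℕ) :
    ∃ M : ConvexBody X, ∀ x, hs M x = tame u k x :=
  exists_hs_of_sublinear (fun _ ht x => tame_hom u k ht x) (tame_add_le hu k) (tame_le hu k)

end Tame
end Schneider

/-! ### Averaging over planes -/

namespace Schneider
open Set Filter Topology

section Average
open ComplexConjugate

/-- `|y| (y/|y|)^k`. -/
noncomputable def mk (k : ℕ) (y : ℂ) : ℂ := ‖y‖ * (y / ‖y‖) ^ k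

theorem norm_mk_le (k : ℕ) (y : ℂ) : ‖mk k y‖ ≤ ‖y‖ := by
  unfold mk
  rw [norm_mul, norm_pow, norm_div, Complex.norm_real, norm_norm]
  exact mul_le_of_le_one_right (norm_nonneg _)
    (pow_le_one₀ (by positivity) (div_self_le_one _))

theorem continuous_mk (k : ℕ) : Continuous (mk k) := by
  rw [continuous_iff_continuousAt]
  intro y
  by_cases hy : y = 0
  · subst hy
    have h0 : mk k 0 = 0 := by simp [mk]
    rw [ContinuousAt, h0]
    exact squeeze_zero_norm (norm_mk_le k) (by simpa using (continuous_norm (E := ℂ)).tendsto 0)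
  · unfold mk
    have : (‖y‖ : ℂ) ≠ 0 := by exact_mod_cast norm_ne_zero_iff.2 hy
    fun_prop (disch := assumption)

theorem conj_pow_mul_mk (k : ℕ) (y : ℂ) : conj y ^ k * mk k y = ((‖y‖ ^ (k + 1) : ℝ) : ℂ) := by
  by_cases hy : y = 0
  · simp [hy, mk]
  have : (‖y‖ : ℂ) ≠ 0 := by exact_mod_cast norm_ne_zero_iff.2 hy
  unfold mk
  have h1 : conj y * y = (‖y‖ : ℂ) ^ 2 := Complex.conj_mul' y
  calc _ = ‖y‖ * (conj y * y) ^ k / ‖y‖ ^ k := by rw [div_pow, mul_pow]; ring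
    _ = _ := by rw [h1]; push_cast; field_simp; ring

variable {E : Type*} [NormedAddCommGroup E] [InnerProductSpace ℝ E] [FiniteDimensional ℝ E]
variable {W : Type*} [NormedAddCommGroup W] [InnerProductSpace ℂ W] [FiniteDimensional ℂ W]
  [MeasurableSpace W] [BorelSpace W]

/-- The unitary map `ζ ↦ ω ζ + (1 - ω) ⟪e, ζ⟫ e`, which fixes `e` and multiplies its orthogonal
complement by `ω`. -/
noncomputable def rho (e : W) (ω : ℂ) : W →ₗ[ℂ] W :=
  ω • LinearMap.id + (1 - ω) • ((innerSL ℂ e : W →ₗ[ℂ] ℂ).smulRight e)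

theorem rho_apply (e : W) (ω : ℂ) (ζ : W) : rho e ω ζ = ω • ζ + ((1 - ω) * inner ℂ e ζ) • e := by
  simp [rho, smul_smul]

theorem norm_rho {e : W} (he : ‖e‖ = 1) {ω : ℂ} (hω : ‖ω‖ = 1) (ζ : W) : ‖rho e ω ζ‖ = ‖ζ‖ := by
  have hω' : conj ω * ω = 1 := by rw [Complex.conj_mul', hω]; simp
  have hee : inner ℂ e e = (1 : ℂ) := by rw [inner_self_eq_norm_sq_to_K, he]; simp
  have h : inner ℂ (rho e ω ζ) (rho e ω ζ) = inner ℂ ζ ζ := by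
    rw [rho_apply]
    simp only [inner_add_left, inner_add_right, inner_smul_left, inner_smul_right, hee, map_mul,
      map_sub, map_one]
    rw [inner_conj_symm]
    linear_combination (inner ℂ ζ ζ - inner ℂ ζ e * inner ℂ e ζ) * hω'
  rw [inner_self_eq_norm_sq_to_K, inner_self_eq_norm_sq_to_K] at h
  have h' : ‖rho e ω ζ‖ ^ 2 = ‖ζ‖ ^ 2 := by exact_mod_cast h
  exact (pow_left_inj₀ (norm_nonneg _) (norm_nonneg _) two_ne_zero).1 h'

/-- `rho` as a real isometry. -/
noncomputable def rhoE {e : W} (he : ‖e‖ = 1) {ω : ℂ} (hω : ‖ω‖ = 1) : W ≃ₗᵢ[ℝ] W :=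
  LinearIsometry.toLinearIsometryEquiv
    ⟨(rho e ω).restrictScalars ℝ, fun ζ => norm_rho he hω ζ⟩ rfl

theorem rhoE_apply {e : W} (he : ‖e‖ = 1) {ω : ℂ} (hω : ‖ω‖ = 1) (ζ : W) :
    rhoE he hω ζ = rho e ω ζ := rfl

variable (μ : Measure W) [μ.IsAddHaarMeasure]

theorem measurePreserving_isometry (f : W ≃ₗᵢ[ℝ] W) : MeasurePreserving f μ μ := by
  refine ⟨f.continuous.measurable, Measure.ext fun s hs => ?_⟩
  rw [Measure.map_apply f.continuous.measurable hs]
  have h := fun s => μ.addHaar_preimage_linearEquiv f.toLinearEquiv s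
  have h1 := h (closedBall 0 1)
  have e : (f.toLinearEquiv : W → W) ⁻¹' closedBall 0 1 = closedBall 0 1 := by
    ext ζ; simp
  have hpos : μ (closedBall (0 : W) 1) ≠ 0 := (measure_closedBall_pos μ _ one_pos).ne'
  have hfin : μ (closedBall (0 : W) 1) ≠ ⊤ := measure_closedBall_lt_top.ne
  rw [e] at h1
  have hd : ENNReal.ofReal |LinearMap.det (f.toLinearEquiv.symm : W →ₗ[ℝ] W)| = 1 := by
    have h2 : ENNReal.ofReal |LinearMap.det (f.toLinearEquiv.symm : W →ₗ[ℝ] W)| *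
        μ (closedBall (0 : W) 1) = 1 * μ (closedBall (0 : W) 1) := by rw [one_mul]; exact h1.symm
    exact (ENNReal.mul_left_inj hpos hfin).1 h2
  have := h s
  rw [hd, one_mul] at this
  exact this

theorem integral_ball_rho {e : W} (he : ‖e‖ = 1) {ω : ℂ} (hω : ‖ω‖ = 1) {F : Type*}
    [NormedAddCommGroup F] [NormedSpace ℝ F] (f : W → F) :
    ∫ ζ in closedBall (0 : W) 1, f (rho e ω ζ) ∂μ = ∫ ζ in closedBall (0 : W) 1, f ζ ∂μ := by
  have h := (measurePreserving_isometry μ (rhoE he hω)).setIntegral_preimage_emb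
    (rhoE he hω).toHomeomorph.measurableEmbedding f (closedBall (0 : W) 1)
  rw [← h]
  have : (rhoE he hω : W → W) ⁻¹' closedBall (0 : W) 1 = closedBall (0 : W) 1 := by
    ext ζ; simp
  rw [this]
  rfl

variable (ι : E →ₗ[ℝ] W) 

theorem norm_iota (hι : ∀ x y, inner ℂ (ι x) (ι y) = ((inner ℝ x y : ℝ) : ℂ)) (x : E) :
    ‖ι x‖ = ‖x‖ := by
  have h := hι x x
  rw [inner_self_eq_norm_sq_to_K, real_inner_self_eq_norm_sq] at h
  have h' : ‖ι x‖ ^ 2 = ‖x‖ ^ 2 := Complex.ofReal_injective (by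
    rw [← h, Complex.ofReal_pow]; rfl)
  exact (pow_left_inj₀ (norm_nonneg _) (norm_nonneg _) two_ne_zero).1 h'

/-- Averaging `conj ⟪q, ζ⟫^k |⟪x, ζ⟫| (⟪x, ζ⟫/|⟪x, ζ⟫|)^k` over the complex ball isolates the
power `⟪q, x⟫^k`. -/
theorem integral_conj_pow_mul_mk (hι : ∀ x y, inner ℂ (ι x) (ι y) = ((inner ℝ x y : ℝ) : ℂ))
    {x : E} (hx : ‖x‖ = 1) (q : E) (k : ℕ) :
    ∫ ζ in closedBall (0 : W) 1, conj (inner ℂ (ι q) ζ) ^ k * mk k (inner ℂ (ι x) ζ) ∂μ =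
      (((inner ℝ q x) ^ k * ∫ ζ in closedBall (0 : W) 1, ‖inner ℂ (ι x) ζ‖ ^ (k + 1) ∂μ : ℝ) : ℂ) := by
  set a : ℝ := inner ℝ q x with ha
  have he : ‖ι x‖ = 1 := by rw [norm_iota ι hι, hx]
  have hee : inner ℂ (ι x) (ι x) = (1 : ℂ) := by rw [inner_self_eq_norm_sq_to_K, he]; simp
  set s : W → ℂ := fun ζ => inner ℂ (ι x) ζ with hs
  set d : W → ℂ := fun ζ => inner ℂ (ι q) ζ - a * inner ℂ (ι x) ζ with hd
  have hsc : Continuous s := by fun_prop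
  have hdc : Continuous d := by fun_prop
  have hmk := continuous_mk k
  have hFint : ∀ l, IntegrableOn (fun ζ => (conj (d ζ) ^ l * (a * conj (s ζ)) ^ (k - l)) *
      (k.choose l : ℂ) * mk k (s ζ)) (closedBall (0 : W) 1) μ := fun l => by
    refine ContinuousOn.integrableOn_compact (isCompact_closedBall _ _) ?_
    exact Continuous.continuousOn (by
      have := hmk.comp hsc
      simp only [Function.comp_def] at this
      have h2 : Continuous fun ζ => conj (d ζ) := Complex.continuous_conj.comp hdc
      have h3 : Continuous fun ζ => conj (s ζ) := Complex.continuous_conj.comp hsc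
      fun_prop)
  have hexp : ∀ ζ, conj (inner ℂ (ι q) ζ) ^ k * mk k (inner ℂ (ι x) ζ) =
      ∑ l ∈ Finset.range (k + 1), (conj (d ζ) ^ l * (a * conj (s ζ)) ^ (k - l)) *
      (k.choose l : ℂ) * mk k (s ζ) := fun ζ => by
    rw [← Finset.sum_mul, ← add_pow]
    congr 2
    simp only [hd, hs, map_sub, map_mul, Complex.conj_ofReal]
    ring
  simp_rw [hexp]
  rw [integral_finsetSum _ fun l _ => hFint l, Finset.sum_eq_single 0]
  · simp only [pow_zero, one_mul, Nat.sub_zero, Nat.choose_zero_right, Nat.cast_one, mul_one,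
      mul_pow, mul_assoc, conj_pow_mul_mk]
    push_cast
    rw [integral_const_mul]
    congr 1
    have := integral_ofReal (𝕜 := ℂ) (μ := μ.restrict (closedBall 0 1))
      (f := fun ζ => ‖inner ℂ (ι x) ζ‖ ^ (k + 1))
    rw [← Complex.coe_algebraMap] at *
    simpa using this
  · intro l _ hl
    -- rotating the complement of `x` by `ω` with `ω ^ l = -1` changes the sign of the integral
    set ω : ℂ := Complex.exp ((Real.pi / l : ℝ) * Complex.I) with hω
    have hω1 : ‖ω‖ = 1 := Complex.norm_exp_ofReal_mul_I _
    have hωl : ω ^ l = -1 := by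
      rw [hω, ← Complex.exp_nat_mul, ← Complex.exp_pi_mul_I]
      congr 1
      push_cast
      have : (l : ℂ) ≠ 0 := by exact_mod_cast hl
      field_simp
    have hsr : ∀ ζ, s (rho (ι x) ω ζ) = s ζ := fun ζ => by
      simp only [hs, rho_apply, inner_add_right, inner_smul_right, hee]; ring
    have hdr : ∀ ζ, d (rho (ι x) ω ζ) = ω * d ζ := fun ζ => by
      simp only [hd, rho_apply, inner_add_right, inner_smul_right, hee, hι, ← ha]; ring
    have key := integral_ball_rho μ he hω1 (fun ζ =>
      (conj (d ζ) ^ l * (a * conj (s ζ)) ^ (k - l)) * (k.choose l : ℂ) * mk k (s ζ))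
    simp only [hsr, hdr, map_mul, mul_pow, ← map_pow, hωl] at key
    simp only [map_neg, map_one, one_mul, neg_mul, integral_neg] at key
    simp only [map_pow] at key
    have := self_eq_neg.1 key.symm
    simpa only [mul_pow] using this
  · intro h; simp at h

theorem integral_norm_pow_eq (hι : ∀ x y, inner ℂ (ι x) (ι y) = ((inner ℝ x y : ℝ) : ℂ))
    {x y : E} (hx : ‖x‖ = 1) (hy : ‖y‖ = 1) (k : ℕ) :
    ∫ ζ in closedBall (0 : W) 1, ‖inner ℂ (ι x) ζ‖ ^ k ∂μ =
      ∫ ζ in closedBall (0 : W) 1, ‖inner ℂ (ι y) ζ‖ ^ k ∂μ := by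
  by_cases hxy : x = y
  · rw [hxy]
  have hn : ‖x - y‖ ≠ 0 := norm_ne_zero_iff.2 (sub_ne_zero.2 hxy)
  set u : E := ‖x - y‖⁻¹ • (x - y) with hu
  have hu1 : ‖ι u‖ = 1 := by
    rw [norm_iota ι hι, hu, norm_smul, norm_inv, norm_norm, inv_mul_cancel₀ hn]
  rw [← integral_ball_rho μ hu1 (ω := -1) (by simp) (fun ζ => ‖inner ℂ (ι x) ζ‖ ^ k)]
  congr 1
  ext ζ
  congr 1
  have h2 : 2 * inner ℝ x (x - y) = ‖x - y‖ ^ 2 := by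
    rw [norm_sub_sq_real, hx, hy, inner_sub_right, real_inner_self_eq_norm_sq, hx]; ring
  have h3 : ((2 * inner ℝ x (x - y) : ℝ) : ℂ) = ((‖x - y‖ ^ 2 : ℝ) : ℂ) := by rw [h2]
  push_cast at h3
  have hn' : (‖x - y‖ : ℂ) ≠ 0 := by exact_mod_cast hn
  have : inner ℂ (ι x) (rho (ι u) (-1) ζ) = -inner ℂ (ι y) ζ := by
    rw [rho_apply, inner_add_right, inner_smul_right, inner_smul_right, hι, hu,
      real_inner_smul_right]
    have e : ι (‖x - y‖⁻¹ • (x - y)) = ((‖x - y‖⁻¹ : ℝ) : ℂ) • (ι x - ι y) := by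
      rw [map_smul, map_sub]; rfl
    rw [e, inner_smul_left, Complex.conj_ofReal, inner_sub_left]
    push_cast
    field_simp
    linear_combination (inner ℂ (ι x) ζ - inner ℂ (ι y) ζ) * h3
  rw [this, norm_neg]

theorem integral_norm_pow_pos (hι : ∀ x y, inner ℂ (ι x) (ι y) = ((inner ℝ x y : ℝ) : ℂ))
    {x : E} (hx : ‖x‖ = 1) (k : ℕ) :
    0 < ∫ ζ in closedBall (0 : W) 1, ‖inner ℂ (ι x) ζ‖ ^ k ∂μ := by
  have hc : Continuous fun ζ : W => ‖inner ℂ (ι x) ζ‖ ^ k := by fun_prop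
  rw [setIntegral_pos_iff_support_of_nonneg_ae
    (Eventually.of_forall fun ζ => by simp only [Pi.zero_apply]; positivity)
    (hc.continuousOn.integrableOn_compact (isCompact_closedBall _ _))]
  refine lt_of_lt_of_le ?_ (measure_mono (inter_subset_inter_right _ ball_subset_closedBall))
  refine (hc.isOpen_support.inter isOpen_ball).measure_pos _ ⟨(1 / 2 : ℂ) • ι x, ?_, ?_⟩
  · have hee : inner ℂ (ι x) (ι x) = (1 : ℂ) := by
      rw [inner_self_eq_norm_sq_to_K, norm_iota ι hι, hx]; simp
    rw [Function.mem_support, inner_smul_right, hee]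
    simp
  · rw [mem_ball_zero_iff, norm_smul, norm_iota ι hι, hx]
    norm_num

end Average
end Schneider

/-! ### Exponentials -/

namespace Schneider
open Set Filter Topology

section Powers
open ComplexConjugate

variable {E : Type*} [NormedAddCommGroup E] [InnerProductSpace ℝ E] [FiniteDimensional ℝ E]
variable {W : Type*} [NormedAddCommGroup W] [InnerProductSpace ℂ W] [FiniteDimensional ℂ W]
  [MeasurableSpace W] [BorelSpace W]

/-- The linear image of a convex body. -/
def img {V V' : Type*} [NormedAddCommGroup V] [NormedSpace ℝ V] [FiniteDimensional ℝ V]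
    [NormedAddCommGroup V'] [NormedSpace ℝ V'] (L : V →ₗ[ℝ] V') (C : ConvexBody V) :
    ConvexBody V' :=
  ((CC.body C).image L).toBody (C.nonempty.image L)

theorem coe_img {V V' : Type*} [NormedAddCommGroup V] [NormedSpace ℝ V] [FiniteDimensional ℝ V]
    [NormedAddCommGroup V'] [NormedSpace ℝ V'] (L : V →ₗ[ℝ] V') (C : ConvexBody V) :
    (img L C : Set V') = L '' C := rfl

theorem hs_img {L : ℂ →ₗ[ℝ] E} {T : E →ₗ[ℝ] ℂ} (h : ∀ y x, inner ℝ (L y) x = inner ℝ y (T x))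
    (C : ConvexBody ℂ) (x : E) : hs (img L C) x = hs C (T x) := by
  refine hs_eq ?_ ?_
  · rw [coe_img]
    rintro _ ⟨y, hy, rfl⟩
    rw [h]; exact inner_le_hs C _ hy
  · obtain ⟨y, hy, e⟩ := exists_hs_eq C (T x)
    exact ⟨L y, mem_image_of_mem L hy, by rw [h, e]⟩

theorem smul_img (L : ℂ →ₗ[ℝ] E) (t : ℝ≥0) (C : ConvexBody ℂ) :
    t • img L C = img L (t • C) := by
  apply SetLike.coe_injective
  rw [ConvexBody.coe_smul', coe_img, coe_img, ConvexBody.coe_smul']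
  exact (image_smul_set (L.restrictScalars ℝ≥0) t (C : Set ℂ)).symm

variable {φ : ConvexBody E → ℂ}

theorem img_mem_NN (hN : ∀ (L : ℂ →ₗ[ℝ] E) C K, φ (K + img L C) = φ K) (L : ℂ →ₗ[ℝ] E)
    (C : ConvexBody ℂ) : hS (img L C) ∈ NN φ :=
  ⟨_, rfl, fun t K => by rw [smul_img, hN]⟩

variable (ι : E →ₗ[ℝ] W)

/-- The linear map `x ↦ ⟪ι x, ζ⟫`. -/
noncomputable def TT (ζ : W) : E →ₗ[ℝ] ℂ where
  toFun x := inner ℂ (ι x) ζ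
  map_add' x y := by rw [map_add, inner_add_left]
  map_smul' t x := by
    rw [map_smul, show t • ι x = (t : ℂ) • ι x from rfl, inner_smul_left, Complex.conj_ofReal,
      RingHom.id_apply, Complex.real_smul]

@[simp] theorem TT_apply (ζ : W) (x : E) : TT ι ζ x = inner ℂ (ι x) ζ := rfl

theorem continuous_iota : Continuous ι := ι.continuous_of_finiteDimensional

/-- The support functions `x ↦ Re (conj ⟪q, ζ⟫^k mk k ⟪x, ζ⟫) + R_k |⟪x, ζ⟫|` of planar bodies,
depending continuously on `ζ`. -/
noncomputable def FF (q : E) (k : ℕ) : C(W, C(sphere (0 : E) 1, ℝ)) :=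
  ContinuousMap.curry ⟨fun p : W × sphere (0 : E) 1 =>
    (conj (inner ℂ (ι q) p.1) ^ k * mk k (inner ℂ (ι p.2) p.1)).re +
      RR k * ‖inner ℂ (ι (p.2 : E)) p.1‖, by
    have h1 := continuous_iota ι
    have h2 : Continuous fun p : W × sphere (0 : E) 1 => (inner ℂ (ι (p.2 : E)) p.1 : ℂ) := by
      fun_prop
    have h3 := (continuous_mk k).comp h2
    simp only [Function.comp_def] at h3
    have h4 : Continuous fun p : W × sphere (0 : E) 1 => conj (inner ℂ (ι q) p.1 : ℂ) :=
      Complex.continuous_conj.comp (by fun_prop)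
    exact (Complex.continuous_re.comp ((h4.pow k).mul h3)).add (continuous_const.mul h2.norm)⟩

theorem FF_apply (q : E) (k : ℕ) (ζ : W) (x : sphere (0 : E) 1) : FF ι q k ζ x =
    (conj (inner ℂ (ι q) ζ) ^ k * mk k (inner ℂ (ι x) ζ)).re + RR k * ‖inner ℂ (ι (x : E)) ζ‖ := rfl

theorem FF_mem (hN : ∀ (L : ℂ →ₗ[ℝ] E) C K, φ (K + img L C) = φ K)
    (hι : ∀ x y, inner ℂ (ι x) (ι y) = ((inner ℝ x y : ℝ) : ℂ))
    {q : E} (hq : ‖q‖ ≤ 1) (k : ℕ) {ζ : W} (hζ : ‖ζ‖ ≤ 1) : FF ι q k ζ ∈ NN φ := by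
  set w : ℂ := inner ℂ (ι q) ζ with hw
  have hw1 : ‖w‖ ≤ 1 := by
    refine (norm_inner_le_norm _ _).trans ?_
    rw [norm_iota ι hι]
    exact mul_le_one₀ hq (norm_nonneg _) hζ
  obtain ⟨C, hC⟩ := exists_hs_tame (u := LinearMap.mulLeft ℝ (conj w)) (fun y => by
    rw [LinearMap.mulLeft_apply, norm_mul, Complex.norm_conj]
    exact mul_le_of_le_one_left (norm_nonneg _) hw1) k
  have h := img_mem_NN hN (LinearMap.adjoint (TT ι ζ)) C
  convert h using 1
  ext x
  rw [hS_apply, hs_img (T := TT ι ζ) (fun y x => LinearMap.adjoint_inner_left _ _ _), hC, FF_apply]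
  simp only [tame, TT_apply, LinearMap.mulLeft_apply, ← hw, mk]
  set s : ℂ := inner ℂ (ι (x : E)) ζ
  rw [mul_div_assoc, mul_pow, mul_left_comm, Complex.re_ofReal_mul]
  ring

/-- The function `x ↦ ⟪q, x⟫^k` on the sphere. -/
noncomputable def pw (q : E) (k : ℕ) : C(sphere (0 : E) 1, ℝ) :=
  ⟨fun x => (inner ℝ q (x : E)) ^ k, by fun_prop⟩

@[simp] theorem pw_apply (q : E) (k : ℕ) (x : sphere (0 : E) 1) :
    pw q k x = (inner ℝ q (x : E)) ^ k := rfl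

theorem one_pw (q : E) : pw q 0 = 1 := by ext; simp

/-- Averaging the planar support functions over the complex unit ball leaves only a multiple of
`⟪q, x⟫^k` and a constant, by unitary invariance. -/
theorem exists_coeff (μ : Measure W) [μ.IsAddHaarMeasure] (hφ : Continuous φ)
    (hN : ∀ (L : ℂ →ₗ[ℝ] E) C K, φ (K + img L C) = φ K)
    (hι : ∀ x y, inner ℂ (ι x) (ι y) = ((inner ℝ x y : ℝ) : ℂ)) (k : ℕ) :
    ∃ c c₀ : ℝ, 0 < c ∧ 0 < c₀ ∧ ∀ q : E, ‖q‖ ≤ 1 →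
      c • pw q k + (RR k * c₀) • (1 : C(sphere (0 : E) 1, ℝ)) ∈ NN φ := by
  rcases isEmpty_or_nonempty (sphere (0 : E) 1) with hS | ⟨⟨x₀, hx₀⟩⟩
  · exact ⟨1, 1, one_pos, one_pos, fun q _ => by
      convert NN.zero; ext x; exact hS.elim x⟩
  rw [mem_sphere_zero_iff_norm] at hx₀
  refine ⟨_, _, integral_norm_pow_pos μ ι hι hx₀ (k + 1), integral_norm_pow_pos μ ι hι hx₀ 1,
    fun q hq => ?_⟩
  have hFi : Integrable (FF ι q k) (μ.restrict (closedBall (0 : W) 1)) :=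
    (FF ι q k).continuous.continuousOn.integrableOn_compact (isCompact_closedBall _ _)
  have h := NN.integral hφ (F := FF ι q k) (μ := μ.restrict (closedBall (0 : W) 1)) (by
    rw [ae_restrict_iff' measurableSet_closedBall]
    exact Eventually.of_forall fun ζ hζ => FF_mem ι hN hι hq k (by simpa using hζ)) hFi
  convert h using 1
  ext ⟨x, hx⟩
  rw [mem_sphere_zero_iff_norm] at hx
  rw [integral_apply hFi]
  simp only [FF_apply, ContinuousMap.add_apply, ContinuousMap.smul_apply, pw_apply,
    ContinuousMap.one_apply, smul_eq_mul, mul_one]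
  have hc1 : Continuous fun ζ : W => conj (inner ℂ (ι q) ζ) ^ k * mk k (inner ℂ (ι x) ζ) := by
    have h3 : Continuous fun ζ : W => mk k (inner ℂ (ι x) ζ) :=
      (continuous_mk k).comp (by fun_prop)
    have h4 : Continuous fun ζ : W => conj (inner ℂ (ι q) ζ : ℂ) :=
      Complex.continuous_conj.comp (by fun_prop)
    fun_prop
  have hc2 : Continuous fun ζ : W => ‖inner ℂ (ι x) ζ‖ := by fun_prop
  have i1 : IntegrableOn (fun ζ : W => conj (inner ℂ (ι q) ζ) ^ k * mk k (inner ℂ (ι x) ζ))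
    (closedBall 0 1) μ := hc1.continuousOn.integrableOn_compact (isCompact_closedBall _ _)
  have i2 : IntegrableOn (fun ζ : W => ‖inner ℂ (ι x) ζ‖)
    (closedBall 0 1) μ := hc2.continuousOn.integrableOn_compact (isCompact_closedBall _ _)
  have i3 : IntegrableOn (fun ζ : W => (conj (inner ℂ (ι q) ζ) ^ k * mk k (inner ℂ (ι x) ζ)).re)
    (closedBall 0 1) μ := i1.re
  rw [integral_add i3 (i2.const_mul _), integral_const_mul]
  have hre := integral_re i1
  have hI := integral_conj_pow_mul_mk μ ι hι hx q k
  rw [hI] at hre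
  simp only [RCLike.re_to_complex, Complex.ofReal_re] at hre
  rw [hre, integral_norm_pow_eq μ ι hι hx₀ hx, integral_norm_pow_eq μ ι hι hx₀ hx]
  simp only [pow_one]
  ring

theorem one_mem (μ : Measure W) [μ.IsAddHaarMeasure] (hφ : Continuous φ)
    (hN : ∀ (L : ℂ →ₗ[ℝ] E) C K, φ (K + img L C) = φ K)
    (hι : ∀ x y, inner ℂ (ι x) (ι y) = ((inner ℝ x y : ℝ) : ℂ)) :
    (1 : C(sphere (0 : E) 1, ℝ)) ∈ NN φ := by
  obtain ⟨c, c₀, hc, hc₀, h⟩ := exists_coeff ι μ hφ hN hι 0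
  have h0 := h 0 (by simp)
  rw [one_pw, ← add_smul] at h0
  have hp : 0 < c + RR 0 * c₀ := by have := RR_pos 0; positivity
  have := NN.smul h0 (inv_nonneg.2 hp.le)
  rwa [smul_smul, inv_mul_cancel₀ hp.ne', one_smul] at this

/-- The constants of `exists_coeff` are normalised by cancelling multiples of `1`, that is, balls. -/
theorem pow_mem (μ : Measure W) [μ.IsAddHaarMeasure] (hφ : Continuous φ)
    (hN : ∀ (L : ℂ →ₗ[ℝ] E) C K, φ (K + img L C) = φ K)
    (hι : ∀ x y, inner ℂ (ι x) (ι y) = ((inner ℝ x y : ℝ) : ℂ)) (k : ℕ) {q : E} (hq : ‖q‖ ≤ 1) :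
    pw q k + RR k • (1 : C(sphere (0 : E) 1, ℝ)) ∈ NN φ := by
  obtain ⟨c, c₀, hc, hc₀, h⟩ := exists_coeff ι μ hφ hN hι k
  have h1 := one_mem ι μ hφ hN hι
  have hR := RR_pos k
  -- `⟪q, x⟫^k + R_k` is itself a support function, so summands can be cancelled
  obtain ⟨M, hM⟩ := exists_hs_tame (X := E)
    (u := (Complex.ofRealCLM : ℝ →ₗ[ℝ] ℂ) ∘ₗ (innerSL ℝ q : E →ₗ[ℝ] ℝ)) (fun x => by
      change ‖((inner ℝ q x : ℝ) : ℂ)‖ ≤ ‖x‖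
      rw [Complex.norm_real]
      exact (norm_inner_le_norm _ _).trans (mul_le_of_le_one_left (norm_nonneg _) hq)) k
  have hMS : hS M = pw q k + RR k • (1 : C(sphere (0 : E) 1, ℝ)) := by
    ext ⟨x, hx⟩
    rw [mem_sphere_zero_iff_norm] at hx
    rw [hS_apply, hM]
    simp only [tame, hx, ContinuousMap.add_apply, ContinuousMap.smul_apply, pw_apply,
      ContinuousMap.one_apply, smul_eq_mul, mul_one, one_mul, Complex.ofReal_one, div_one]
    congr 1
    change (((inner ℝ q x : ℝ) : ℂ) ^ k).re = _
    rw [← Complex.ofReal_pow, Complex.ofReal_re]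
  rw [← hMS]
  lift c to ℝ≥0 using hc.le
  have key : hS (c • M) ∈ NN φ := by
    refine NN.cancel (NN.smul h1 (c := RR k * c₀) (by positivity))
      (NN.add (h q hq) (NN.smul h1 (c := c * RR k) (by positivity))) ?_
    rw [hS_smul, hMS, smul_add, smul_smul]
    abel
  have := NN.smul key (inv_nonneg.2 hc.le)
  rwa [hS_smul, smul_smul, inv_mul_cancel₀ hc.ne', one_smul] at this

/-- The version of `pow_mem` for all `q`, with constants whose exponential series converges. -/
theorem pow_mem' (μ : Measure W) [μ.IsAddHaarMeasure] (hφ : Continuous φ)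
    (hN : ∀ (L : ℂ →ₗ[ℝ] E) C K, φ (K + img L C) = φ K)
    (hι : ∀ x y, inner ℂ (ι x) (ι y) = ((inner ℝ x y : ℝ) : ℂ)) (k : ℕ) (q : E) :
    pw q k + (4 * ‖q‖) ^ k • (1 : C(sphere (0 : E) 1, ℝ)) ∈ NN φ := by
  by_cases hq : q = 0
  · rcases k with _ | k
    · rw [one_pw, pow_zero]
      exact NN.add (one_mem ι μ hφ hN hι) (NN.smul (one_mem ι μ hφ hN hι) zero_le_one)
    · convert NN.zero
      ext x
      simp [hq]
  have hn : ‖q‖ ≠ 0 := norm_ne_zero_iff.2 hq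
  have h := pow_mem ι μ hφ hN hι k (q := ‖q‖⁻¹ • q) (by
    rw [norm_smul, norm_inv, norm_norm, inv_mul_cancel₀ hn])
  have h1 := NN.smul (NN.add h (NN.smul (one_mem ι μ hφ hN hι) (c := 4 ^ k - RR k)
    (by linarith [RR_le k]))) (c := ‖q‖ ^ k) (by positivity)
  convert h1 using 1
  ext x
  simp only [ContinuousMap.add_apply, ContinuousMap.smul_apply, pw_apply,
      ContinuousMap.one_apply, smul_eq_mul, mul_one, real_inner_smul_left]
  have : (‖q‖⁻¹ * inner ℝ q (x : E)) ^ k = (‖q‖ ^ k)⁻¹ * inner ℝ q (x : E) ^ k := by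
    rw [mul_pow, inv_pow]
  rw [this, mul_pow]
  field_simp
  ring

/-- The function `x ↦ exp ⟪q, x⟫ + exp (4 ‖q‖)` on the sphere. -/
noncomputable def ex (q : E) : C(sphere (0 : E) 1, ℝ) :=
  ⟨fun x => Real.exp (inner ℝ q (x : E)) + Real.exp (4 * ‖q‖), by fun_prop⟩

@[simp] theorem ex_apply (q : E) (x : sphere (0 : E) 1) :
    ex q x = Real.exp (inner ℝ q (x : E)) + Real.exp (4 * ‖q‖) := rfl

theorem ex_mem (μ : Measure W) [μ.IsAddHaarMeasure] (hφ : Continuous φ)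
    (hN : ∀ (L : ℂ →ₗ[ℝ] E) C K, φ (K + img L C) = φ K)
    (hι : ∀ x y, inner ℂ (ι x) (ι y) = ((inner ℝ x y : ℝ) : ℂ)) (q : E) :
    ex q ∈ NN φ := by
  set f : ℕ → C(sphere (0 : E) 1, ℝ) := fun k =>
    ((k.factorial : ℝ)⁻¹) • (pw q k + (4 * ‖q‖) ^ k • (1 : C(sphere (0 : E) 1, ℝ))) with hf
  have hfm : ∀ k, f k ∈ NN φ := fun k =>
    NN.smul (pow_mem' ι μ hφ hN hι k q) (by positivity)
  have hsum : ∀ a : ℝ, HasSum (fun k : ℕ => (k.factorial : ℝ)⁻¹ * a ^ k) (Real.exp a) := fun a => by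
    have := NormedSpace.expSeries_div_hasSum_exp a
    rw [← Real.exp_eq_exp_ℝ] at this
    simpa only [div_eq_inv_mul] using this
  have hS : Summable f := by
    refine Summable.of_norm_bounded ((hsum (4 * ‖q‖)).summable.mul_left 2) fun k => ?_
    rw [ContinuousMap.norm_le _ (by positivity)]
    rintro ⟨x, hx⟩
    rw [mem_sphere_zero_iff_norm] at hx
    simp only [hf, ContinuousMap.add_apply, ContinuousMap.smul_apply, pw_apply,
      ContinuousMap.one_apply, smul_eq_mul, mul_one]
    have h1 : |inner ℝ q x| ≤ 4 * ‖q‖ := by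
      have := abs_real_inner_le_norm q x
      rw [hx] at this
      linarith [norm_nonneg q]
    have h2 : |inner ℝ q x ^ k| ≤ (4 * ‖q‖) ^ k := by
      rw [abs_pow]; gcongr
    have h3 := abs_add_le (inner ℝ q x ^ k) ((4 * ‖q‖) ^ k)
    rw [abs_of_nonneg (a := (4 * ‖q‖) ^ k) (by positivity)] at h3
    rw [norm_mul, Real.norm_eq_abs, Real.norm_eq_abs, abs_of_nonneg (by positivity)]
    have h4 : (0 : ℝ) ≤ (k.factorial : ℝ)⁻¹ := by positivity
    nlinarith
  have hmem : ∑' k, f k ∈ NN φ := by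
    refine (NN.isClosed hφ).mem_of_tendsto hS.hasSum.tendsto_sum_nat (Eventually.of_forall fun n => ?_)
    induction n with
    | zero => simpa using NN.zero
    | succ n ih => rw [Finset.sum_range_succ]; exact NN.add ih (hfm n)
  convert hmem using 1
  ext x
  have h1 := hS.hasSum.mapL (ContinuousMap.evalCLM ℝ x)
  refine HasSum.unique ?_ h1
  have h2 := (hsum (inner ℝ q (x : E))).add (hsum (4 * ‖q‖))
  convert h2 using 1
  · ext k
    change (k.factorial : ℝ)⁻¹ * (inner ℝ q (x : E) ^ k + (4 * ‖q‖) ^ k * 1) = _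
    ring
  · rfl

end Powers
end Schneider

/-! ### Gaussian averaging -/

namespace Schneider
open Set Filter Topology

section Gauss

variable {E : Type*} [NormedAddCommGroup E] [InnerProductSpace ℝ E] [FiniteDimensional ℝ E]
  [MeasurableSpace E] [BorelSpace E]

/-- The (unnormalised) Gaussian density. -/
noncomputable def ga (z : E) : ℝ := Real.exp (-‖z‖ ^ 2 / 2)

theorem continuous_ga : Continuous (ga : E → ℝ) := by unfold ga; fun_prop

theorem ga_pos (z : E) : 0 < ga z := Real.exp_pos _

theorem ga_neg (z : E) : ga (-z) = ga z := by simp [ga]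

/-- Continuous functions of at most exponential growth are integrable against the Gaussian. -/
theorem integrable_ga {F : Type*} [NormedAddCommGroup F] {h : E → F}
    (hc : Continuous h) {C c : ℝ} (hb : ∀ q, ‖h q‖ ≤ C * Real.exp (c * ‖q‖) * ga q) :
    Integrable h := by
  have h1 : Integrable fun q : E => Real.exp (-(1 / 4) * ‖q‖ ^ 2) := by
    have := (GaussianFourier.integrable_cexp_neg_mul_sq_norm_add (V := E) (b := 1 / 4)
      (by norm_num) 0 0).norm
    refine this.congr (Eventually.of_forall fun q => ?_)
    simp only [Complex.norm_exp]
    congr 1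
    have : -(1 / 4 : ℂ) * (‖q‖ : ℂ) ^ 2 + 0 * (inner ℝ (0 : E) q : ℝ) =
      ((-(1 / 4) * ‖q‖ ^ 2 : ℝ) : ℂ) := by push_cast; ring
    rw [this, Complex.ofReal_re]
  refine (h1.const_mul (|C| * Real.exp (c ^ 2))).mono' hc.aestronglyMeasurable
    (Eventually.of_forall fun q => (hb q).trans ?_)
  unfold ga
  rw [mul_assoc, mul_assoc, ← Real.exp_add, ← Real.exp_add]
  refine mul_le_mul (le_abs_self C) (Real.exp_le_exp.2 ?_) (Real.exp_pos _).le (abs_nonneg _)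
  nlinarith [sq_nonneg (‖q‖ / 2 - c)]

variable (K : ConvexBody E)

/-- The support function of `K` blurred by a Gaussian of width `ε * s`; with `s = ‖x‖` it is
positively homogeneous in `x`. -/
noncomputable def blur (ε : ℝ) (x : E) (s : ℝ) : ℝ := ∫ z : E, hs K (x + (ε * s) • z) * ga z

theorem blur_integrable (x : E) (s : ℝ) : Integrable fun z : E => hs K (x + s • z) * ga z := by
  obtain ⟨M, hM0, hM⟩ := exists_norm_bound K
  have hc := continuous_hs K
  have hg : Continuous (ga : E → ℝ) := continuous_ga
  refine integrable_ga (C := M * (‖x‖ + |s|)) (c := 1) (by fun_prop) fun q => ?_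
  rw [norm_mul, Real.norm_eq_abs, Real.norm_eq_abs, abs_of_pos (ga_pos q)]
  refine mul_le_mul_of_nonneg_right ((abs_hs_le K hM _).trans ?_) (ga_pos q).le
  rw [mul_assoc]
  refine mul_le_mul_of_nonneg_left ?_ hM0.le
  have h1 : ‖x + s • q‖ ≤ ‖x‖ + |s| * ‖q‖ := by
    refine (norm_add_le _ _).trans ?_
    rw [norm_smul, Real.norm_eq_abs]
  have h2 : 1 ≤ Real.exp (1 * ‖q‖) := Real.one_le_exp (by positivity)
  have h3 : ‖q‖ ≤ Real.exp (1 * ‖q‖) := by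
    rw [one_mul]; linarith [Real.add_one_le_exp ‖q‖]
  nlinarith [norm_nonneg x, abs_nonneg s]

/-- By convexity of the support function and symmetry of the Gaussian, wider blurring increases the
value. -/
theorem blur_mono {ε : ℝ} (x : E) {s t : ℝ} (hs0 : 0 ≤ s) (hst : s ≤ t) :
    blur K ε x s ≤ blur K ε x t := by
  rcases hst.eq_or_lt with rfl | hlt
  · rfl
  have ht : 0 < t := hs0.trans_lt hlt
  set p := (t + s) / (2 * t) with hp
  set r := (t - s) / (2 * t) with hr
  have hp0 : 0 ≤ p := by positivity
  have hr0 : 0 ≤ r := div_nonneg (by linarith) (by positivity)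
  have hpr : p + r = 1 := by rw [hp, hr]; field_simp; ring
  have hpr' : p * t - r * t = s := by rw [hp, hr]; field_simp; ring
  have hrefl : ∫ z : E, hs K (x + (-(ε * t)) • z) * ga z = blur K ε x t := by
    have h := integral_neg_eq_self (fun z : E => hs K (x + (ε * t) • z) * ga z) volume
    unfold blur
    rw [← h]
    simp only [ga_neg, smul_neg, neg_smul]
  have h1 : blur K ε x s ≤ ∫ z : E, (p * (hs K (x + (ε * t) • z) * ga z) +
      r * (hs K (x + (-(ε * t)) • z) * ga z)) := by
    refine integral_mono (blur_integrable K x _)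
      (((blur_integrable K x _).const_mul p).add ((blur_integrable K x _).const_mul r)) fun z => ?_
    simp only
    have e : x + (ε * s) • z = p • (x + (ε * t) • z) + r • (x + (-(ε * t)) • z) := by
      have hx : x = (p + r) • x := by rw [hpr, one_smul]
      conv_lhs => rw [hx, ← hpr']
      module
    have h2 := hs_sub K (p • (x + (ε * t) • z)) (r • (x + (-(ε * t)) • z))
    rw [← e, hs_hom K hp0, hs_hom K hr0] at h2
    have := ga_pos z
    nlinarith
  refine h1.trans (le_of_eq ?_)
  rw [integral_add ((blur_integrable K x _).const_mul p) ((blur_integrable K x _).const_mul r),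
    integral_const_mul, integral_const_mul, hrefl, ← blur, ← add_mul, hpr, one_mul]

theorem blur_hom (ε : ℝ) {t : ℝ} (ht : 0 < t) (x : E) :
    blur K ε (t • x) ‖t • x‖ = t * blur K ε x ‖x‖ := by
  unfold blur
  rw [← integral_const_mul]
  congr 1
  ext z
  rw [← mul_assoc, ← hs_hom K ht.le, norm_smul, Real.norm_eq_abs, abs_of_pos ht, smul_add,
    smul_smul]
  congr 4
  ring

theorem blur_add_le {ε : ℝ} (x y : E) :
    blur K ε (x + y) ‖x + y‖ ≤ blur K ε x ‖x‖ + blur K ε y ‖y‖ := by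
  refine (blur_mono K (x + y) (norm_nonneg _) (norm_add_le x y)).trans ?_
  unfold blur
  rw [← integral_add (blur_integrable K x _) (blur_integrable K y _)]
  refine integral_mono (blur_integrable K _ _)
    ((blur_integrable K x _).add (blur_integrable K y _)) fun z => ?_
  simp only
  rw [← add_mul]
  refine mul_le_mul_of_nonneg_right ?_ (ga_pos z).le
  refine le_trans (le_of_eq ?_) (hs_sub K _ _)
  congr 1
  module

theorem integrable_ga_self : Integrable (ga : E → ℝ) :=
  integrable_ga (C := 1) (c := 0) continuous_ga fun q => by
    rw [Real.norm_eq_abs, abs_of_pos (ga_pos q)]; simp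

theorem integrable_norm_ga : Integrable fun z : E => ‖z‖ * ga z :=
  integrable_ga (C := 1) (c := 1) (by have := continuous_ga (E := E); fun_prop) fun q => by
    rw [norm_mul, norm_norm, Real.norm_eq_abs, abs_of_pos (ga_pos q)]
    refine mul_le_mul_of_nonneg_right ?_ (ga_pos q).le
    linarith [Real.add_one_le_exp (1 * ‖q‖)]

theorem abs_blur_sub_le {M : ℝ} (hM : ∀ v ∈ (K : Set E), ‖v‖ ≤ M) {ε : ℝ} (hε : 0 ≤ ε) (x : E) :
    |blur K ε x ‖x‖ - (∫ z : E, ga z) * hs K x| ≤ M * ε * ‖x‖ * ∫ z : E, ‖z‖ * ga z := by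
  have e : blur K ε x ‖x‖ - (∫ z : E, ga z) * hs K x =
      ∫ z : E, (hs K (x + (ε * ‖x‖) • z) * ga z - ga z * hs K x) := by
    rw [integral_sub (blur_integrable K x _) (integrable_ga_self.mul_const _), integral_mul_const]
    rfl
  rw [e, ← Real.norm_eq_abs, ← integral_const_mul]
  refine norm_integral_le_of_norm_le (integrable_norm_ga.const_mul _)
    (Eventually.of_forall fun z => ?_)
  rw [mul_comm (ga z), ← sub_mul, norm_mul, Real.norm_eq_abs, Real.norm_eq_abs,
    abs_of_pos (ga_pos z), ← mul_assoc]
  refine mul_le_mul_of_nonneg_right ((abs_hs_sub_le K hM _ _).trans (le_of_eq ?_)) (ga_pos z).le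
  rw [add_sub_cancel_left, norm_smul, Real.norm_eq_abs, abs_of_nonneg (by positivity)]
  ring

theorem integral_ga_pos : 0 < ∫ z : E, ga z := by
  rw [integral_pos_iff_support_of_nonneg (fun z => (ga_pos z).le) integrable_ga_self]
  have : Function.support (ga : E → ℝ) = univ := by ext z; simp [(ga_pos z).ne']
  rw [this]
  exact isOpen_univ.measure_pos _ univ_nonempty

theorem exists_blur_body {ε : ℝ} (hε : 0 ≤ ε) :
    ∃ G : ConvexBody E, ∀ x, hs G x = blur K ε x ‖x‖ := by
  obtain ⟨M, hM0, hM⟩ := exists_norm_bound K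
  refine exists_hs_of_sublinear (fun t ht x => blur_hom K ε ht x) (blur_add_le K)
    (B := M * ε * (∫ z : E, ‖z‖ * ga z) + (∫ z : E, ga z) * M) fun x => ?_
  have h1 := (abs_le.1 (abs_blur_sub_le K hM hε x)).2
  have h2 := (abs_le.1 (abs_hs_le K hM x)).2
  have h3 := integral_ga_pos (E := E)
  nlinarith

variable {φ : ConvexBody E → ℂ}

theorem continuous_ex (l : ℝ) : Continuous fun q : E => ex (l • q) := by
  refine (ContinuousMap.curry ⟨fun p : E × sphere (0 : E) 1 =>
    Real.exp (inner ℝ (l • p.1) (p.2 : E)) + Real.exp (4 * ‖l • p.1‖), by fun_prop⟩).continuous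

theorem norm_ex_le (q : E) : ‖ex q‖ ≤ 2 * Real.exp (4 * ‖q‖) := by
  rw [ContinuousMap.norm_le _ (by positivity)]
  rintro ⟨x, hx⟩
  rw [mem_sphere_zero_iff_norm] at hx
  rw [ex_apply, Real.norm_eq_abs, abs_of_pos (by positivity)]
  have h1 : inner ℝ q x ≤ 4 * ‖q‖ := by
    have := real_inner_le_norm q x
    rw [hx] at this
    linarith [norm_nonneg q]
  have := Real.exp_le_exp.2 h1
  simp only
  linarith

/-- If all functions `exp ⟪q, x⟫ + exp (4 ‖q‖)` are neutral, then so is every blurred body. -/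
theorem blur_mem (hφ : Continuous φ) (h1 : (1 : C(sphere (0 : E) 1, ℝ)) ∈ NN φ)
    (hex : ∀ q : E, ex q ∈ NN φ) (h0 : 0 ∈ (K : Set E)) {l : ℝ} (hl : 0 < l)
    {G : ConvexBody E} (hG : ∀ x, hs G x = blur K l⁻¹ x ‖x‖) : hS G ∈ NN φ := by
  obtain ⟨M, hM0, hM⟩ := exists_norm_bound K
  have hpos : ∀ x, 0 ≤ hs K x := fun x => by simpa using inner_le_hs K x h0
  have hcK := continuous_hs K
  have hcg : Continuous (ga : E → ℝ) := continuous_ga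
  have hcex := continuous_ex (E := E) l
  set F : E → C(sphere (0 : E) 1, ℝ) := fun q => (hs K q * ga q) • ex (l • q) with hF
  have hgrow : ∀ q : E, hs K q ≤ M * Real.exp ‖q‖ := fun q => by
    have := (abs_le.1 (abs_hs_le K hM q)).2
    have h2 := Real.add_one_le_exp ‖q‖
    nlinarith
  have hFint : Integrable F := by
    refine integrable_ga (C := 2 * M) (c := 4 * l + 1) (by fun_prop) fun q => ?_
    rw [hF, norm_smul, norm_mul, Real.norm_eq_abs, Real.norm_eq_abs, abs_of_nonneg (hpos q),
      abs_of_pos (ga_pos q)]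
    have h2 := norm_ex_le (l • q)
    rw [norm_smul, Real.norm_eq_abs, abs_of_pos hl] at h2
    have h3 : Real.exp ((4 * l + 1) * ‖q‖) = Real.exp ‖q‖ * Real.exp (4 * (l * ‖q‖)) := by
      rw [← Real.exp_add]; ring_nf
    rw [h3]
    have hg := ga_pos q
    calc _ ≤ M * Real.exp ‖q‖ * ga q * (2 * Real.exp (4 * (l * ‖q‖))) := by
          gcongr
          exact hgrow q
      _ = _ := by ring
  have hmem := NN.integral hφ (F := F) (μ := volume)
    (Eventually.of_forall fun q => NN.smul (hex _) (mul_nonneg (hpos q) (ga_pos q).le)) hFint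
  -- the two parts of the integral, evaluated separately
  have hi2 : Integrable fun q : E => hs K q * ga q * Real.exp (4 * ‖l • q‖) := by
    refine integrable_ga (C := M) (c := 4 * l + 1) (by fun_prop) fun q => ?_
    rw [norm_mul, norm_mul, Real.norm_eq_abs, Real.norm_eq_abs, abs_of_nonneg (hpos q),
      abs_of_pos (ga_pos q), Real.norm_eq_abs, abs_of_pos (Real.exp_pos _), norm_smul,
      Real.norm_eq_abs, abs_of_pos hl]
    have h3 : Real.exp ((4 * l + 1) * ‖q‖) = Real.exp ‖q‖ * Real.exp (4 * (l * ‖q‖)) := by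
      rw [← Real.exp_add]; ring_nf
    rw [h3]
    have hg := ga_pos q
    calc _ ≤ M * Real.exp ‖q‖ * ga q * Real.exp (4 * (l * ‖q‖)) := by
          gcongr
          exact hgrow q
      _ = _ := by ring
  set κ := ∫ q : E, hs K q * ga q * Real.exp (4 * ‖l • q‖) with hκ
  have hκ0 : 0 ≤ κ := integral_nonneg fun q =>
    mul_nonneg (mul_nonneg (hpos q) (ga_pos q).le) (Real.exp_pos _).le
  set a : ℝ := l * Real.exp (l ^ 2 / 2) with ha
  have ha0 : 0 < a := by positivity
  have heval : ∫ q, F q = a • hS G + κ • (1 : C(sphere (0 : E) 1, ℝ)) := by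
    ext ⟨x, hx⟩
    rw [mem_sphere_zero_iff_norm] at hx
    rw [integral_apply hFint]
    simp only [hF, ContinuousMap.add_apply, ContinuousMap.smul_apply, ex_apply, hS_apply,
      ContinuousMap.one_apply, smul_eq_mul, mul_one, mul_add]
    have e1 : ∀ z : E, hs K (l • x + z) * ga (l • x + z) * Real.exp (inner ℝ (l • (l • x + z)) x) =
        a * (hs K (x + (l⁻¹ * 1) • z) * ga z) := fun z => by
      have e2 : l • x + z = l • (x + (l⁻¹ * 1) • z) := by
        rw [smul_add, smul_smul, mul_one, mul_inv_cancel₀ hl.ne', one_smul]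
      have e3 : ga (l • x + z) * Real.exp (inner ℝ (l • (l • x + z)) x) =
          Real.exp (l ^ 2 / 2) * ga z := by
        unfold ga
        rw [← Real.exp_add, ← Real.exp_add]
        congr 1
        rw [norm_add_sq_real, norm_smul, Real.norm_eq_abs, abs_of_pos hl, hx,
          real_inner_smul_left, real_inner_smul_left, inner_add_left, real_inner_smul_left,
          real_inner_self_eq_norm_sq, hx, real_inner_comm]
        ring
      rw [mul_assoc, e3, e2, hs_hom K hl.le, ha]
      ring
    have hi1 : Integrable fun q : E => hs K q * ga q * Real.exp (inner ℝ (l • q) x) := by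
      have h2 := ((ContinuousMap.evalCLM ℝ (⟨x, by simpa using hx⟩ : sphere (0 : E) 1)).integrable_comp
        hFint).sub hi2
      refine h2.congr (Eventually.of_forall fun q => ?_)
      change hs K q * ga q * (Real.exp (inner ℝ (l • q) x) + Real.exp (4 * ‖l • q‖)) -
        hs K q * ga q * Real.exp (4 * ‖l • q‖) = _
      ring
    rw [integral_add hi1 hi2, ← hκ]
    congr 1
    rw [← integral_add_left_eq_self _ (l • x)]
    simp_rw [e1]
    rw [integral_const_mul, hG, hx]
    rfl
  obtain ⟨b, hb⟩ : ∃ b : ℝ≥0, (b : ℝ) = a := ⟨⟨a, ha0.le⟩, rfl⟩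
  have key : hS (b • G) ∈ NN φ :=
    NN.cancel (NN.smul h1 hκ0) hmem (by rw [heval, hS_smul, hb])
  have := NN.smul key (inv_nonneg.2 ha0.le)
  rwa [hS_smul, hb, smul_smul, inv_mul_cancel₀ ha0.ne', one_smul] at this

/-- A body containing the origin is the limit of its blurred copies, all of which are neutral. -/
theorem body_mem (hφ : Continuous φ) (h1 : (1 : C(sphere (0 : E) 1, ℝ)) ∈ NN φ)
    (hex : ∀ q : E, ex q ∈ NN φ) (h0 : 0 ∈ (K : Set E)) : hS K ∈ NN φ := by
  obtain ⟨M, hM0, hM⟩ := exists_norm_bound K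
  have hl : ∀ k : ℕ, (0 : ℝ) < k + 1 := fun k => by positivity
  choose G hG using fun k : ℕ => exists_blur_body K (ε := ((k : ℝ) + 1)⁻¹) (by positivity)
  set c := ∫ z : E, ga z with hc
  have hc0 : 0 < c := integral_ga_pos
  have hlim : Tendsto (fun k => hS (G k)) atTop (𝓝 (c • hS K)) := by
    rw [tendsto_iff_norm_sub_tendsto_zero]
    have h2 : Tendsto (fun k : ℕ => M * (∫ z : E, ‖z‖ * ga z) * (1 / ((k : ℝ) + 1))) atTop
        (𝓝 0) := by
      simpa using tendsto_one_div_add_atTop_nhds_zero_nat.const_mul (M * (∫ z : E, ‖z‖ * ga z))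
    have hI : 0 ≤ ∫ z : E, ‖z‖ * ga z := integral_nonneg fun z => by
      have := ga_pos z
      simp only [Pi.zero_apply]; positivity
    refine squeeze_zero (fun k => norm_nonneg _) (fun k => ?_) h2
    rw [ContinuousMap.norm_le _ (by positivity)]
    rintro ⟨x, hx⟩
    rw [mem_sphere_zero_iff_norm] at hx
    have h3 := abs_blur_sub_le K hM (ε := ((k : ℝ) + 1)⁻¹) (by positivity) x
    simp only [ContinuousMap.sub_apply, ContinuousMap.smul_apply, hS_apply, smul_eq_mul, hG,
      Real.norm_eq_abs]
    refine h3.trans (le_of_eq ?_)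
    rw [hx]; ring
  have h4 := (NN.isClosed hφ).mem_of_tendsto hlim
    (Eventually.of_forall fun k => blur_mem K hφ h1 hex h0 (hl k) (hG k))
  have := NN.smul h4 (inv_nonneg.2 hc0.le)
  rwa [smul_smul, inv_mul_cancel₀ hc0.ne', one_smul] at this

end Gauss

section Conclusion

/-- A continuous function of convex bodies for which all planar bodies are neutral summands is
constant. -/
theorem const_of_planar {n : ℕ} {φ : ConvexBody (EuclideanSpace ℝ (Fin n)) → ℂ}
    (hφ : Continuous φ)
    (hN : ∀ (L : ℂ →ₗ[ℝ] EuclideanSpace ℝ (Fin n)) C K, φ (K + img L C) = φ K)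
    (K : ConvexBody (EuclideanSpace ℝ (Fin n))) : φ K = φ 0 := by
  let ι : EuclideanSpace ℝ (Fin n) →ₗ[ℝ] EuclideanSpace ℂ (Fin n) :=
    { toFun := fun x => WithLp.toLp 2 fun i => (x i : ℂ)
      map_add' := fun x y => by ext i; simp
      map_smul' := fun t x => by ext i; simp }
  have hι : ∀ x y, inner ℂ (ι x) (ι y) = ((inner ℝ x y : ℝ) : ℂ) := fun x y => by
    simp [PiLp.inner_apply, ι]
  let μ : Measure (EuclideanSpace ℂ (Fin n)) := Measure.addHaar
  have h1 := one_mem ι μ hφ hN hι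
  have hex := ex_mem ι μ hφ hN hι
  -- translate so that the origin belongs to the body
  obtain ⟨v, hv⟩ := K.nonempty
  let L : ℂ →ₗ[ℝ] EuclideanSpace ℝ (Fin n) := (LinearMap.toSpanSingleton ℝ _ (-v)) ∘ₗ Complex.reLm
  have h2 := hN L ((CC.singleton (1 : ℂ)).toBody (singleton_nonempty _)) K
  set K' := K + img L ((CC.singleton (1 : ℂ)).toBody (singleton_nonempty _)) with hK'
  have h0 : (0 : EuclideanSpace ℝ (Fin n)) ∈ (K' : Set _) := by
    rw [hK', ConvexBody.coe_add, coe_img]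
    exact ⟨v, hv, -v, ⟨1, rfl, by simp [L]⟩, by simp⟩
  obtain ⟨M, hM, hMφ⟩ := body_mem K' hφ h1 hex h0
  have h3 := hMφ 1 0
  rw [one_smul, zero_add, hS_injective hM] at h3
  rw [← h2, h3]

end Conclusion
end Schneider

/-! ### Slices, degenerate triangles and sums of two triangles -/

namespace Schneider
open Set Filter Topology

section Slice
variable {V W : Type*} [NormedAddCommGroup V] [NormedSpace ℝ V] [FiniteDimensional ℝ V]
  [NormedAddCommGroup W] [NormedSpace ℝ W] [FiniteDimensional ℝ W]

theorem image_seg (f : W →ₗ[ℝ] V) (v : W) (R : ℝ) : f '' seg v R = seg (f v) R := by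
  ext x
  constructor
  · rintro ⟨_, ⟨s, h0, h1, rfl⟩, rfl⟩
    exact ⟨s, h0, h1, by simp⟩
  · rintro ⟨s, h0, h1, rfl⟩
    exact ⟨_, ⟨s, h0, h1, rfl⟩, by simp⟩

theorem image_tri (f : W →ₗ[ℝ] V) (v w : W) (R : ℝ) : f '' tri v w R = tri (f v) (f w) R := by
  ext x
  constructor
  · rintro ⟨_, ⟨s, t, h0, h1, h2, rfl⟩, rfl⟩
    exact ⟨s, t, h0, h1, h2, by simp⟩
  · rintro ⟨s, t, h0, h1, h2, rfl⟩
    exact ⟨_, ⟨s, t, h0, h1, h2, rfl⟩, by simp⟩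

/-- Adding a fixed body `Q` in a complement of the subspace `ι(W)` turns a simple valuation on `V`
into a simple valuation on `W`. -/
theorem SV.slice {Φ : Set V → ℂ} (h : SV Φ) {ι : W →ₗ[ℝ] V} {π : V →ₗ[ℝ] W}
    (hπ : ∀ w, π (ι w) = w) {Q : Set V} (hQ : CC Q) (hQn : Q.Nonempty)
    (hπQ : ∀ q ∈ Q, π q = 0) : SV fun D => Φ (ι '' D + Q) where
  val A B hA hB hAB := by
    have e : ι '' (A ∩ B) + Q = (ι '' A + Q) ∩ (ι '' B + Q) := by
      refine Subset.antisymm (subset_inter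
        (add_subset_add_right (image_mono inter_subset_left))
        (add_subset_add_right (image_mono inter_subset_right))) ?_
      rintro x ⟨⟨_, ⟨a, ha, rfl⟩, q, hq, rfl⟩, ⟨_, ⟨b, hb, rfl⟩, r, hr, hx⟩⟩
      simp only at hx
      have h1 := congrArg π hx
      simp only [map_add, hπ, hπQ q hq, hπQ r hr, add_zero] at h1
      subst h1
      exact ⟨_, ⟨b, ⟨ha, hb⟩, rfl⟩, q, hq, rfl⟩
    have e2 : ι '' (A ∪ B) + Q = (ι '' A + Q) ∪ (ι '' B + Q) := by
      rw [image_union, union_add]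
    simp only [e, e2]
    refine h.val _ _ ((hA.image ι).add hQ) ((hB.image ι).add hQ) ?_
    rw [← e2]
    exact (hAB.linear_image ι).add hQ.convex
  trans A x hA := by
    have e : ι '' ({x} + A) + Q = {ι x} + (ι '' A + Q) := by
      rw [image_add, image_singleton, add_assoc]
    simp only [e]
    exact h.trans _ _ ((hA.image ι).add hQ)
  null A ℓ c hA hℓ hc := by
    refine h.null _ (ℓ ∘ₗ π) c ((hA.image ι).add hQ) (fun h0 => hℓ ?_) ?_
    · ext w
      simpa [hπ] using LinearMap.congr_fun h0 (ι w)
    · rintro _ ⟨_, ⟨a, ha, rfl⟩, q, hq, rfl⟩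
      simp [hπ, hπQ q hq, hc a ha]
  empty := by simp [h.empty]
  cont := h.cont.comp (continuous_image_add ι hQ hQn)

theorem PN.slice {Φ : Set V → ℂ} (hp : PN Φ) {ι : W →ₗ[ℝ] V} {π : V →ₗ[ℝ] W}
    (hπ : ∀ w, π (ι w) = w) {Q : Set V} (hQ : CC Q)
    (hπQ : ∀ q ∈ Q, π q = 0) : PN fun D => Φ (ι '' D + Q) := by
  intro D ℓ c v hD hℓ hc
  have e : ι '' (D + seg v 1) + Q = (ι '' D + Q) + seg (ι v) 1 := by
    rw [image_add, image_seg, add_right_comm]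
  simp only [e]
  refine hp _ (ℓ ∘ₗ π) c _ ((hD.image ι).add hQ) (fun h0 => hℓ ?_) ?_
  · ext w
    simpa [hπ] using LinearMap.congr_fun h0 (ι w)
  · rintro _ ⟨_, ⟨a, ha, rfl⟩, q, hq, rfl⟩
    simp [hπ, hπQ q hq, hc a ha]

theorem exists_dual2 {v w : V} (hi : ∀ s t : ℝ, s • v + t • w = 0 → s = 0 ∧ t = 0) :
    ∃ a b : V →ₗ[ℝ] ℝ, Dual2 a b v w := by
  let f : ℝ × ℝ →ₗ[ℝ] V :=
    (LinearMap.toSpanSingleton ℝ V v).coprod (LinearMap.toSpanSingleton ℝ V w)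
  have hf : LinearMap.ker f = ⊥ := by
    rw [LinearMap.ker_eq_bot']
    rintro ⟨s, t⟩ h0
    obtain ⟨rfl, rfl⟩ := hi s t (by simpa [f] using h0)
    rfl
  obtain ⟨g, hg⟩ := f.exists_leftInverse_of_injective hf
  have h1 : g v = (1, 0) := by simpa [f] using LinearMap.congr_fun hg (1, 0)
  have h2 : g w = (0, 1) := by simpa [f] using LinearMap.congr_fun hg (0, 1)
  exact ⟨LinearMap.fst ℝ ℝ ℝ ∘ₗ g, LinearMap.snd ℝ ℝ ℝ ∘ₗ g, by simp [h1], by simp [h2],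
    by simp [h1], by simp [h2]⟩

/-- A degenerate triangle is a segment. -/
theorem tri_eq_seg {v w : V} (hi : ¬ ∀ s t : ℝ, s • v + t • w = 0 → s = 0 ∧ t = 0) :
    ∃ x u : V, tri v w 1 = {x} + seg u 1 := by
  have key : ∃ u : V, ∀ x ∈ tri v w 1, ∃ t : ℝ, x = 0 + t • u := by
    push Not at hi
    obtain ⟨s, t, h0, hst⟩ := hi
    by_cases hs : s = 0
    · have ht := hst hs
      subst hs
      have hw : w = 0 := by simpa [ht] using h0
      refine ⟨v, ?_⟩
      rintro _ ⟨p, q, -, -, -, rfl⟩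
      exact ⟨p, by simp [hw]⟩
    · have hv : v = (-(s⁻¹ * t)) • w := by
        have : s⁻¹ • (s • v + t • w) = 0 := by rw [h0, smul_zero]
        rw [smul_add, smul_smul, inv_mul_cancel₀ hs, one_smul, smul_smul] at this
        rw [neg_smul]
        exact eq_neg_of_add_eq_zero_left this
      refine ⟨w, ?_⟩
      rintro _ ⟨p, q, -, -, -, rfl⟩
      refine ⟨p * (-(s⁻¹ * t)) + q, ?_⟩
      rw [hv]; module
  obtain ⟨u, hu⟩ := key
  obtain ⟨x, -, r, hr⟩ := (CC.tri v w 1).eq_seg ⟨0, zero_mem_tri v w zero_le_one⟩ hu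
  exact ⟨x, r • u, hr⟩

theorem SV.tri_degenerate {Φ : Set V → ℂ} (h : SV Φ) (hp : PN Φ) {K : Set V} (hK : CC K) {v w : V}
    (hi : ¬ ∀ s t : ℝ, s • v + t • w = 0 → s = 0 ∧ t = 0) : Φ (K + tri v w 1) = Φ K := by
  obtain ⟨x, u, hx⟩ := tri_eq_seg hi
  rw [hx, h.trans' hK (CC.seg u 1), h.seg_neutral hp hK]

/-- If triangles are neutral summands for `K`, so are all planar bodies. -/
theorem SV.planar_neutral {Φ : Set V → ℂ} (h : SV Φ) (hp : PN Φ) {K : Set V} (hK : CC K)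
    (hKn : K.Nonempty) (h2 : Module.finrank ℝ W = 2) (L : W →ₗ[ℝ] V)
    (htri : ∀ v w, Φ (K + tri v w 1) = Φ K) (C : ConvexBody W) :
    Φ (K + L '' (C : Set W)) = Φ K := by
  classical
  let θ : Set W → ℂ := fun A => if A.Nonempty then Φ (K + L '' A) - Φ K else 0
  have hθ : ∀ A : Set W, A.Nonempty → θ A = Φ (K + L '' A) - Φ K := fun A hA => if_pos hA
  have hθ0 : θ ∅ = 0 := if_neg (by simp)
  have main := planar_zero h2 (θ := θ) ?_ ?_ ?_ ?_ C
  · rw [hθ _ C.nonempty] at main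
    exact sub_eq_zero.1 main
  · intro A ℓ c hA hℓ
    rcases (A ∩ {x | ℓ x ≤ c}).eq_empty_or_nonempty with h1 | h1
    · have hu := union_halves A ℓ c
      rw [h1, empty_union] at hu
      rw [h1, hu, hθ0, zero_add]
    rcases (A ∩ {x | c ≤ ℓ x}).eq_empty_or_nonempty with h3 | h3
    · have hu := union_halves A ℓ c
      rw [h3, union_empty] at hu
      rw [h3, hu, hθ0, add_zero]
    have hpre := isPreconnected_closed_iff.1 hA.convex.isPreconnected _ _
      (isClosed_le ℓ c) (isClosed_ge ℓ c)
      (fun x _ => (le_total (ℓ x) c).imp id id) h1 h3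
    obtain ⟨x₀, hx₀, hx₁, hx₂⟩ := hpre
    have hx₃ : ℓ x₀ = c := le_antisymm hx₁ hx₂
    have hne : (A ∩ {x | ℓ x = c}).Nonempty := ⟨x₀, hx₀, hx₃⟩
    rw [hθ _ (h1.mono inter_subset_left), hθ _ h1, hθ _ h3]
    -- the common face is a segment, hence neutral
    have hseg : Φ (K + L '' (A ∩ {x | ℓ x = c})) = Φ K := by
      have hk : Module.finrank ℝ (LinearMap.ker ℓ) = 1 := by
        have := ℓ.finrank_range_add_finrank_ker
        rw [LinearMap.range_eq_top.2 (LinearMap.surjective hℓ), finrank_top, Module.finrank_self,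
          h2] at this
        omega
      obtain ⟨u, -, hu⟩ := finrank_eq_one_iff'.1 hk
      obtain ⟨x, -, r, hr⟩ := (hA.eq ℓ c).eq_seg hne (x₀ := x₀) (u := (u : W)) fun x hx => by
        obtain ⟨t, ht⟩ := hu ⟨x - x₀, by
          rw [LinearMap.mem_ker, map_sub, show ℓ x = c from hx.2, hx₃, sub_self]⟩
        refine ⟨t, ?_⟩
        have := congrArg Subtype.val ht
        simp only [Submodule.coe_smul] at this
        rw [this]; abel
      rw [hr, image_add, image_singleton, image_seg, h.trans' hK (CC.seg _ 1), h.seg_neutral hp hK]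
    have hinter : (K + L '' (A ∩ {x | ℓ x ≤ c})) ∩ (K + L '' (A ∩ {x | c ≤ ℓ x})) =
        K + L '' (A ∩ {x | ℓ x = c}) := by
      refine Subset.antisymm ?_ (subset_inter
        (add_subset_add_left (image_mono fun x hx => ⟨hx.1, le_of_eq hx.2⟩))
        (add_subset_add_left (image_mono fun x hx => ⟨hx.1, ge_of_eq hx.2⟩)))
      rintro x ⟨⟨k, hk, _, ⟨a, ha, rfl⟩, rfl⟩, ⟨k', hk', _, ⟨b, hb, rfl⟩, hx⟩⟩
      simp only at hx
      have hpre : IsPreconnected (segment ℝ a b) := (convex_segment a b).isPreconnected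
      rw [isPreconnected_closed_iff] at hpre
      obtain ⟨y, hy, hyA, hyB⟩ := hpre _ _ (isClosed_le ℓ c) (isClosed_ge ℓ c)
        (fun x _ => (le_total (ℓ x) c).imp id id)
        ⟨a, left_mem_segment _ _ _, ha.2⟩ ⟨b, right_mem_segment _ _ _, hb.2⟩
      have hyA' := hA.convex.segment_subset ha.1 hb.1 hy
      obtain ⟨p, q, hp, hq, hpq, rfl⟩ := hy
      refine ⟨p • k + q • k', hK.convex hk hk' hp hq hpq, _,
        ⟨_, ⟨hyA', le_antisymm hyA hyB⟩, rfl⟩, ?_⟩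
      have : p • (k + L a) + q • (k' + L b) = k + L a := by
        rw [hx, ← add_smul, hpq, one_smul]
      simp only
      rw [← this, map_add, map_smul, map_smul]
      module
    have hunion : (K + L '' (A ∩ {x | ℓ x ≤ c})) ∪ (K + L '' (A ∩ {x | c ≤ ℓ x})) =
        K + L '' A := by
      rw [← add_union, ← image_union, union_halves]
    have := h.val _ _ (hK.add ((hA.le ℓ c).image L)) (hK.add ((hA.ge ℓ c).image L))
      (by rw [hunion]; exact (hK.add (hA.image L)).convex)
    rw [hunion, hinter, hseg] at this
    linear_combination this
  · intro A x hA
    rcases A.eq_empty_or_nonempty with rfl | hAn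
    · simp
    · rw [hθ _ ((singleton_nonempty x).add hAn), hθ _ hAn, image_add, image_singleton,
        h.trans' hK (hA.image L)]
  · have : (fun C : ConvexBody W => θ (C : Set W)) = fun C : ConvexBody W =>
        Φ (L '' (C : Set W) + K) - Φ K := by
      ext C
      rw [hθ _ C.nonempty, add_comm]
    rw [this]
    exact (h.cont.comp (continuous_image_add L hK hKn)).sub continuous_const
  · intro v w
    rw [hθ _ ⟨0, zero_mem_tri v w zero_le_one⟩, image_tri, htri, sub_self]

/-- A triangle is null in dimension at least three. -/
theorem SV.tri_null {Φ : Set V → ℂ} (h : SV Φ) (h3 : 3 ≤ Module.finrank ℝ V) (v w : V) :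
    Φ (tri v w 1) = 0 := by
  have hlt : Submodule.span ℝ {v, w} < ⊤ := by
    refine lt_top_iff_ne_top.2 fun ht => ?_
    classical
    have h1 := finrank_span_le_card (R := ℝ) ({v, w} : Set V)
    rw [ht, finrank_top] at h1
    have : ({v, w} : Set V).toFinset.card ≤ 2 := by
      rw [toFinset_insert, toFinset_singleton]
      exact Finset.card_le_two
    omega
  obtain ⟨ℓ, hℓ, hle⟩ := Submodule.exists_le_ker_of_lt_top _ hlt
  have hv : ℓ v = 0 := hle (Submodule.subset_span (by simp))
  have hw : ℓ w = 0 := hle (Submodule.subset_span (by simp))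
  refine h.null _ ℓ 0 (CC.tri v w 1) hℓ ?_
  rintro _ ⟨s, t, -, -, -, rfl⟩
  simp [hv, hw]

end Slice

section Four
variable {V : Type*} [NormedAddCommGroup V] [NormedSpace ℝ V] [FiniteDimensional ℝ V]

/-- `a, b, c, d` are coordinate functionals for the independent vectors `v, v', w, w'`. -/
structure Dual4 (a b c d : V →ₗ[ℝ] ℝ) (v v' w w' : V) : Prop where
  left : Dual2 a b v v'
  right : Dual2 c d w w'
  aw : a w = 0
  aw' : a w' = 0
  bw : b w = 0
  bw' : b w' = 0
  cv : c v = 0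
  cv' : c v' = 0
  dv : d v = 0
  dv' : d v' = 0

variable {a b c d : V →ₗ[ℝ] ℝ} {v v' w w' : V}

theorem Dual4.swap (D : Dual4 a b c d v v' w w') : Dual4 c d a b w w' v v' :=
  ⟨D.right, D.left, D.cv, D.cv', D.dv, D.dv', D.aw, D.aw', D.bw, D.bw'⟩

theorem Dual4.shear (D : Dual4 a b c d v v' w w') :
    Dual4 (c - a) (d - b) c d (-v) (-v') (v + w) (v' + w') := by
  obtain ⟨⟨_, _, _, _⟩, ⟨_, _, _, _⟩, _, _, _, _, _, _, _, _⟩ := D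
  constructor <;> first | constructor | skip
  all_goals simp [*]

/-- Shearing invariance of `Φ` on the sum of two triangles in complementary planes. -/
theorem SV.shear {Φ : Set V → ℂ} (h : SV Φ) (hp : PN Φ) (h3 : 3 ≤ Module.finrank ℝ V)
    (D : Dual4 a b c d v v' w w') :
    Φ (tri (v + w) (v' + w') 1 + tri w w' 1) = Φ (tri v v' 1 + tri w w' 1) := by
  rw [h.slope hp (CC.tri _ _ 1) D.right, h.tri_null h3, zero_add, image_tri]
  have e1 : proj2 c d w w' (v + w) = v := by
    simp [D.cv, D.dv, D.right.av, D.right.bv]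
  have e2 : proj2 c d w w' (v' + w') = v' := by
    simp [D.cv', D.dv', D.right.aw, D.right.bw]
  rw [e1, e2]

/-- In dimension at least three, `Φ` vanishes on the sum of two triangles in complementary
planes: shears generate an exchange that reverses the orientation of one triangle. -/
theorem SV.tri_tri {Φ : Set V → ℂ} (h : SV Φ) (hp : PN Φ) (h3 : 3 ≤ Module.finrank ℝ V)
    (D : Dual4 a b c d v v' w w') : Φ (tri v v' 1 + tri w w' 1) = 0 := by
  have h1 := h.shear hp h3 D
  have h2 := h.shear hp h3 D.shear
  have h4 := h.shear hp h3 D.shear.swap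
  have h5 := h.tri_odd hp (CC.tri w w' 1) D.left
  rw [h.tri_null h3, mul_zero] at h5
  rw [neg_add_cancel_left, neg_add_cancel_left] at h2
  rw [show v + w + -v = w by abel, show v' + w' + -v' = w' by abel] at h4
  rw [add_comm (tri (v + w) _ _)] at h1 h4
  rw [add_comm (tri w w' 1) (tri v v' 1)] at h5
  have : Φ (tri v v' 1 + tri w w' 1) = - Φ (tri v v' 1 + tri w w' 1) := by
    linear_combination h5 - h1 + h2 - h4
  linear_combination this / 2

end Four
end Schneider

/-! ### Simple valuations vanishing on prisms, and homogeneity -/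

namespace Schneider
open Set Filter Topology

universe u

section PrismNull

/-- A simple valuation vanishing on prisms has all planar bodies as neutral summands as soon as it
vanishes on `D + T` for triangles `T` and bodies `D` in complementary position; it is then zero. -/
theorem SV.eq_zero_of_tri {V : Type*} [NormedAddCommGroup V] [NormedSpace ℝ V]
    [FiniteDimensional ℝ V] {Φ : Set V → ℂ} (h : SV Φ) (hp : PN Φ)
    (hpos : 1 ≤ Module.finrank ℝ V)
    (H : ∀ (a b : V →ₗ[ℝ] ℝ) v w K, Dual2 a b v w → CC K →
      Φ (proj2 a b v w '' K + tri v w 1) = 0) (A : Set V) (hA : CC A) : Φ A = 0 := by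
  rcases A.eq_empty_or_nonempty with rfl | hAn
  · exact h.empty
  have htri : ∀ K, CC K → ∀ v w, Φ (K + tri v w 1) = Φ K := fun K hK v w => by
    by_cases hi : ∀ s t : ℝ, s • v + t • w = 0 → s = 0 ∧ t = 0
    · obtain ⟨a, b, d⟩ := exists_dual2 hi
      rw [h.slope hp hK d, H a b v w K d hK, add_zero]
    · exact h.tri_degenerate hp hK hi
  let e : EuclideanSpace ℝ (Fin (Module.finrank ℝ V)) ≃ₗ[ℝ] V :=
    LinearEquiv.ofFinrankEq _ _ (by simp)
  let φ : ConvexBody (EuclideanSpace ℝ (Fin (Module.finrank ℝ V))) → ℂ := fun K =>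
    Φ (e.toLinearMap '' (K : Set _) + {0})
  have hφ : Continuous φ :=
    h.cont.comp (continuous_image_add e.toLinearMap (CC.singleton 0) (singleton_nonempty 0))
  have key := const_of_planar hφ (fun L C K => by
    simp only [φ, ConvexBody.coe_add, coe_img, add_zero, singleton_zero, image_add]
    rw [← image_comp, ← LinearMap.coe_comp]
    exact h.planar_neutral hp ((CC.body K).image e.toLinearMap) (K.nonempty.image _)
      Complex.finrank_real_complex (e.toLinearMap ∘ₗ L)
      (htri _ ((CC.body K).image e.toLinearMap)) C)
    ((hA.image e.symm.toLinearMap).toBody (hAn.image _))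
  have e1 : e.toLinearMap '' (e.symm.toLinearMap '' A) = A := by
    rw [← image_comp]
    convert image_id A using 2
    simp
  obtain ⟨x, hx⟩ : ∃ x : V, x ≠ 0 := by
    have : Nontrivial V := Module.nontrivial_of_finrank_pos (R := ℝ) hpos
    exact exists_ne 0
  obtain ⟨ℓ, hℓ⟩ := Module.Projective.exists_dual_ne_zero ℝ hx
  have hℓ0 : ℓ ≠ 0 := by rintro rfl; simp at hℓ
  simp only [φ, CC.coe_toBody, e1, singleton_zero, add_zero, ConvexBody.coe_zero,
    image_zero, map_zero] at key
  rw [key]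
  refine h.null _ ℓ 0 (by rw [← singleton_zero]; exact CC.singleton 0) hℓ0 ?_
  intro y hy
  rw [Set.mem_zero.1 hy, map_zero]

/-- Except in dimension two, a simple valuation vanishing on prisms is zero. -/
theorem prism_null (n : ℕ) : ∀ {V : Type u} [NormedAddCommGroup V] [NormedSpace ℝ V]
    [FiniteDimensional ℝ V], Module.finrank ℝ V = n → (n = 1 ∨ 3 ≤ n) → ∀ {Φ : Set V → ℂ},
    SV Φ → PN Φ → ∀ A, CC A → Φ A = 0 := by
  induction n using Nat.strong_induction_on with
  | _ n ih =>
  intro V _ _ _ hn hcase Φ h hp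
  rcases hcase with rfl | h3
  · intro A hA
    rcases A.eq_empty_or_nonempty with rfl | hAn
    · exact h.empty
    obtain ⟨u, hu0, hu⟩ := finrank_eq_one_iff'.1 hn
    obtain ⟨x, -, r, hr⟩ := hA.eq_seg hAn (x₀ := 0) (u := u) fun x _ => by
      obtain ⟨t, ht⟩ := hu x
      exact ⟨t, by rw [ht, zero_add]⟩
    obtain ⟨ℓ, hℓ⟩ := Module.Projective.exists_dual_ne_zero ℝ hu0
    have hℓ0 : ℓ ≠ 0 := by rintro rfl; simp at hℓ
    rw [hr]
    exact hp {x} ℓ (ℓ x) _ (CC.singleton x) hℓ0 (by rintro y rfl; rfl)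
  · refine h.eq_zero_of_tri hp (by omega) fun a b v w K d hK => ?_
    let F : Submodule ℝ V := LinearMap.ker (a.prod b)
    have hF : Module.finrank ℝ F = n - 2 := by
      have hs : Function.Surjective (a.prod b) := fun p =>
        ⟨p.1 • v + p.2 • w, by simp [d.av, d.aw, d.bv, d.bw]⟩
      have := (a.prod b).finrank_range_add_finrank_ker
      rw [LinearMap.range_eq_top.2 hs, finrank_top, Module.finrank_prod, Module.finrank_self,
        hn] at this
      change 1 + 1 + Module.finrank ℝ F = n at this
      omega
    let π : V →ₗ[ℝ] F := (proj2 a b v w).codRestrict F fun x => by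
      simp [F, d.av, d.aw, d.bv, d.bw]
    have hπc : ∀ x, (π x : V) = x - a x • v - b x • w := fun _ => rfl
    have haF : ∀ x : F, a x = 0 ∧ b x = 0 := fun x => by
      have := x.2
      simpa [F] using this
    have hπ : ∀ x : F, π (F.subtype x) = x := fun x => by
      apply Subtype.ext
      rw [hπc]
      simp [(haF x).1, (haF x).2]
    have hπv : π v = 0 := Subtype.ext (by rw [hπc]; simp [d.av, d.bv])
    have hπw : π w = 0 := Subtype.ext (by rw [hπc]; simp [d.aw, d.bw])
    have hπT : ∀ q ∈ tri v w 1, π q = 0 := by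
      rintro _ ⟨s, t, -, -, -, rfl⟩
      simp [hπv, hπw]
    have hT : (tri v w 1).Nonempty := ⟨0, zero_mem_tri v w zero_le_one⟩
    have hψ := h.slice hπ (CC.tri v w 1) hT hπT
    have hψp := hp.slice hπ (CC.tri v w 1) hπT
    have hK' : proj2 a b v w '' K = F.subtype '' (π '' K) := by
      rw [← image_comp]; rfl
    rw [hK']
    by_cases h4 : n = 4
    · rcases K.eq_empty_or_nonempty with rfl | hKn
      · simp [h.empty]
      refine planar_zero (by omega) (θ := fun D => Φ (F.subtype '' D + tri v w 1))
        (fun A ℓ c hA hℓ => hψ.cut hA hℓ c) hψ.trans hψ.cont (fun v' w' => ?_)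
        ((hK.image π).toBody (hKn.image _))
      simp only [image_tri]
      by_cases hi : ∀ s t : ℝ, s • v' + t • w' = 0 → s = 0 ∧ t = 0
      · obtain ⟨a', b', d'⟩ := exists_dual2 hi
        refine h.tri_tri hp (by omega) (a := a' ∘ₗ π) (b := b' ∘ₗ π) (c := a) (d := b) ?_
        refine ⟨⟨?_, ?_, ?_, ?_⟩, d, ?_, ?_, ?_, ?_, (haF v').1, (haF w').1, (haF v').2,
          (haF w').2⟩
        all_goals simp only [LinearMap.comp_apply, hπ, hπv, hπw, map_zero]
        exacts [d'.av, d'.aw, d'.bv, d'.bw]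
      · rw [add_comm, h.tri_degenerate hp (CC.tri v w 1), h.tri_null (by omega)]
        intro h'
        refine hi fun s t hst => h' s t ?_
        have := congrArg F.subtype hst
        simpa using this
    · exact ih (n - 2) (by omega) hF (by omega) hψ hψp _ (hK.image π)

end PrismNull

section Homogeneous
variable {V : Type*} [NormedAddCommGroup V] [NormedSpace ℝ V] [FiniteDimensional ℝ V]

theorem neg_seg (v : V) : -(seg v 1) = {-v} + seg v 1 := by
  ext x
  rw [mem_singleton_add, Set.mem_neg]
  constructor
  · rintro ⟨s, h0, h1, hx⟩
    refine ⟨(1 - s) • v, ⟨1 - s, by linarith, by linarith, rfl⟩, ?_⟩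
    rw [← neg_neg x, hx]; module
  · rintro ⟨_, ⟨s, h0, h1, rfl⟩, rfl⟩
    exact ⟨1 - s, by linarith, by linarith, by module⟩

theorem SV.eq_zero_of_symm {Φ : Set V → ℂ} (h : SV Φ) (hodd : ∀ A, CC A → Φ (-A) = -Φ A)
    {A : Set V} (hA : CC A) {y : V} (hy : -A = {y} + A) : Φ A = 0 := by
  have := hodd A hA
  rw [hy, h.trans _ _ hA] at this
  linear_combination this / 2

/-- The defect of homogeneity `A ↦ Φ (t A) - c Φ A` is again a simple valuation. -/
theorem SV.defect {Φ : Set V → ℂ} (h : SV Φ) {t : ℝ} (ht : 0 < t) (c : ℂ) :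
    SV fun A => Φ (t • A) - c * Φ A where
  val A B hA hB hAB := by
    have h1 := h.val A B hA hB hAB
    have h2 := h.val (t • A) (t • B) (hA.smul t) (hB.smul t) (by
      rw [← smul_set_union]; exact hAB.smul t)
    rw [← smul_set_union, ← smul_set_inter₀ ht.ne'] at h2
    linear_combination h2 - c * h1
  trans A x hA := by
    have : t • ({x} + A) = {t • x} + t • A := by rw [smul_add, smul_set_singleton]
    simp only [this]
    rw [h.trans _ _ (hA.smul t), h.trans _ _ hA]
  null A ℓ d hA hℓ hd := by
    have h1 := h.null A ℓ d hA hℓ hd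
    have h2 := h.null (t • A) ℓ (t * d) (hA.smul t) hℓ (by
      rintro _ ⟨a, ha, rfl⟩
      simp [hd a ha])
    simp only [h1, h2, mul_zero, sub_zero]
  empty := by simp [h.empty]
  cont := by
    have h1 := h.cont.comp (continuous_image_add (t • (LinearMap.id : V →ₗ[ℝ] V))
      (CC.singleton (0 : V)) (singleton_nonempty 0))
    have h2 : Continuous fun K : ConvexBody V => Φ (t • (K : Set V)) := by
      convert h1 using 1
      ext K
      simp only [Function.comp_apply, CC.coe_toBody, singleton_zero, add_zero]
      rfl
    exact h2.sub (continuous_const.mul h.cont)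

theorem smul_seg {t : ℝ} (ht : 0 ≤ t) (v : V) : t • seg v 1 = seg (t • v) 1 := by
  rw [seg_one_smul v ht, seg_eq_smul v ht]

theorem PN.defect {Φ : Set V → ℂ} (hp : PN Φ) {t : ℝ} (ht : 0 < t) (c : ℂ) :
    PN fun A => Φ (t • A) - c * Φ A := by
  intro D ℓ d v hD hℓ hd
  have h1 := hp D ℓ d v hD hℓ hd
  have h2 := hp (t • D) ℓ (t * d) (t • v) (hD.smul t) hℓ (by
    rintro _ ⟨a, ha, rfl⟩
    simp [hd a ha])
  rw [← smul_seg ht.le, ← smul_add] at h2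
  simp only [h1, h2, mul_zero, sub_zero]

/-- In the plane, an odd simple valuation vanishes on parallelograms. -/
theorem PN.of_odd_two {Φ : Set V → ℂ} (h : SV Φ) (hodd : ∀ A, CC A → Φ (-A) = -Φ A)
    (h2 : Module.finrank ℝ V = 2) : PN Φ := by
  intro D ℓ c v hD hℓ hc
  rcases D.eq_empty_or_nonempty with rfl | ⟨x₀, hx₀⟩
  · simp [h.empty]
  have hk : Module.finrank ℝ (LinearMap.ker ℓ) = 1 := by
    have := ℓ.finrank_range_add_finrank_ker
    rw [LinearMap.range_eq_top.2 (LinearMap.surjective hℓ), finrank_top, Module.finrank_self,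
      h2] at this
    omega
  obtain ⟨u, -, hu⟩ := finrank_eq_one_iff'.1 hk
  obtain ⟨x, -, r, hr⟩ := hD.eq_seg ⟨x₀, hx₀⟩ (x₀ := x₀) (u := (u : V)) fun x hx => by
    obtain ⟨t, ht⟩ := hu ⟨x - x₀, by
      rw [LinearMap.mem_ker, map_sub, hc x hx, hc x₀ hx₀, sub_self]⟩
    refine ⟨t, ?_⟩
    have := congrArg Subtype.val ht
    simp only [Submodule.coe_smul] at this
    rw [this]; abel
  have hP : CC (seg (r • (u : V)) 1 + seg v 1) := (CC.seg _ 1).add (CC.seg _ 1)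
  rw [hr, add_assoc, h.trans _ _ hP]
  refine h.eq_zero_of_symm hodd hP (y := -(r • (u : V)) + -v) ?_
  rw [neg_add, neg_seg, neg_seg, add_add_add_comm, singleton_add_singleton]

/-- Homogeneity on prisms follows from homogeneity in the hyperplane of the base. -/
theorem PN.of_odd {Φ : Set V → ℂ} (h : SV Φ) (hodd : ∀ A, CC A → Φ (-A) = -Φ A) {n : ℕ}
    (hn : 2 ≤ n) {t : ℝ} (ht : 0 < t)
    (ih : ∀ ℓ : V →ₗ[ℝ] ℝ, ℓ ≠ 0 → ∀ ψ : Set (LinearMap.ker ℓ) → ℂ, SV ψ →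
      (∀ A, CC A → ψ (-A) = -ψ A) → ∀ A, CC A → ψ (t • A) = (t : ℂ) ^ (n - 2) * ψ A) :
    PN fun A => Φ (t • A) - (t : ℂ) ^ (n - 1) * Φ A := by
  have hΔ := h.defect ht ((t : ℂ) ^ (n - 1))
  intro D ℓ c v hD hℓ hc
  rcases D.eq_empty_or_nonempty with rfl | ⟨x₀, hx₀⟩
  · simp [h.empty]
  by_cases hv : ℓ v = 0
  · refine hΔ.null _ ℓ c (hD.add (CC.seg v 1)) hℓ ?_
    rintro _ ⟨x, hx, _, ⟨s, -, -, rfl⟩, rfl⟩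
    simp [hv, hc x hx]
  let F := LinearMap.ker ℓ
  let π : V →ₗ[ℝ] F := (LinearMap.id - ((ℓ v)⁻¹ • ℓ).smulRight v).codRestrict F fun x => by
    simp only [F, LinearMap.mem_ker, LinearMap.sub_apply, LinearMap.id_apply,
      LinearMap.smulRight_apply, LinearMap.smul_apply, smul_eq_mul, map_sub, map_smul]
    field_simp
    ring
  have hπ : ∀ x : F, π (F.subtype x) = x := fun x => by
    have hx : ℓ x = 0 := x.2
    ext
    simp [π, hx]
  have hπv : π v = 0 := by ext; simp [π, hv]
  have hπS : ∀ q ∈ seg v 1, π q = 0 := by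
    rintro _ ⟨s, -, -, rfl⟩
    simp [hπv]
  have hS : (seg v 1).Nonempty := ⟨0, zero_mem_seg v zero_le_one⟩
  have hψ := h.slice hπ (CC.seg v 1) hS hπS
  have hψo : ∀ A : Set F, CC A → Φ (F.subtype '' (-A) + seg v 1) =
      -Φ (F.subtype '' A + seg v 1) := fun A hA => by
    have hP := (hA.image F.subtype).add (CC.seg v 1)
    rw [← hodd _ hP, neg_add, neg_seg, image_neg_of_apply_neg_eq_neg (fun x _ => map_neg _ x)]
    exact (h.trans' (hA.image F.subtype).neg (CC.seg v 1) (-v)).symm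
  set D' : Set F := π '' ({-x₀} + D) with hD'
  have hD'c : CC D' := ((CC.singleton _).add hD).image π
  have hDD : D = {x₀} + F.subtype '' D' := by
    have hval : ∀ x ∈ D, ((π (-x₀ + x) : F) : V) = -x₀ + x := fun x hx => by
      simp [π, hc x hx, hc x₀ hx₀]
      abel
    ext x
    rw [mem_singleton_add]
    constructor
    · intro hx
      exact ⟨_, ⟨_, ⟨_, mem_singleton_add.2 ⟨x, hx, rfl⟩, rfl⟩, rfl⟩, by
        simp only [Submodule.subtype_apply]; rw [hval x hx]; abel⟩
    · rintro ⟨_, ⟨_, ⟨_, hy, rfl⟩, rfl⟩, rfl⟩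
      obtain ⟨z, hz, rfl⟩ := mem_singleton_add.1 hy
      simp only [Submodule.subtype_apply]
      rw [hval z hz]
      simpa using hz
  rw [hDD, add_assoc]
  have hP := (hD'c.image F.subtype).add (CC.seg v 1)
  refine (hΔ.trans _ x₀ hP).trans ?_
  have h1 := ih ℓ hℓ _ hψ hψo D' hD'c
  have hnull : Φ (F.subtype '' (t • D')) = 0 := by
    refine h.null _ ℓ 0 ((hD'c.smul t).image F.subtype) hℓ ?_
    rintro _ ⟨y, -, rfl⟩
    exact y.2
  have h2 := h.seg_linear ((hD'c.smul t).image F.subtype) v ht.le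
  rw [hnull, sub_zero, sub_zero, h1] at h2
  have e : t • (F.subtype '' D' + seg v 1) = F.subtype '' (t • D') + seg v t := by
    rw [smul_add, ← seg_eq_smul v ht.le, image_smul_set]
  obtain ⟨m, rfl⟩ : ∃ m, n = m + 2 := ⟨n - 2, by omega⟩
  simp only [e, h2]
  rw [show m + 2 - 1 = m + 1 by omega, show m + 2 - 2 = m by omega]
  ring

end Homogeneous

/-- Schneider's theorem for positive dilation factors. -/
theorem homogeneous (n : ℕ) : ∀ {V : Type u} [NormedAddCommGroup V] [NormedSpace ℝ V]
    [FiniteDimensional ℝ V], Module.finrank ℝ V = n + 1 → ∀ {Φ : Set V → ℂ},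
    SV Φ → (∀ A, CC A → Φ (-A) = -Φ A) → ∀ {t : ℝ}, 0 < t → ∀ A, CC A →
    Φ (t • A) = (t : ℂ) ^ n * Φ A := by
  induction n with
  | zero =>
    intro V _ _ _ hn Φ h hodd t ht
    have key : ∀ A, CC A → Φ A = 0 := fun A hA => by
      rcases A.eq_empty_or_nonempty with rfl | hAn
      · exact h.empty
      obtain ⟨u, -, hu⟩ := finrank_eq_one_iff'.1 hn
      obtain ⟨x, -, r, hr⟩ := hA.eq_seg hAn (x₀ := 0) (u := u) fun x _ => by
        obtain ⟨t, ht⟩ := hu x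
        exact ⟨t, by rw [ht, zero_add]⟩
      rw [hr, h.trans _ _ (CC.seg _ 1)]
      exact h.eq_zero_of_symm hodd (CC.seg _ 1) (neg_seg _)
    intro A hA
    rw [key A hA, key _ (hA.smul t), mul_zero]
  | succ n ih =>
    intro V _ _ _ hn Φ h hodd t ht A hA
    have hΔ := h.defect ht ((t : ℂ) ^ (n + 1))
    rw [← sub_eq_zero]
    rcases Nat.eq_zero_or_pos n with rfl | hn0
    · have hp := PN.of_odd_two h hodd hn
      have hpΔ := hp.defect ht ((t : ℂ) ^ (0 + 1))
      rcases A.eq_empty_or_nonempty with rfl | hAn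
      · simp [h.empty]
      obtain ⟨x, hx⟩ : ∃ x : V, x ≠ 0 := by
        have : Nontrivial V := Module.nontrivial_of_finrank_pos (R := ℝ) (by omega)
        exact exists_ne 0
      obtain ⟨ℓ, hℓ⟩ := Module.Projective.exists_dual_ne_zero ℝ hx
      have hℓ0 : ℓ ≠ 0 := by rintro rfl; simp at hℓ
      have hz : ∀ y ∈ ({0} : Set V), ℓ y = 0 := by rintro y rfl; exact map_zero ℓ
      refine planar_zero hn (θ := fun A => Φ (t • A) - (t : ℂ) ^ (0 + 1) * Φ A)
        (fun A ℓ c hA hℓ => hΔ.cut hA hℓ c) hΔ.trans hΔ.cont (fun v w => ?_) (hA.toBody hAn)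
      by_cases hi : ∀ s t : ℝ, s • v + t • w = 0 → s = 0 ∧ t = 0
      · obtain ⟨a, b, d⟩ := exists_dual2 hi
        have h1 := h.tri_linear hp (CC.singleton 0) d ht.le
        rw [h.null _ ℓ 0 (CC.singleton 0) hℓ0 hz, singleton_zero, zero_add, zero_add, sub_zero,
          sub_zero, tri_eq_smul _ _ ht.le] at h1
        simp only [h1]; ring
      · have h1 := hΔ.tri_degenerate hpΔ (CC.singleton 0) hi
        rw [singleton_zero, zero_add, ← singleton_zero,
          hΔ.null _ ℓ 0 (CC.singleton 0) hℓ0 hz] at h1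
        exact h1
    · refine prism_null (n + 1 + 1) hn (by omega) hΔ ?_ A hA
      refine PN.of_odd h hodd (n := n + 2) (by omega) ht fun ℓ hℓ ψ hψ hψo => ?_
      refine ih ?_ hψ hψo ht
      have := ℓ.finrank_range_add_finrank_ker
      rw [LinearMap.range_eq_top.2 (LinearMap.surjective hℓ), finrank_top, Module.finrank_self,
        hn] at this
      omega

end Schneider

/-! ### From convex bodies to set functions, and the conclusion -/

namespace Schneider
open Set Filter Topology

section Extension
variable {V : Type*} [NormedAddCommGroup V] [NormedSpace ℝ V]

open Classical in
/-- Extension of a function of convex bodies to all sets, by zero. -/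
noncomputable def extend (φ : ConvexBody V → ℂ) (A : Set V) : ℂ :=
  if h : CC A ∧ A.Nonempty then φ (h.1.toBody h.2) else 0

theorem extend_toBody (φ : ConvexBody V → ℂ) {A : Set V} (hA : CC A) (hne : A.Nonempty) :
    extend φ A = φ (hA.toBody hne) := dif_pos ⟨hA, hne⟩

theorem extend_body (φ : ConvexBody V → ℂ) (K : ConvexBody V) : extend φ (K : Set V) = φ K :=
  extend_toBody φ (CC.body K) K.nonempty

theorem extend_empty (φ : ConvexBody V → ℂ) : extend φ ∅ = 0 := dif_neg fun h => by simp at h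

variable [FiniteDimensional ℝ V]

theorem extend_sv {φ : ConvexBody V → ℂ} (hφ : MemVal φ)
    (hsimple : ∀ K : ConvexBody V,
      Module.finrank ℝ (affineSpan ℝ (K : Set V)).direction < Module.finrank ℝ V → φ K = 0) :
    SV (extend φ) where
  val A B hA hB hAB := by
    rcases A.eq_empty_or_nonempty with rfl | hAn
    · simp [add_comm]
    rcases B.eq_empty_or_nonempty with rfl | hBn
    · simp
    -- a convex, hence connected, union of two closed nonempty sets forces them to meet
    obtain ⟨x, -, hx⟩ := isPreconnected_closed_iff.1 hAB.isPreconnected A B hA.compact.isClosed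
      hB.compact.isClosed subset_rfl
      (hAn.mono fun x hx => ⟨Or.inl hx, hx⟩) (hBn.mono fun x hx => ⟨Or.inr hx, hx⟩)
    have hI : CC (A ∩ B) := ⟨hA.compact.inter hB.compact, hA.convex.inter hB.convex⟩
    have hU : CC (A ∪ B) := ⟨hA.compact.union hB.compact, hAB⟩
    rw [extend_toBody φ hA hAn, extend_toBody φ hB hBn, extend_toBody φ hI ⟨x, hx⟩,
      extend_toBody φ hU (hAn.mono subset_union_left),
      hφ.1 (hA.toBody hAn) (hB.toBody hBn) (hU.toBody _) (hI.toBody ⟨x, hx⟩) rfl rfl]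
    ring
  trans A x hA := by
    rcases A.eq_empty_or_nonempty with rfl | hAn
    · simp
    rw [extend_toBody φ hA hAn, ← hφ.2.1 (hA.toBody hAn) x, ← extend_body φ (_ + _),
      ConvexBody.coe_add, add_comm]
    rfl
  null A ℓ c hA hℓ hc := by
    rcases A.eq_empty_or_nonempty with rfl | hAn
    · exact extend_empty φ
    rw [extend_toBody φ hA hAn]
    refine hsimple _ ?_
    have hle : (affineSpan ℝ A).direction ≤ LinearMap.ker ℓ := by
      rw [direction_affineSpan, vectorSpan_def, Submodule.span_le]
      rintro _ ⟨x, hx, y, hy, rfl⟩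
      simp [hc x hx, hc y hy]
    refine (Submodule.finrank_mono hle).trans_lt (Submodule.finrank_lt fun h => hℓ ?_)
    exact LinearMap.ker_eq_top.1 h
  empty := extend_empty φ
  cont := by simpa only [extend_body] using hφ.2.2

theorem extend_odd {φ : ConvexBody V → ℂ}
    (hodd : ∀ K : ConvexBody V, φ (ConvexBody.negBody K) = -φ K) (A : Set V) (hA : CC A) :
    extend φ (-A) = -extend φ A := by
  rcases A.eq_empty_or_nonempty with rfl | hAn
  · simp [extend_empty]
  rw [extend_toBody φ hA hAn, ← hodd, ← extend_body φ (ConvexBody.negBody _)]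
  rfl

end Extension
end Schneider

/-- **Schneider's theorem.** Every odd simple translation invariant continuous valuation on a
finite-dimensional real vector space `V` is homogeneous of degree `n - 1`, `n = dim V`. -/
theorem schneider_simple_odd {V : Type*} [NormedAddCommGroup V] [NormedSpace ℝ V]
    [FiniteDimensional ℝ V]
    (φ : ConvexBody V → ℂ) (hφ : MemVal φ)
    (hodd : ∀ K : ConvexBody V, φ (ConvexBody.negBody K) = -φ K)
    (hsimple : ∀ K : ConvexBody V,
      Module.finrank ℝ (affineSpan ℝ (K : Set V)).direction < Module.finrank ℝ V → φ K = 0) :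
    IsHomogeneousVal φ (Module.finrank ℝ V - 1) := by
  intro c K
  rcases Nat.eq_zero_or_pos (Module.finrank ℝ V) with h0 | hpos
  · -- in dimension zero all bodies are symmetric, so `φ` vanishes
    have hsub : Subsingleton V := Module.finrank_zero_iff.1 h0
    have hz : ∀ L : ConvexBody V, φ L = 0 := fun L => by
      have h1 := hodd L
      have h2 : ConvexBody.negBody L = L := by
        apply SetLike.coe_injective
        have hu : ∀ M : ConvexBody V, (M : Set V) = Set.univ := fun M =>
          Set.eq_univ_of_forall fun x => by
            obtain ⟨y, hy⟩ := M.nonempty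
            rwa [Subsingleton.elim x y]
        rw [hu, hu]
      rw [h2] at h1
      linear_combination h1 / 2
    rw [hz, hz, mul_zero]
  obtain ⟨n, hn⟩ : ∃ n, Module.finrank ℝ V = n + 1 := ⟨_, (Nat.sub_add_cancel hpos).symm⟩
  have hΦ := Schneider.extend_sv hφ hsimple
  have hK := Schneider.CC.body K
  have h1 : ∀ r : ℝ, 0 < r →
      Schneider.extend φ (r • (K : Set V)) = (r : ℂ) ^ n * Schneider.extend φ (K : Set V) :=
    fun r hr => Schneider.homogeneous n hn hΦ (Schneider.extend_odd hodd) hr _ hK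
  -- the factor `0` is reached by continuity
  have h2 : Continuous fun r : ℝ => Schneider.extend φ (r • (K : Set V)) := by
    simpa using hΦ.continuous_smul (Schneider.CC.singleton (0 : V)) hK
      (Set.singleton_nonempty 0) K.nonempty
  have h3 : Continuous fun r : ℝ => (r : ℂ) ^ n * Schneider.extend φ (K : Set V) := by fun_prop
  have h4 : Set.EqOn (fun r : ℝ => Schneider.extend φ (r • (K : Set V)))
      (fun r : ℝ => (r : ℂ) ^ n * Schneider.extend φ (K : Set V)) (closure (Set.Ioi 0)) :=
    Set.EqOn.closure (fun r hr => h1 r hr) h2 h3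
  rw [closure_Ioi] at h4
  have h5 := h4 (show (c : ℝ) ∈ Set.Ici 0 from c.2)
  simp only [Schneider.extend_body] at h5
  rw [hn, Nat.add_sub_cancel, ← h5, ← Schneider.extend_body φ (c • K)]
  rfl
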